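/- Let n ≥ 2 and k ≥ max(n, 3). Then for the unit polydisk P(1,…,1) ⊂ ℂⁿ, c_kᵐⁱⁿ(P(1,…,1)) < c_kᵐᵃˣ(P(1,…,1)). In particular, c_kᵐⁱⁿ(P(1,…,1)) < k ≤ c_kᵐᵃˣ(P(1,…,1)). -/

import Mathlib

/-!
Both inequalities with `k` are proved, for the unit polydisk `P`.

**`ckmin < k`.** Symplectic maps preserve volume, so `E(a) ↪ P` forces `∏ aᵢ ≤ n!`
(`prod_le_factorial_of_sympEmb`). If `s < N_k(a)`, then `∑ ⌊s / aᵢ⌋ ≤ k - 1`, hence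
`sⁿ ≤ ∏ (⌊s / aᵢ⌋ + 1) aᵢ ≤ n! ∏ mᵢ` with `mᵢ = ⌊s / aᵢ⌋ + 1` and `∑ mᵢ ≤ k + n - 1`. By AM–GM the
integer `n! ∏ mᵢ` is smaller than `kⁿ` (`factorial_mul_prod_lt`), so `N_k(a) ≤ (kⁿ - 1)^(1/n)`, a bound
independent of `a`.

**`k ≤ ckmax`** (`no_embedding`). This is an equivariant minimax argument for the symplectic action,
carried out on trigonometric loops with modes `|m| ≤ N`, so that only finite-dimensional topology
is needed. Suppose that `φ` embeds `P` into `E(a)`, with at least `k` multiples `m aᵢ ≤ N' < k`.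

* For the rescalings `φ_t` of `φ`, which connect `φ` (`t = 1`) to an affine symplectic map (`t = 0`),
  consider the Hamiltonian `H_t = M + K ∘ φ_t⁻¹ + T (√q - ρ)₊²`, where `q` is the quadratic form of
  the ellipsoid and `K ≤ 0` is a toric bump equal to `-M` on a polydisk slightly smaller than `P`. The
  actions of its closed orbits are negligible or belong to a compact null set which does not depend
  on `t` (`spectrum_null`). Hence there is an interval `[v, v']` slightly below `k` and above `N'` free
  of actions for all `t`. A Palais–Smale argument, uniform in `N`, turns this into a lower bound of the
  gradient on the slab `v ≤ action ≤ v'`, and the discrete gradient flow, which is equivariant under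
  time shifts, crosses the slab.
* Call a continuous equivariant map into `ℂ^κ` without zeros on the superlevel set of `v` a detector
  (`Detects`). Small changes of `t` can be absorbed by the flow across the gap, so a detector for
  `t = 1` yields one for `t = 0` (`Detects.transport`, `detects_chain`).
* At `t = 1` one has `H ≥ N' (q - 1)`, so the modes with `m aᵢ > N'` form a detector; there are at most
  `nN - k` of them (`detects_of_ge`, `card_bigMode_le`).
* At `t = 0`, in affine symplectic coordinates, `H ≤ ∑ R (√π |yᵢ| - √π r₀)₊²` with `π r₀²` close to `1`.
  For this split Hamiltonian `exists_lusternik` gives an equivariant family of loops over a sphere of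
  `ℂ^(nN)` whose action is at least `v` on the zeros of `k - 1` equivariant equations.
* Together these are `nN - 1` equivariant equations without common zero on a sphere of `ℂ^(nN)`, in
  contradiction to a weighted Borsuk–Ulam theorem (`borsuk_ulam`). The latter is proved with integrals
  of Jacobians in place of degree theory.
-/

open Set MeasureTheory
open scoped Real ENNReal Pointwise

noncomputable section

/-- The standard symplectic form `ω = Σᵢ dxᵢ ∧ dyᵢ` on `ℂⁿ ≅ ℝ²ⁿ`. -/
def stdSymp (n : ℕ) (v w : Fin n → ℂ) : ℝ :=
  ∑ i, ((starRingEnd ℂ) (v i) * w i).im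

/-- `X` symplectically embeds into `X'` (both subsets of `ℂⁿ`): there is an injective map
`φ : X → ℂⁿ` with image in `X'`, smooth on the interior of `X`, whose derivative preserves
the standard symplectic form at every interior point. -/
def SympEmb (n : ℕ) (X X' : Set (Fin n → ℂ)) : Prop :=
  ∃ φ : (Fin n → ℂ) → (Fin n → ℂ),
    Set.InjOn φ X ∧ φ '' X ⊆ X' ∧ ContDiffOn ℝ (⊤ : ℕ∞) φ (interior X) ∧
    ∀ x ∈ interior X, ∀ v w : Fin n → ℂ,
      stdSymp n (fderiv ℝ φ x v) (fderiv ℝ φ x w) = stdSymp n v w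

/-- The ellipsoid `E(a₁,…,aₙ) ⊂ ℂⁿ`. -/
def ellipsoid {n : ℕ} (a : Fin n → ℝ) : Set (Fin n → ℂ) :=
  {z | ∑ i, Real.pi * ‖z i‖ ^ 2 / a i ≤ 1}

/-- The polydisk `P(a₁,…,aₙ) ⊂ ℂⁿ`. -/
def polydisk {n : ℕ} (a : Fin n → ℝ) : Set (Fin n → ℂ) :=
  {z | ∀ i, Real.pi * ‖z i‖ ^ 2 ≤ a i}

/-- `Nk k a` is the `k`-th smallest element (with multiplicity) of the multiset
`{m · aᵢ : m ∈ ℤ_{>0}, 1 ≤ i ≤ n}`. -/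
def Nk {n : ℕ} (k : ℕ) (a : Fin n → ℝ) : ℝ :=
  sInf {t : ℝ | k ≤ {p : Fin n × ℕ | ((p.2 : ℝ) + 1) * a p.1 ≤ t}.ncard}

/-- `c_k^max(X)`: the infimum of `N_k(a)` over ellipsoids `E(a)` into which `X`
symplectically embeds. -/
def ckmax (n k : ℕ) (X : Set (Fin n → ℂ)) : ℝ :=
  sInf {c : ℝ | ∃ a : Fin n → ℝ, (∀ i, 0 < a i) ∧ SympEmb n X (ellipsoid a) ∧ c = Nk k a}

/-- `c_k^min(X)`: the supremum of `N_k(a)` over ellipsoids `E(a)` symplectically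
embedding into `X`. -/
def ckmin (n k : ℕ) (X : Set (Fin n → ℂ)) : ℝ :=
  sSup {c : ℝ | ∃ a : Fin n → ℝ, (∀ i, 0 < a i) ∧ SympEmb n (ellipsoid a) X ∧ c = Nk k a}

/-- The moment map `μ(z₁,…,zₙ) = (π|z₁|²,…,π|zₙ|²)`. -/
def momentMap (n : ℕ) (z : Fin n → ℂ) : Fin n → ℝ := fun i => Real.pi * ‖z i‖ ^ 2

/-- The toric domain `X_Ω = μ⁻¹(Ω)`. -/
def toricDomain {n : ℕ} (Ω : Set (Fin n → ℝ)) : Set (Fin n → ℂ) :=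
  momentMap n ⁻¹' Ω

/-- `X_Ω` is a convex toric domain: `Ω ⊆ [0,∞)ⁿ`, the symmetrization
`Ω̂ = {x : (|x₁|,…,|xₙ|) ∈ Ω}` is compact and convex, and `Ω` is the closure of a
nonempty relatively open subset of `[0,∞)ⁿ`. -/
def IsConvexToricDomain {n : ℕ} (Ω : Set (Fin n → ℝ)) : Prop :=
  Ω ⊆ {x | ∀ i, 0 ≤ x i} ∧
  IsCompact {x : Fin n → ℝ | (fun i => |x i|) ∈ Ω} ∧
  Convex ℝ {x : Fin n → ℝ | (fun i => |x i|) ∈ Ω} ∧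
  ∃ V : Set (Fin n → ℝ), IsOpen V ∧ (V ∩ {x | ∀ i, 0 ≤ x i}).Nonempty ∧
    Ω = closure (V ∩ {x | ∀ i, 0 ≤ x i})

/-- The quadrilateral `Q_ε` with vertices `(0,0)`, `(1,0)`, `(ε,ε)`, `(0,1)`, i.e. the union
of the triangles `conv{(0,0),(1,0),(ε,ε)}` and `conv{(0,0),(ε,ε),(0,1)}`. -/
def Qeps (ε : ℝ) : Set (Fin 2 → ℝ) :=
  convexHull ℝ {![0, 0], ![1, 0], ![ε, ε]} ∪ convexHull ℝ {![0, 0], ![ε, ε], ![0, 1]}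

/-! ### Volume of symplectic images -/

theorem stdSymp_I_mul {n : ℕ} (v : Fin n → ℂ) :
    stdSymp n v (fun i => Complex.I * v i) = ∑ i, ‖v i‖ ^ 2 := by
  simp only [stdSymp, Complex.sq_norm, Complex.normSq_apply]
  refine Finset.sum_congr rfl fun i _ => ?_
  simp

/-- The standard symplectic form as a bilinear form. -/
def sympForm (n : ℕ) : LinearMap.BilinForm ℝ (Fin n → ℂ) :=
  LinearMap.mk₂ ℝ (stdSymp n)
    (fun v v' w => by simp [stdSymp, ← Finset.sum_add_distrib]; exact Finset.sum_congr rfl fun _ _ => by ring)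
    (fun c v w => by simp [stdSymp, Finset.mul_sum]; exact Finset.sum_congr rfl fun _ _ => by ring)
    (fun v w w' => by simp [stdSymp, ← Finset.sum_add_distrib]; exact Finset.sum_congr rfl fun _ _ => by ring)
    (fun c v w => by simp [stdSymp, Finset.mul_sum]; exact Finset.sum_congr rfl fun _ _ => by ring)

theorem sympForm_apply {n : ℕ} (v w : Fin n → ℂ) : sympForm n v w = stdSymp n v w := rfl

theorem eq_zero_of_stdSymp {n : ℕ} (v : Fin n → ℂ) (h : ∀ w, stdSymp n v w = 0) : v = 0 := by
  have h1 := h fun i => Complex.I * v i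
  rw [stdSymp_I_mul, Finset.sum_eq_zero_iff_of_nonneg fun i _ => by positivity] at h1
  ext i
  simpa using h1 i (Finset.mem_univ i)

/-- A linear map preserving the nondegenerate form `ω` has determinant `±1`: if `J` is the matrix of
`ω`, then `Mᵀ J M = J` gives `(det M)² = 1`. -/
theorem abs_det_of_symp {n : ℕ} (M : (Fin n → ℂ) →ₗ[ℝ] (Fin n → ℂ))
    (h : ∀ v w, stdSymp n (M v) (M w) = stdSymp n v w) : |LinearMap.det M| = 1 := by
  classical
  let b := Module.finBasis ℝ (Fin n → ℂ)
  have h1 : (sympForm n).comp M M = sympForm n := by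
    refine LinearMap.ext fun v => LinearMap.ext fun w => h v w
  have hd : (LinearMap.BilinForm.toMatrix b (sympForm n)).det ≠ 0 := by
    refine (LinearMap.BilinForm.nondegenerate_iff_det_ne_zero b).1 (.ofSeparatingLeft ?_)
    exact fun v hv => eq_zero_of_stdSymp v hv
  have h2 := congrArg Matrix.det (congrArg (LinearMap.BilinForm.toMatrix b) h1)
  rw [LinearMap.BilinForm.toMatrix_comp b, Matrix.det_mul, Matrix.det_mul, Matrix.det_transpose, LinearMap.det_toMatrix] at h2
  have h3 : (LinearMap.det M) ^ 2 = 1 := by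
    apply mul_right_cancel₀ hd
    linarith
  rw [← sq_abs] at h3
  nlinarith [abs_nonneg (LinearMap.det M)]

open ENNReal in
theorem volume_ellipsoid_interior {n : ℕ} (a : Fin n → ℝ) (ha : ∀ i, 0 < a i) :
    volume {z : Fin n → ℂ | ∑ i, π * ‖z i‖ ^ 2 / a i < 1}
      = ENNReal.ofReal ((∏ i, a i) / (n.factorial : ℝ)) := by
  have hs : ∀ i, 0 < Real.sqrt (π / a i) := fun i => Real.sqrt_pos.2 (div_pos Real.pi_pos (ha i))
  let D : (Fin n → ℂ) →ₗ[ℝ] (Fin n → ℂ) := LinearMap.pi fun i =>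
    (Real.sqrt (π / a i) • LinearMap.id) ∘ₗ LinearMap.proj i
  have hD : ∀ z i, D z i = Real.sqrt (π / a i) • z i := fun z i => rfl
  have hdet : LinearMap.det D = ∏ i, (π / a i) := by
    rw [LinearMap.det_pi]
    refine Finset.prod_congr rfl fun i _ => ?_
    rw [LinearMap.det_smul, LinearMap.det_id, Complex.finrank_real_complex, mul_one,
      Real.sq_sqrt (div_pos Real.pi_pos (ha i)).le]
  have hpos : 0 < ∏ i, (π / a i) := Finset.prod_pos fun i _ => div_pos Real.pi_pos (ha i)
  have hset : {z : Fin n → ℂ | ∑ i, π * ‖z i‖ ^ 2 / a i < 1}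
      = D ⁻¹' {x : Fin n → ℂ | ∑ i, ‖x i‖ ^ (2:ℝ) < 1} := by
    ext z
    simp only [mem_ofPred_eq, mem_preimage, hD, norm_smul, Real.rpow_two, mul_pow, Real.norm_eq_abs, sq_abs,
      Real.sq_sqrt (div_pos Real.pi_pos (ha _)).le]
    rw [Finset.sum_congr rfl fun i _ => mul_div_right_comm π (‖z i‖ ^ 2) (a i)]
  have hv : volume {x : Fin n → ℂ | ∑ i, ‖x i‖ ^ (2:ℝ) < 1} = _ :=
    Complex.volume_sum_rpow_lt_one (Fin n) (p := 2) (by norm_num)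
  rw [hset, Measure.addHaar_preimage_linearMap _ (by rw [hdet]; exact hpos.ne'), hdet, hv, ← ENNReal.ofReal_mul (abs_nonneg _)]
  congr 1
  have hG : Real.Gamma (2 / 2 + 1) = 1 := by
    have := Real.Gamma_nat_eq_factorial 1
    norm_num at this ⊢
  have hG2 : Real.Gamma (2 * (Fintype.card (Fin n) : ℝ) / 2 + 1) = n.factorial := by
    rw [← Real.Gamma_nat_eq_factorial n]
    congr 2
    simp
  rw [hG, hG2, abs_of_pos (inv_pos.2 hpos), Finset.prod_div_distrib]
  simp
  field_simp

theorem volume_polydisk_one (n : ℕ) : volume (polydisk fun _ : Fin n => (1:ℝ)) = 1 := by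
  have : (polydisk fun _ : Fin n => (1:ℝ)) =
      Set.univ.pi fun _ : Fin n => Metric.closedBall (0:ℂ) (Real.sqrt (1 / π)) := by
    ext z
    simp only [polydisk, mem_ofPred_eq, mem_pi, mem_univ, true_imp_iff, mem_closedBall_zero_iff]
    refine forall_congr' fun i => ?_
    rw [Real.le_sqrt (norm_nonneg _) (by positivity), le_div_iff₀' Real.pi_pos]
  rw [this, volume_pi_pi]
  simp only [Complex.volume_closedBall, Finset.prod_const]
  rw [← ENNReal.ofReal_pow (Real.sqrt_nonneg _), Real.sq_sqrt (by positivity)]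
  have : ENNReal.ofReal (1 / π) * (NNReal.pi : ℝ≥0∞) = 1 := by
    rw [← ENNReal.ofReal_coe_nnreal, NNReal.coe_real_pi, ← ENNReal.ofReal_mul (by positivity)]
    simp
  rw [this]; simp

/-- Comparison of volumes: `E(a)` has volume `∏ aᵢ / n!`, the unit polydisk has volume `1`, and
symplectic embeddings preserve volume. -/
theorem prod_le_factorial_of_sympEmb {n : ℕ} (a : Fin n → ℝ) (ha : ∀ i, 0 < a i)
    (h : SympEmb n (ellipsoid a) (polydisk fun _ => (1:ℝ))) : ∏ i, a i ≤ n.factorial := by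
  obtain ⟨φ, hinj, him, hsm, hω⟩ := h
  set U := {z : Fin n → ℂ | ∑ i, π * ‖z i‖ ^ 2 / a i < 1} with hU
  have hUo : IsOpen U := isOpen_lt (by fun_prop) continuous_const
  have hUE : U ⊆ ellipsoid a := fun z hz => le_of_lt (show _ < (1:ℝ) from hz)
  have hUi : U ⊆ interior (ellipsoid a) := interior_maximal hUE hUo
  have hd : ∀ x ∈ U, HasFDerivWithinAt φ (fderiv ℝ φ x) U x := fun x hx =>
    ((hsm.contDiffAt (isOpen_interior.mem_nhds (hUi hx))).differentiableAt (by simp)).hasFDerivAt.hasFDerivWithinAt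
  have h1 := lintegral_abs_det_fderiv_eq_addHaar_image volume hUo.measurableSet hd (hinj.mono hUE)
  have h2 : ∫⁻ x in U, ENNReal.ofReal |(fderiv ℝ φ x).det| = volume U := by
    rw [setLIntegral_congr_fun (g := fun _ => 1) hUo.measurableSet fun x hx => ?_]
    · simp
    · have := abs_det_of_symp _ (hω x (hUi hx))
      change ENNReal.ofReal |LinearMap.det _| = 1
      rw [this]; simp
  rw [h2, volume_ellipsoid_interior a ha] at h1
  have h3 : volume (φ '' U) ≤ 1 := by
    rw [← volume_polydisk_one n]
    exact measure_mono ((image_mono hUE).trans him)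
  rw [← h1, ← ENNReal.ofReal_one, ENNReal.ofReal_le_ofReal_iff zero_le_one, div_le_one (by positivity)] at h3
  exact h3

/-! ### The upper bound for the minimal capacity -/

theorem two_pow_mul_factorial_lt (n : ℕ) (hn : 6 ≤ n) : n.factorial * 2 ^ n < n ^ n := by
  induction n, hn using Nat.le_induction with
  | base => decide
  | succ n hn ih =>
    have h2 : 2 * n ^ n ≤ (n + 1) ^ n := by
      have hb : (1:ℝ) + n * (1 / n) ≤ (1 + 1 / n) ^ n :=
        one_add_mul_le_pow (by have : (0:ℝ) ≤ 1 / n := by positivity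
                               linarith) n
      have hn0 : (0:ℝ) < n := by positivity
      have h3 : (2 * (n:ℝ) ^ n) ≤ ((n:ℝ) + 1) ^ n := by
        have : ((n:ℝ) + 1) = n * (1 + 1 / n) := by field_simp
        rw [this, mul_pow, mul_comm]
        refine mul_le_mul_of_nonneg_left ?_ (by positivity)
        rw [mul_one_div_cancel hn0.ne'] at hb
        linarith
      exact_mod_cast h3
    calc (n + 1).factorial * 2 ^ (n + 1) = 2 * (n + 1) * (n.factorial * 2 ^ n) := by
          rw [Nat.factorial_succ, pow_succ]; ring
      _ < 2 * (n + 1) * n ^ n := by gcongr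
      _ = (n + 1) * (2 * n ^ n) := by ring
      _ ≤ (n + 1) * (n + 1) ^ n := by gcongr
      _ = (n + 1) ^ (n + 1) := by ring

/-- The numerical inequality which remains after the use of AM–GM. It fails for `n = k = 3`. -/
theorem factorial_mul_pow_lt (n k : ℕ) (hn : 2 ≤ n) (hk : max n 3 ≤ k) (h33 : ¬ (n = 3 ∧ k = 3)) :
    n.factorial * (k + n - 1) ^ n < k ^ n * n ^ n := by
  have hkn : n ≤ k := le_trans (le_max_left _ _) hk
  have hk3 : 3 ≤ k := le_trans (le_max_right _ _) hk
  obtain ⟨d, hd⟩ : ∃ d, k + n - 1 = d := ⟨_, rfl⟩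
  rw [hd]
  -- if `d * b ≤ c * k` and `n! * c ^ n < (b * n) ^ n` the claim follows
  have key : ∀ b c : ℕ, d * b ≤ c * k → n.factorial * c ^ n < (b * n) ^ n →
      n.factorial * d ^ n < k ^ n * n ^ n := by
    intro b c h1 h2
    have hb : 0 < b ^ n := by
      rcases Nat.eq_zero_or_pos b with rfl | hb
      · simp [show n ≠ 0 by omega] at h2
      · positivity
    refine lt_of_mul_lt_mul_right (a := b ^ n) ?_ (Nat.zero_le _)
    have hkp : 0 < k ^ n := by positivity
    calc n.factorial * d ^ n * b ^ n = n.factorial * (d * b) ^ n := by rw [mul_pow]; ring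
      _ ≤ n.factorial * (c * k) ^ n := by gcongr
      _ = n.factorial * c ^ n * k ^ n := by rw [mul_pow]; ring
      _ < (b * n) ^ n * k ^ n := by gcongr
      _ = k ^ n * n ^ n * b ^ n := by rw [mul_pow]; ring
  have hgen : d * n ≤ (2 * n - 1) * k := by
    subst hd
    obtain ⟨m, rfl⟩ : ∃ m, n = m + 1 := ⟨n - 1, by omega⟩
    obtain ⟨j, rfl⟩ : ∃ j, k = m + 1 + j := ⟨k - (m + 1), by omega⟩
    have e1 : m + 1 + j + (m + 1) - 1 = 2 * m + 1 + j := by omega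
    have e2 : 2 * (m + 1) - 1 = 2 * m + 1 := by omega
    rw [e1, e2]
    nlinarith [Nat.zero_le (m * j)]
  rcases le_or_gt 6 n with h6 | h6
  · refine key n (2 * n) (hgen.trans (Nat.mul_le_mul_right _ (by omega))) ?_
    have := two_pow_mul_factorial_lt n h6
    have hn0 : 0 < n ^ n := by positivity
    calc n.factorial * (2 * n) ^ n = n.factorial * 2 ^ n * n ^ n := by rw [mul_pow]; ring
      _ < n ^ n * n ^ n := by gcongr
      _ = (n * n) ^ n := by rw [mul_pow]
  · interval_cases n
    · exact key 3 4 (by omega) (by decide)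
    · exact key 4 6 (by omega) (by decide)
    · exact key 4 7 hgen (by decide)
    · exact key 5 9 hgen (by decide)

/-- By AM–GM the product of the `mᵢ` is at most `((k + n - 1) / n) ^ n`, which suffices unless
`n = k = 3`; in that case integrality of the `mᵢ` is used. -/
theorem factorial_mul_prod_lt (n k : ℕ) (hn : 2 ≤ n) (hk : max n 3 ≤ k) (m : Fin n → ℕ)
    (hm : ∀ i, 1 ≤ m i) (hs : ∑ i, m i ≤ k + n - 1) : n.factorial * ∏ i, m i < k ^ n := by
  by_cases h33 : n = 3 ∧ k = 3
  · obtain ⟨rfl, rfl⟩ := h33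
    rw [Fin.sum_univ_three] at hs
    rw [Fin.prod_univ_three]
    have h0 := hm 0
    have h1 := hm 1
    have h2 := hm 2
    generalize m 0 = x at *
    generalize m 1 = y at *
    generalize m 2 = z at *
    have : x ≤ 3 := by omega
    have : y ≤ 3 := by omega
    interval_cases x <;> interval_cases y <;> simp [Nat.factorial] <;> omega
  · have h1 := factorial_mul_pow_lt n k hn hk h33
    have hn0 : (0:ℝ) < n := by positivity
    have am : (∏ i, m i) * n ^ n ≤ (k + n - 1) ^ n := by
      have h := Real.geom_mean_le_arith_mean Finset.univ (fun _ : Fin n => (1:ℝ)) (fun i => (m i : ℝ))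
        (fun _ _ => zero_le_one) (by simpa using hn0) (fun i _ => Nat.cast_nonneg _)
      simp only [Real.rpow_one, Finset.sum_const, Finset.card_univ, Fintype.card_fin, nsmul_eq_mul, mul_one, one_mul] at h
      have hp : (0:ℝ) ≤ ∏ i, (m i : ℝ) := Finset.prod_nonneg fun i _ => Nat.cast_nonneg _
      have h2 := pow_le_pow_left₀ (by positivity) h n
      rw [Real.rpow_inv_natCast_pow hp (by omega), div_pow, le_div_iff₀ (by positivity)] at h2
      have h3 : (∏ i, m i) * n ^ n ≤ (∑ i, m i) ^ n := by exact_mod_cast h2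
      exact h3.trans (by gcongr)
    refine lt_of_mul_lt_mul_right (a := n ^ n) ?_ (Nat.zero_le _)
    calc n.factorial * (∏ i, m i) * n ^ n = n.factorial * ((∏ i, m i) * n ^ n) := by ring
      _ ≤ n.factorial * (k + n - 1) ^ n := by gcongr
      _ < _ := h1

theorem finite_act_multiples {n : ℕ} (a : Fin n → ℝ) (ha : ∀ i, 0 < a i) (t : ℝ) :
    {p : Fin n × ℕ | ((p.2 : ℝ) + 1) * a p.1 ≤ t}.Finite := by
  refine Set.Finite.subset (Set.finite_iUnion fun i : Fin n =>
    ((Set.finite_le_nat ⌊t / a i⌋₊).image fun m => (i, m))) fun p hp => ?_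
  simp only [mem_iUnion, mem_image]
  refine ⟨p.1, p.2, ?_, rfl⟩
  have hp' : ((p.2 : ℝ) + 1) * a p.1 ≤ t := hp
  refine Nat.le_floor ?_
  rw [le_div_iff₀ (ha _)]
  nlinarith [ha p.1]

theorem ncard_multiples_eq {n : ℕ} (a : Fin n → ℝ) (ha : ∀ i, 0 < a i) (t : ℝ) (ht : 0 ≤ t) :
    {p : Fin n × ℕ | ((p.2 : ℝ) + 1) * a p.1 ≤ t}.ncard = ∑ i, ⌊t / a i⌋₊ := by
  have : {p : Fin n × ℕ | ((p.2 : ℝ) + 1) * a p.1 ≤ t} =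
      ↑(((Finset.univ : Finset (Fin n)).sigma fun i => Finset.range ⌊t / a i⌋₊).map
        (Equiv.sigmaEquivProd (Fin n) ℕ).toEmbedding) := by
    ext ⟨i, m⟩
    have : ((m : ℝ) + 1) * a i ≤ t ↔ m < ⌊t / a i⌋₊ := by
      rw [← Nat.succ_le_iff, Nat.le_floor_iff (by have := ha i; positivity), le_div_iff₀ (ha i)]
      simp
    simp [this, Equiv.sigmaEquivProd]
  rw [this, Set.ncard_coe_finset, Finset.card_map, Finset.card_sigma]
  simp

/-- A volume constraint bounds `Nk` by a constant strictly below `k`. If `s < Nk k a`, the numbers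
`mᵢ = ⌊s / aᵢ⌋ + 1` have sum at most `k + n - 1`, and `s < mᵢ aᵢ` for all `i`, so
`s ^ n ≤ n! ∏ mᵢ < k ^ n`; the product on the right being an integer, `s ^ n ≤ k ^ n - 1`. -/
theorem Nk_pow_lt {n k : ℕ} (hn : 2 ≤ n) (hk : max n 3 ≤ k) (a : Fin n → ℝ) (ha : ∀ i, 0 < a i)
    (hprod : ∏ i, a i ≤ n.factorial) : Nk k a ≤ ((k:ℝ) ^ n - 1) ^ ((n:ℝ)⁻¹) := by
  have hk3 : 3 ≤ k := le_trans (le_max_right _ _) hk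
  have hk1 : (0:ℝ) ≤ (k:ℝ) ^ n - 1 := by
    have : (1:ℝ) ≤ (k:ℝ) ^ n := one_le_pow₀ (by exact_mod_cast (by omega : 1 ≤ k))
    linarith
  refine le_of_forall_lt fun t ht => ?_
  obtain ⟨s, hts, hs⟩ := exists_between ht
  refine lt_of_lt_of_le hts ?_
  rcases le_or_gt s 0 with hs0 | hs0
  · exact hs0.trans (by positivity)
  have hns : s ∉ {t : ℝ | k ≤ {p : Fin n × ℕ | ((p.2 : ℝ) + 1) * a p.1 ≤ t}.ncard} := by
    intro hmem
    refine absurd (csInf_le ⟨0, fun t ht => ?_⟩ hmem) (not_le.2 hs)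
    by_contra! h0
    have : {p : Fin n × ℕ | ((p.2 : ℝ) + 1) * a p.1 ≤ t} = ∅ := by
      ext p
      simp only [mem_ofPred_eq, mem_empty_iff_false, iff_false, not_le]
      have := ha p.1
      exact h0.trans (by positivity)
    have ht' : k ≤ {p : Fin n × ℕ | ((p.2 : ℝ) + 1) * a p.1 ≤ t}.ncard := ht
    rw [this] at ht'
    simp at ht'
    omega
  have hns' : ¬ k ≤ {p : Fin n × ℕ | ((p.2 : ℝ) + 1) * a p.1 ≤ s}.ncard := hns
  rw [ncard_multiples_eq a ha s hs0.le] at hns'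
  have hlt := factorial_mul_prod_lt n k hn hk (fun i => ⌊s / a i⌋₊ + 1) (fun i => by omega) (by
    rw [Finset.sum_add_distrib]; simp; omega)
  have h1 : s ^ n ≤ ∏ i, (((⌊s / a i⌋₊ + 1 : ℕ) : ℝ) * a i) := by
    have : s ^ n = ∏ _i : Fin n, s := by simp
    rw [this]
    refine Finset.prod_le_prod (fun _ _ => hs0.le) fun i _ => ?_
    rw [← div_le_iff₀ (ha i)]
    push_cast
    exact (Nat.lt_floor_add_one _).le
  rw [Finset.prod_mul_distrib] at h1
  have h2 : s ^ n ≤ (k:ℝ) ^ n - 1 := by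
    have h3 : (n.factorial : ℝ) * ∏ i, ((⌊s / a i⌋₊ + 1 : ℕ) : ℝ) + 1 ≤ (k:ℝ) ^ n := by
      exact_mod_cast hlt
    have h4 : (0:ℝ) ≤ ∏ i, ((⌊s / a i⌋₊ + 1 : ℕ) : ℝ) := by positivity
    nlinarith
  have := Real.rpow_le_rpow (by positivity) h2 (by positivity : (0:ℝ) ≤ (n:ℝ)⁻¹)
  rwa [Real.pow_rpow_inv_natCast hs0.le (by omega)] at this

theorem ckmin_lt {n k : ℕ} (hn : 2 ≤ n) (hk : max n 3 ≤ k) :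
    ckmin n k (polydisk fun _ => (1 : ℝ)) < (k : ℝ) := by
  have hk3 : 3 ≤ k := le_trans (le_max_right _ _) hk
  have hk1 : (0:ℝ) ≤ (k:ℝ) ^ n - 1 := by
    have : (1:ℝ) ≤ (k:ℝ) ^ n := one_le_pow₀ (by exact_mod_cast (by omega : 1 ≤ k))
    linarith
  have hlt : ((k:ℝ) ^ n - 1) ^ ((n:ℝ)⁻¹) < k := by
    have := Real.rpow_lt_rpow hk1 (sub_one_lt ((k:ℝ) ^ n)) (by positivity : (0:ℝ) < (n:ℝ)⁻¹)
    rwa [Real.pow_rpow_inv_natCast (by positivity) (by omega)] at this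
  refine lt_of_le_of_lt (Real.sSup_le ?_ (by positivity)) hlt
  rintro c ⟨a, ha, hemb, rfl⟩
  exact Nk_pow_lt hn hk a ha (prod_le_factorial_of_sympEmb a ha hemb)

/-! ### A weighted Borsuk–Ulam theorem -/

/-- The determinant of `A` is a fixed linear combination of determinants `det (λ + A)` with large
`λ`: interpolate the polynomial `λ ↦ det (λ + A)` and evaluate at `0`. The last clause is the case
`A = 0`. -/
theorem exists_lagrange_det {E : Type*} [NormedAddCommGroup E] [NormedSpace ℝ E]
    [FiniteDimensional ℝ E] [Nontrivial E] (Λ : ℝ) :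
    ∃ (lam : ℕ → ℝ) (w : ℕ → ℝ) (D : ℕ), (∀ j, Λ ≤ lam j) ∧
      (∀ A : E →L[ℝ] E, A.det = ∑ j ∈ Finset.range D,
        w j * (lam j • ContinuousLinearMap.id ℝ E + A).det) ∧
      ∑ j ∈ Finset.range D, w j * lam j ^ Module.finrank ℝ E = 0 := by
  classical
  set d := Module.finrank ℝ E with hd
  have hd0 : 0 < d := Module.finrank_pos
  let lam : ℕ → ℝ := fun j => Λ + j
  have hinj : Set.InjOn lam (Finset.range (d + 1) : Set ℕ) := by
    intro a _ b _ h
    simpa [lam] using h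
  have key : ∀ p : Polynomial ℝ, p.degree < ((d + 1 : ℕ) : WithBot ℕ) →
      p.eval 0 = ∑ j ∈ Finset.range (d + 1),
        (Lagrange.basis (Finset.range (d + 1)) lam j).eval 0 * p.eval (lam j) := by
    intro p hp
    have h := Lagrange.eq_interpolate (s := Finset.range (d + 1)) (v := lam) hinj
      (f := p) (by simpa using hp)
    conv_lhs => rw [h]
    rw [Lagrange.interpolate_apply, Polynomial.eval_finsetSum]
    exact Finset.sum_congr rfl fun j _ => by rw [Polynomial.eval_mul, Polynomial.eval_C, mul_comm]
  refine ⟨lam, fun j => (Lagrange.basis (Finset.range (d + 1)) lam j).eval 0, d + 1,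
    fun j => by simp [lam], fun A => ?_, ?_⟩
  · let b := Module.finBasis ℝ E
    let M := LinearMap.toMatrix b b (A : E →ₗ[ℝ] E)
    have hev : ∀ t : ℝ, (-M).charpoly.eval t =
        (t • ContinuousLinearMap.id ℝ E + A).det := by
      intro t
      rw [Matrix.charpoly, ← Polynomial.coe_evalRingHom, RingHom.map_det, ContinuousLinearMap.det,
        ← LinearMap.det_toMatrix b]
      congr 1
      ext i j
      simp only [RingHom.mapMatrix_apply, Matrix.map_apply, Matrix.charmatrix_apply, M,
        Polynomial.coe_evalRingHom, ContinuousLinearMap.toLinearMap_add,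
        ContinuousLinearMap.toLinearMap_smul, map_add, map_smul,
        ContinuousLinearMap.coe_id, LinearMap.toMatrix_id, Matrix.add_apply, Matrix.smul_apply,
        Matrix.neg_apply]
      by_cases h : i = j
      · subst h; simp
      · simp [h]
    have h := key (-M).charpoly (by
      rw [Matrix.charpoly_degree_eq_dim, Fintype.card_fin]
      exact_mod_cast Nat.lt_succ_self _)
    simp only [hev] at h
    simpa using h
  · have h := key (Polynomial.X ^ d) (by
      rw [Polynomial.degree_X_pow]; exact_mod_cast Nat.lt_succ_self _)
    simp only [Polynomial.eval_pow, Polynomial.eval_X, zero_pow hd0.ne'] at h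
    exact h.symm

/-- The Jacobian of a compactly supported map has integral zero. For `λ` larger than the Lipschitz
constant of `g`, the map `λ x + g x` is a bijection equal to `λ x` near infinity, so the change of
variables formula evaluates the integral of `det (λ + Dg)`; then interpolate to `λ = 0`. -/
theorem integral_det_fderiv_eq_zero {E : Type*} [NormedAddCommGroup E] [NormedSpace ℝ E]
    [FiniteDimensional ℝ E] [Nontrivial E] [MeasurableSpace E] [BorelSpace E]
    (μ : Measure E) [μ.IsAddHaarMeasure] {g : E → E} (hg : ContDiff ℝ 1 g)
    (hs : HasCompactSupport g) : ∫ x, (fderiv ℝ g x).det ∂μ = 0 := by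
  obtain ⟨K, hK⟩ := hg.lipschitzWith_of_hasCompactSupport hs (by simp)
  obtain ⟨r, hr⟩ := hs.isCompact.isBounded.subset_closedBall (0 : E)
  set B := Metric.closedBall (0 : E) r with hB
  have hBc : IsCompact B := isCompact_closedBall _ _
  have hg0 : ∀ x ∉ B, g x = 0 := fun x hx => image_eq_zero_of_notMem_tsupport fun h => hx (hr h)
  have hcf : Continuous (fun x => fderiv ℝ g x) := hg.continuous_fderiv (by simp)
  have hdiff : ∀ x, HasFDerivAt g (fderiv ℝ g x) x :=
    fun x => (hg.differentiable (by simp) x).hasFDerivAt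
  have hdetc : Continuous (fun A : E →L[ℝ] E => A.det) := ContinuousLinearMap.continuous_det
  -- near the identity the determinant is positive
  obtain ⟨δ, hδ, hpos⟩ : ∃ δ > 0, ∀ A : E →L[ℝ] E, ‖A‖ < δ →
      0 < (ContinuousLinearMap.id ℝ E + A).det := by
    have h1 : ContinuousAt (fun A : E →L[ℝ] E => (ContinuousLinearMap.id ℝ E + A).det) 0 :=
      (hdetc.comp (continuous_const.add continuous_id)).continuousAt
    have h2 : (0:ℝ) < (fun A : E →L[ℝ] E => (ContinuousLinearMap.id ℝ E + A).det) 0 := by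
      simp [ContinuousLinearMap.det]
    obtain ⟨δ, hδ, h⟩ := Metric.eventually_nhds_iff.1 (h1.eventually (lt_mem_nhds h2))
    exact ⟨δ, hδ, fun A hA => h (by simpa using hA)⟩
  have hbd : ∀ x, ‖fderiv ℝ g x‖ ≤ K := fun x => norm_fderiv_le_of_lipschitz ℝ hK
  set Λ : ℝ := max ((K + 1) / δ) (K + 1) with hΛ
  have hΛ1 : ∀ t, Λ ≤ t → (K : ℝ) < t ∧ (K : ℝ) / t < δ ∧ 0 < t := by
    intro t ht
    have h1 : (K : ℝ) + 1 ≤ t := (le_max_right _ _).trans ht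
    have h2 : ((K : ℝ) + 1) / δ ≤ t := (le_max_left _ _).trans ht
    have hk := K.2
    have ht0 : 0 < t := by linarith
    refine ⟨by linarith, ?_, ht0⟩
    rw [div_le_iff₀ hδ] at h2
    rw [div_lt_iff₀ ht0]
    linarith
  have hInt : ∀ t, Λ ≤ t → ∫ x in B, (t • ContinuousLinearMap.id ℝ E + fderiv ℝ g x).det ∂μ =
      t ^ Module.finrank ℝ E * μ.real B := by
    intro t ht
    obtain ⟨h1, h2, h3⟩ := hΛ1 t ht
    let f : E → E := fun x => x + t⁻¹ • g x
    let f' : E → E →L[ℝ] E := fun x => ContinuousLinearMap.id ℝ E + t⁻¹ • fderiv ℝ g x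
    have hf' : ∀ x, HasFDerivAt f (f' x) x := fun x => (hasFDerivAt_id x).add ((hdiff x).const_smul _)
    have hAp : ApproximatesLinearOn f ((ContinuousLinearEquiv.refl ℝ E : E ≃L[ℝ] E) : E →L[ℝ] E)
        univ (K / t.toNNReal) := by
      refine fun x _ y _ => ?_
      have : f x - f y - (x - y) = t⁻¹ • (g x - g y) := by simp only [f, smul_sub]; abel
      simp only [ContinuousLinearEquiv.coe_refl, ContinuousLinearMap.coe_id', id_eq]
      rw [this, norm_smul, norm_inv, Real.norm_eq_abs, abs_of_pos h3]
      have := hK.norm_sub_le x y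
      calc t⁻¹ * ‖g x - g y‖ ≤ t⁻¹ * (K * ‖x - y‖) := by gcongr
        _ = _ := by rw [NNReal.coe_div, Real.coe_toNNReal _ h3.le]; ring
    have hc : Subsingleton E ∨ K / t.toNNReal <
        ‖((ContinuousLinearEquiv.refl ℝ E).symm : E →L[ℝ] E)‖₊⁻¹ := by
      right
      rw [← NNReal.coe_lt_coe]
      simp only [ContinuousLinearEquiv.refl_symm, ContinuousLinearEquiv.coe_refl]
      simp only [NNReal.coe_div, Real.coe_toNNReal _ h3.le, NNReal.coe_inv, coe_nnnorm,
        ContinuousLinearMap.norm_id, inv_one]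
      rwa [div_lt_one h3]
    have hinj : Function.Injective f := injOn_univ.1 (hAp.injOn hc)
    have hsur := hAp.surjective hc
    have hfB : f '' B = B := by
      have hout : ∀ x ∉ B, f x = x := fun x hx => by simp [f, hg0 x hx]
      ext y
      constructor
      · rintro ⟨x, hx, rfl⟩
        by_contra hy
        exact hy (by rwa [hinj (hout _ hy)])
      · intro hy
        obtain ⟨x, rfl⟩ := hsur y
        refine ⟨x, ?_, rfl⟩
        by_contra hx
        exact hx (by rwa [hout x hx] at hy)
    have hvol := lintegral_abs_det_fderiv_eq_addHaar_image μ hBc.measurableSet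
      (fun x _ => (hf' x).hasFDerivWithinAt) hinj.injOn
    rw [hfB] at hvol
    have hposx : ∀ x, 0 < (f' x).det := fun x => hpos _ (by
      rw [norm_smul, norm_inv, Real.norm_eq_abs, abs_of_pos h3, inv_mul_eq_div]
      exact lt_of_le_of_lt (by gcongr; exact hbd x) h2)
    have hcont : Continuous fun x => (f' x).det :=
      hdetc.comp (continuous_const.add (hcf.fun_const_smul _))
    have hI : ∫ x in B, (f' x).det ∂μ = μ.real B := by
      rw [integral_eq_lintegral_of_nonneg_ae (Filter.Eventually.of_forall fun x => (hposx x).le)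
        hcont.aestronglyMeasurable, Measure.real, ← hvol]
      congr 1
      exact lintegral_congr fun x => by rw [abs_of_pos (hposx x)]
    rw [← hI, ← integral_const_mul]
    refine integral_congr_ae (Filter.Eventually.of_forall fun x => ?_)
    have : t • ContinuousLinearMap.id ℝ E + fderiv ℝ g x = t • f' x := by
      simp only [f', smul_add, smul_smul, mul_inv_cancel₀ h3.ne', one_smul]
    simp only [this, ContinuousLinearMap.det, ContinuousLinearMap.toLinearMap_smul,
      LinearMap.det_smul]
  obtain ⟨lam, w, D, hlam, hdet, hsum⟩ := exists_lagrange_det (E := E) Λ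
  have hout : ∀ x ∉ B, (fderiv ℝ g x).det = 0 := by
    intro x hx
    have : fderiv ℝ g x = 0 := by
      by_contra h
      exact hx (hr (support_fderiv_subset ℝ h))
    rw [this]
    simp [ContinuousLinearMap.det]
  rw [← setIntegral_eq_integral_of_forall_compl_eq_zero hout]
  simp_rw [hdet (fderiv ℝ g _)]
  rw [integral_finsetSum]
  · simp_rw [integral_const_mul]
    rw [Finset.sum_congr rfl fun j _ => by rw [hInt _ (hlam j), ← mul_assoc], ← Finset.sum_mul,
      hsum, zero_mul]
  · intro j _
    exact (((hdetc.comp (continuous_const.add hcf)).continuousOn).integrableOn_compact hBc).const_mul _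

/-- The integral of the Jacobian over a ball depends only on the values outside that ball; this
replaces the degree of a map between spheres. -/
theorem setIntegral_det_fderiv_eq {E : Type*} [NormedAddCommGroup E] [InnerProductSpace ℝ E]
    [FiniteDimensional ℝ E] [Nontrivial E] [MeasurableSpace E] [BorelSpace E]
    (μ : Measure E) [μ.IsAddHaarMeasure] {g₀ g₁ : E → E} (h₀ : ContDiff ℝ 1 g₀)
    (h₁ : ContDiff ℝ 1 g₁) {r : ℝ} (hr : 0 < r) (h : ∀ x, r < ‖x‖ → g₀ x = g₁ x) :
    ∫ x in Metric.closedBall 0 r, (fderiv ℝ g₀ x).det ∂μ =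
      ∫ x in Metric.closedBall 0 r, (fderiv ℝ g₁ x).det ∂μ := by
  let θ : ContDiffBump (0 : E) := ⟨r + 1, r + 2, by linarith, by linarith⟩
  have hsm : ∀ g : E → E, ContDiff ℝ 1 g → ContDiff ℝ 1 (fun x => θ x • g x) :=
    fun g hg => θ.contDiff.smul hg
  have hcs : ∀ g : E → E, HasCompactSupport (fun x => θ x • g x) :=
    fun g => θ.hasCompactSupport.smul_right
  have hdetc : Continuous (fun A : E →L[ℝ] E => A.det) := ContinuousLinearMap.continuous_det
  have hsplit : ∀ g : E → E, ContDiff ℝ 1 g →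
      ∫ x in Metric.closedBall 0 r, (fderiv ℝ g x).det ∂μ =
      - ∫ x in (Metric.closedBall (0:E) r)ᶜ, (fderiv ℝ (fun x => θ x • g x) x).det ∂μ := by
    intro g hg
    have hz := integral_det_fderiv_eq_zero μ (hsm g hg) (hcs g)
    have hInt : Integrable (fun x => (fderiv ℝ (fun x => θ x • g x) x).det) μ := by
      refine (hdetc.comp ((hsm g hg).continuous_fderiv (by simp))).integrable_of_hasCompactSupport ?_
      refine ((hcs g).fderiv ℝ).comp_left (g := fun A : E →L[ℝ] E => A.det) ?_
      simp [ContinuousLinearMap.det]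
    rw [← integral_add_compl (Metric.isClosed_closedBall (x := (0:E)) (ε := r)).measurableSet hInt]
      at hz
    rw [← add_eq_zero_iff_eq_neg, ← hz]
    congr 1
    refine setIntegral_congr_fun Metric.isClosed_closedBall.measurableSet fun x hx => ?_
    have : (fun x => θ x • g x) =ᶠ[nhds x] g := by
      filter_upwards [Metric.isOpen_ball.mem_nhds (show x ∈ Metric.ball (0:E) (r + 1) from
        Metric.closedBall_subset_ball (by linarith) hx)] with y hy
      rw [θ.one_of_mem_closedBall (Metric.ball_subset_closedBall hy), one_smul]
    simp only [this.fderiv_eq]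
  rw [hsplit _ h₀, hsplit _ h₁]
  congr 1
  refine setIntegral_congr_fun Metric.isClosed_closedBall.measurableSet.compl fun x hx => ?_
  have : (fun x => θ x • g₀ x) =ᶠ[nhds x] (fun x => θ x • g₁ x) := by
    filter_upwards [Metric.isClosed_closedBall.isOpen_compl.mem_nhds hx] with y hy
    rw [h y (by simpa using hy)]
  simp only [this.fderiv_eq]

theorem hasDerivAt_max_sq (x : ℝ) : HasDerivAt (fun x : ℝ => max x 0 ^ 2) (2 * max x 0) x := by
  rcases lt_trichotomy x 0 with h | h | h
  · have : (fun x : ℝ => max x 0 ^ 2) =ᶠ[nhds x] fun _ => 0 := by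
      filter_upwards [gt_mem_nhds h] with y hy
      rw [max_eq_right hy.le]; norm_num
    rw [max_eq_right h.le, mul_zero]
    exact (hasDerivAt_const x (0:ℝ)).congr_of_eventuallyEq this
  · subst h
    rw [max_self, mul_zero, hasDerivAt_iff_isLittleO]
    refine Asymptotics.IsLittleO.of_bound fun c hc => ?_
    filter_upwards [Metric.ball_mem_nhds (0:ℝ) hc] with y hy
    have hy' : |y| < c := by simpa using hy
    have h1 : max y 0 ≤ |y| := max_le (le_abs_self y) (abs_nonneg y)
    have h0 : 0 ≤ max y 0 := le_max_right _ _
    simp only [max_self, smul_zero, sub_zero, Real.norm_eq_abs]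
    rw [show (0:ℝ) ^ 2 = 0 by norm_num, sub_zero, abs_of_nonneg (by positivity)]
    nlinarith [abs_nonneg y]
  · have : (fun x : ℝ => max x 0 ^ 2) =ᶠ[nhds x] fun x => x ^ 2 := by
      filter_upwards [lt_mem_nhds h] with y hy
      rw [max_eq_left hy.le]
    rw [max_eq_left h.le]
    refine HasDerivAt.congr_of_eventuallyEq ?_ this
    simpa using hasDerivAt_pow 2 x

theorem contDiff_max_sq : ContDiff ℝ 1 (fun x : ℝ => max x 0 ^ 2) := by
  rw [contDiff_one_iff_deriv]
  refine ⟨fun x => (hasDerivAt_max_sq x).differentiableAt, ?_⟩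
  have : deriv (fun x : ℝ => max x 0 ^ 2) = fun x => 2 * max x 0 :=
    funext fun x => (hasDerivAt_max_sq x).deriv
  rw [this]
  fun_prop

theorem det_eq_zero_of_functional {E : Type*} [NormedAddCommGroup E] [NormedSpace ℝ E]
    [FiniteDimensional ℝ E] (A : E →L[ℝ] E) (l : E →ₗ[ℝ] ℝ) (hl : l ≠ 0)
    (h : ∀ v, l (A v) = 0) : A.det = 0 := by
  by_contra hdet
  apply hl
  ext y
  obtain ⟨x, rfl⟩ := (LinearMap.equivOfDetNeZero (A : E →ₗ[ℝ] E) hdet).surjective y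
  simpa using h x

/-- A `C¹` radial map of nonnegative Jacobian which collapses the complement of the `r₀`-ball onto
the unit sphere and is a local diffeomorphism inside. -/
theorem exists_radial_map {E : Type*} [NormedAddCommGroup E] [InnerProductSpace ℝ E]
    [FiniteDimensional ℝ E] {r₀ : ℝ} (hr : 0 < r₀) :
    ∃ Θ : E → E, ContDiff ℝ 1 Θ ∧ (∀ y, r₀ ≤ ‖y‖ → ‖Θ y‖ = 1) ∧
      (∀ y, 0 ≤ (fderiv ℝ Θ y).det) ∧ (∀ y, ‖y‖ < r₀ → 0 < (fderiv ℝ Θ y).det) ∧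
      (∀ y, ∃ c : ℝ, Θ y = c • y) := by
  set R := r₀ ^ 2 with hR
  have hR0 : 0 < R := by positivity
  let m : ℝ → ℝ := fun r => max (R - r) 0
  let u : ℝ → ℝ := fun r => r + m r ^ 2 / R
  have hu0 : ∀ r, 0 < u r := by
    intro r
    simp only [u, m]
    rcases le_total r R with h | h
    · rw [max_eq_left (by linarith)]
      have : r + (R - r) ^ 2 / R = ((r - R / 2) ^ 2 + 3 / 4 * R ^ 2) / R := by field_simp; ring
      rw [this]; positivity
    · rw [max_eq_right (by linarith)]; simp; linarith
  have hud : ∀ r, HasDerivAt u (1 - 2 * m r / R) r := by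
    intro r
    have h1 : HasDerivAt (fun r => m r ^ 2) (2 * m r * (-1)) r :=
      (hasDerivAt_max_sq (R - r)).comp r ((hasDerivAt_id r).const_sub R)
    convert! (hasDerivAt_id r).add (h1.div_const R) using 1
    ring
  have huc : ContDiff ℝ 1 u := by
    refine contDiff_id.add (ContDiff.div_const ?_ R)
    exact contDiff_max_sq.comp (contDiff_const.sub contDiff_id)
  let ψ : ℝ → ℝ := fun r => (√(u r))⁻¹
  have hψ0 : ∀ r, 0 < ψ r := fun r => inv_pos.2 (Real.sqrt_pos.2 (hu0 r))
  have hψc : ContDiff ℝ 1 ψ := (huc.sqrt fun r => (hu0 r).ne').inv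
    fun r => (Real.sqrt_pos.2 (hu0 r)).ne'
  have hψd : ∀ r, HasDerivAt ψ (ψ r * (-(1 - 2 * m r / R) / (2 * u r))) r := by
    intro r
    have hs := Real.sqrt_pos.2 (hu0 r)
    have h1 := ((hud r).sqrt (hu0 r).ne').inv hs.ne'
    convert! h1 using 1
    simp only [ψ]
    have h2 := Real.sq_sqrt (hu0 r).le
    have h3 := (hu0 r).ne'
    field_simp
    rw [h2]
    field_simp
  let Θ : E → E := fun y => ψ (‖y‖ ^ 2) • y
  have hfd : ∀ y, fderiv ℝ Θ y = ψ (‖y‖ ^ 2) • (ContinuousLinearMap.id ℝ E +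
      ((-(1 - 2 * m (‖y‖ ^ 2) / R) / u (‖y‖ ^ 2)) • innerSL ℝ y).smulRight y) := by
    intro y
    have h1 := HasDerivAt.comp_hasFDerivAt (h₂ := ψ) y (hψd (‖y‖ ^ 2))
      (hasStrictFDerivAt_norm_sq y).hasFDerivAt
    have h2 := (h1.smul (hasFDerivAt_id y)).fderiv
    refine h2.trans ?_
    ext v
    have hu := (hu0 (‖y‖ ^ 2)).ne'
    simp
    rw [smul_smul]
    congr 1
    field_simp
  have hdet : ∀ y, (fderiv ℝ Θ y).det = ψ (‖y‖ ^ 2) ^ Module.finrank ℝ E *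
      ((m (‖y‖ ^ 2) ^ 2 + 2 * ‖y‖ ^ 2 * m (‖y‖ ^ 2)) / R / u (‖y‖ ^ 2)) := by
    intro y
    have hu := (hu0 (‖y‖ ^ 2)).ne'
    rw [hfd, ContinuousLinearMap.det, ContinuousLinearMap.toLinearMap_smul, LinearMap.det_smul]
    congr 1
    set l := ((-(1 - 2 * m (‖y‖ ^ 2) / R) / u (‖y‖ ^ 2)) • innerSL ℝ y) with hl
    have : ((ContinuousLinearMap.id ℝ E + l.smulRight y : E →L[ℝ] E) : E →ₗ[ℝ] E) =
        LinearMap.transvection (l : E →ₗ[ℝ] ℝ) y := by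
      ext v; simp [LinearMap.transvection.apply]
    rw [this, LinearMap.transvection.det]
    simp only [hl, ContinuousLinearMap.coe_coe, smul_apply, innerSL_apply_apply,
      real_inner_self_eq_norm_sq, smul_eq_mul]
    have hu' : u (‖y‖ ^ 2) = ‖y‖ ^ 2 + m (‖y‖ ^ 2) ^ 2 / R := rfl
    rw [eq_div_iff hu, add_mul, div_mul_eq_mul_div, div_mul_cancel₀ _ hu, hu']
    field_simp
    ring
  have hm0 : ∀ r, 0 ≤ m r := fun r => le_max_right _ _
  refine ⟨Θ, (hψc.comp (contDiff_norm_sq ℝ)).smul contDiff_id, ?_, ?_, ?_, fun y => ⟨_, rfl⟩⟩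
  · intro y hy
    have h1 : R ≤ ‖y‖ ^ 2 := by rw [hR]; gcongr
    have h2 : u (‖y‖ ^ 2) = ‖y‖ ^ 2 := by
      simp only [u, m]; rw [max_eq_right (by linarith)]; simp
    simp only [Θ, ψ, norm_smul, h2, Real.sqrt_sq (norm_nonneg y), norm_inv, norm_norm]
    exact inv_mul_cancel₀ (by linarith)
  · intro y
    rw [hdet]
    have := hm0 (‖y‖ ^ 2); have := hu0 (‖y‖ ^ 2); have := hψ0 (‖y‖ ^ 2)
    positivity
  · intro y hy
    rw [hdet]
    have : 0 < m (‖y‖ ^ 2) := by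
      refine lt_max_of_lt_left (sub_pos.2 ?_)
      rw [hR]; gcongr
    have := hu0 (‖y‖ ^ 2); have := hψ0 (‖y‖ ^ 2)
    positivity

/-- The homotopy between `F` and `z ↦ ∑ z_j ^ w C_j` has no zeros off the origin, for generic `C`.
By homogeneity one may take `z_i = 1` for some `i`, and then `C_i` is expressed through the other
columns, the remaining `z_j` and the real number `s`. Hence the bad matrices `C` lie in the ranges
of the maps `Φ i`, whose derivatives are singular since `Φ i` ignores the imaginary part of one
entry; such ranges are null sets. -/
theorem exists_generic_columns {ι : Type*} [Fintype ι] [DecidableEq ι] (w : ℕ)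
    (F : (ι → ℂ) → (ι → ℂ)) (hF : ∀ z ≠ 0, DifferentiableAt ℝ F z)
    (hhom : ∀ z : ι → ℂ, ∀ c : ℂ, c ≠ 0 → ∃ s : ℝ, 0 < s ∧ F (c • z) = s • c ^ w • F z) :
    ∃ C : ι → ι → ℂ, ∀ z : ι → ℂ, z ≠ 0 → ∀ s : ℝ, 0 ≤ s →
      ∑ j, z j ^ w • C j + s • F z ≠ 0 := by
  let Φ : ι → (ι → ι → ℂ) → (ι → ι → ℂ) := fun i Z j =>
    if j = i then -((Z i i).re • F (Function.update (Z i) i 1)) -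
      ∑ l ∈ Finset.univ.erase i, (Z i l) ^ w • Z l else Z j
  have hΦd : ∀ i Z, DifferentiableAt ℝ (Φ i) Z := by
    intro i Z
    rw [differentiableAt_pi]
    intro j
    by_cases hj : j = i
    · simp only [Φ, hj, if_true]
      have hne : Function.update (Z i) i (1:ℂ) ≠ 0 := fun h => by
        simpa using congrFun h i
      have h1 : DifferentiableAt ℝ (fun Z : ι → ι → ℂ => Function.update (Z i) i (1:ℂ)) Z := by
        rw [differentiableAt_pi]
        intro l
        by_cases hl : l = i
        · subst hl; simp
        · simp only [Function.update_of_ne hl]; fun_prop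
      have h2 : DifferentiableAt ℝ (fun Z : ι → ι → ℂ => F (Function.update (Z i) i (1:ℂ))) Z :=
        DifferentiableAt.comp Z (hF _ hne) h1
      have h3 : DifferentiableAt ℝ (fun Z : ι → ι → ℂ => (Z i i).re) Z :=
        (Complex.reCLM.differentiableAt).comp Z (by fun_prop)
      refine (h3.smul h2).neg.sub (DifferentiableAt.fun_sum fun l _ => ?_)
      have h4 : DifferentiableAt ℝ (fun Z : ι → ι → ℂ => (Z i l) ^ w) Z := by fun_prop
      have h5 : DifferentiableAt ℝ (fun Z : ι → ι → ℂ => Z l) Z := by fun_prop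
      exact h4.smul h5
    · simp only [Φ, hj, if_false]
      fun_prop
  let μ : Measure (ι → ι → ℂ) := Measure.addHaar
  have hnull : ∀ i, μ (range (Φ i)) = 0 := by
    intro i
    rw [← image_univ]
    refine addHaar_image_eq_zero_of_det_fderivWithin_eq_zero μ
      (f' := fun Z => fderiv ℝ (Φ i) Z)
      (fun Z _ => (hΦd i Z).hasFDerivAt.hasFDerivWithinAt) fun Z _ => ?_
    let v : ι → ι → ℂ := Pi.single i (Pi.single i Complex.I)
    have hv : v ≠ 0 := fun h => by
      have := congrFun (congrFun h i) i
      simp [v] at this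
    have hconst : ∀ t : ℝ, Φ i (Z + t • v) = Φ i Z := by
      intro t
      funext j
      have hv1 : ∀ l, l ≠ i → v l = 0 := fun l hl => by simp [v, hl]
      have hv2 : ∀ l, l ≠ i → v i l = 0 := fun l hl => by simp [v, hl]
      have hv3 : v i i = Complex.I := by simp [v]
      by_cases hj : j = i
      · simp only [Φ, hj, if_true]
        have e1 : Function.update ((Z + t • v) i) i (1:ℂ) = Function.update (Z i) i 1 := by
          funext l
          by_cases hl : l = i
          · subst hl; simp
          · simp [Function.update_of_ne hl, hv2 l hl]
        have e2 : ((Z + t • v) i i).re = (Z i i).re := by simp [hv3]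
        rw [e1, e2]
        congr 1
        refine Finset.sum_congr rfl fun l hl => ?_
        have hl' := Finset.ne_of_mem_erase hl
        simp [hv1 l hl', hv2 l hl']
      · simp only [Φ, hj, if_false]
        simp [hv1 j hj]
    have hz : fderiv ℝ (Φ i) Z v = 0 := by
      have h1 := (hΦd i Z).hasFDerivAt.hasLineDerivAt v
      have h2 : HasLineDerivAt ℝ (Φ i) 0 Z v := by
        unfold HasLineDerivAt
        simp only [hconst]
        exact hasDerivAt_const _ _
      exact h1.unique h2
    by_contra hdet
    exact hv ((LinearMap.equivOfDetNeZero (fderiv ℝ (Φ i) Z : (ι → ι → ℂ) →ₗ[ℝ] (ι → ι → ℂ))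
      hdet).injective (by simpa using hz))
  obtain ⟨C, hC⟩ : ∃ C, C ∉ ⋃ i, range (Φ i) := by
    by_contra! h
    have h1 : (⋃ i, range (Φ i)) = univ := eq_univ_of_forall h
    have h2 : μ (⋃ i, range (Φ i)) = 0 := measure_iUnion_null hnull
    rw [h1] at h2
    exact (isOpen_univ.measure_ne_zero μ univ_nonempty) h2
  refine ⟨C, fun z hz s hs h0 => hC ?_⟩
  obtain ⟨i, hi⟩ : ∃ i, z i ≠ 0 := by
    by_contra! h
    exact hz (funext h)
  let z' : ι → ℂ := (z i)⁻¹ • z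
  have hz' : z = z i • z' := by simp [z', smul_smul, hi]
  have hz'i : z' i = 1 := by simp [z', hi]
  obtain ⟨s', hs', hFs⟩ := hhom z' (z i) hi
  rw [← hz'] at hFs
  have hrel : ∑ j, z' j ^ w • C j + (s * s') • F z' = 0 := by
    have hw : (z i) ^ w ≠ 0 := pow_ne_zero _ hi
    have : (z i) ^ w • (∑ j, z' j ^ w • C j + (s * s') • F z') = 0 := by
      rw [← h0, hFs, smul_add, Finset.smul_sum]
      congr 1
      · refine Finset.sum_congr rfl fun j _ => ?_
        rw [smul_smul, ← mul_pow]
        congr 2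
        conv_rhs => rw [hz']
        simp
      · rw [smul_comm, smul_smul]
    exact (smul_eq_zero.1 this).resolve_left hw
  refine mem_iUnion.2 ⟨i, Function.update C i (Function.update z' i ((s * s' : ℝ) : ℂ)), ?_⟩
  funext j
  by_cases hj : j = i
  · subst hj
    simp only [Φ, if_true, Function.update_self, Function.update_idem, Complex.ofReal_re]
    rw [← Finset.add_sum_erase _ _ (Finset.mem_univ j), hz'i, one_pow, one_smul] at hrel
    have e1 : Function.update z' j (1:ℂ) = z' := by rw [← hz'i, Function.update_eq_self]
    have e2 : ∑ l ∈ Finset.univ.erase j, (Function.update z' j ((s * s' : ℝ) : ℂ) l) ^ w •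
        Function.update C j (Function.update z' j ((s * s' : ℝ) : ℂ)) l =
        ∑ l ∈ Finset.univ.erase j, z' l ^ w • C l := by
      refine Finset.sum_congr rfl fun l hl => ?_
      rw [Function.update_of_ne (Finset.ne_of_mem_erase hl),
        Function.update_of_ne (Finset.ne_of_mem_erase hl)]
    rw [e1, e2]
    have := eq_neg_of_add_eq_zero_left (add_assoc (C j) _ _ ▸ hrel)
    rw [this]; abel
  · simp [Φ, hj]

/-- An equivariant map without zeros on the sphere can be made `C¹`: convolution with a radial
mollifier preserves equivariance. -/
theorem exists_smooth_equivariant {ι G : Type*} [Fintype ι] [NormedAddCommGroup G]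
    [NormedSpace ℂ G] [CompleteSpace G] (w : ℕ)
    (F : EuclideanSpace ℂ ι → G) (hF : Continuous F)
    (heq : ∀ (c : ℂ) z, ‖c‖ = 1 → F (c • z) = c ^ w • F z) (h0 : ∀ z, ‖z‖ = 1 → F z ≠ 0) :
    ∃ F₁ : EuclideanSpace ℂ ι → G, ContDiff ℝ 1 F₁ ∧
      (∀ (c : ℂ) z, ‖c‖ = 1 → F₁ (c • z) = c ^ w • F₁ z) ∧ ∀ z, ‖z‖ = 1 → F₁ z ≠ 0 := by
  let E := EuclideanSpace ℂ ι
  obtain ⟨δ, hδ, hmin⟩ : ∃ δ > 0, ∀ z : E, ‖z‖ = 1 → δ < ‖F z‖ := by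
    rcases (Metric.sphere (0:E) 1).eq_empty_or_nonempty with he | hne
    · refine ⟨1, one_pos, fun z hz => ?_⟩
      have : z ∈ Metric.sphere (0:E) 1 := by simpa using hz
      rw [he] at this
      exact this.elim
    · obtain ⟨z₀, hz₀, hm⟩ := (isCompact_sphere (0:E) 1).exists_isMinOn hne
        hF.norm.continuousOn
      have hp : 0 < ‖F z₀‖ := norm_pos_iff.2 (h0 z₀ (by simpa using hz₀))
      refine ⟨‖F z₀‖ / 2, by positivity, fun z hz => ?_⟩
      have : ‖F z₀‖ ≤ ‖F z‖ := hm (show z ∈ Metric.sphere (0:E) 1 by simpa using hz)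
      linarith
  -- uniform continuity on a ball
  have huc : UniformContinuousOn F (Metric.closedBall (0:E) 2) :=
    (isCompact_closedBall _ _).uniformContinuousOn_of_continuous hF.continuousOn
  obtain ⟨ρ, hρ, hρF⟩ := Metric.uniformContinuousOn_iff.1 huc δ hδ
  -- a radial mollifier supported in the ball of radius `R`
  set R := min ρ 1 with hR
  have hR0 : 0 < R := by positivity
  let u : E → ℝ := fun x => Real.smoothTransition (1 - ‖x‖ ^ 2 / R ^ 2)
  have hus : ContDiff ℝ 1 u := (Real.smoothTransition.contDiff (n := 1)).comp
    (contDiff_const.sub ((contDiff_norm_sq ℝ).div_const _))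
  have hu0 : ∀ x, 0 ≤ u x := fun x => Real.smoothTransition.nonneg _
  have husupp : Function.support u ⊆ Metric.ball 0 R := by
    intro x hx
    by_contra h
    apply hx
    refine Real.smoothTransition.zero_of_nonpos ?_
    have h1 : R ≤ ‖x‖ := by simpa using h
    have h2 : 1 ≤ ‖x‖ ^ 2 / R ^ 2 := by
      rw [one_le_div (by positivity)]; gcongr
    linarith
  have hucs : HasCompactSupport u := HasCompactSupport.of_support_subset_isCompact
    (isCompact_closedBall (0:E) R) (husupp.trans Metric.ball_subset_closedBall)
  have huint : 0 < ∫ x, u x := hus.continuous.integral_pos_of_hasCompactSupport_nonneg_nonzero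
    hucs hu0 (x := 0) (by simp [u])
  set J := ∫ x, u x with hJ
  let φ : E → ℝ := fun x => J⁻¹ * u x
  have hφs : ContDiff ℝ 1 φ := contDiff_const.mul hus
  have hφcs : HasCompactSupport φ := hucs.mul_left
  have hφ1 : ∫ x, φ x = 1 := by
    simp only [φ]
    rw [integral_const_mul, ← hJ, inv_mul_cancel₀ huint.ne']
  have hφ0 : ∀ x, 0 ≤ φ x := fun x => mul_nonneg (inv_nonneg.2 huint.le) (hu0 x)
  have hφsupp : Function.support φ ⊆ Metric.ball 0 R :=
    (Function.support_mul_subset_right _ _).trans husupp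
  let F₁ : E → G := convolution φ F (ContinuousLinearMap.lsmul ℝ ℝ) volume
  refine ⟨F₁, ?_, ?_, ?_⟩
  · exact hφcs.contDiff_convolution_left _ (n := 1) hφs
      hF.locallyIntegrable
  · intro c z hc
    have hc0 : c ≠ 0 := fun h => by simp [h] at hc
    let e : E ≃ₗᵢ[ℝ] E :=
      { toFun := fun x => c • x
        invFun := fun x => c⁻¹ • x
        left_inv := fun x => by simp [smul_smul, hc0]
        right_inv := fun x => by simp [smul_smul, hc0]
        map_add' := fun x y => smul_add _ _ _
        map_smul' := fun r x => smul_comm _ _ _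
        norm_map' := fun x => by
          change ‖c • x‖ = ‖x‖
          rw [norm_smul, hc, one_mul] }
    simp only [F₁, convolution_def, ContinuousLinearMap.lsmul_apply]
    rw [← e.measurePreserving.integral_comp' (f := e.toMeasurableEquiv), ← integral_smul]
    refine integral_congr_ae (Filter.Eventually.of_forall fun t => ?_)
    have h1 : φ (e t) = φ t := by simp only [φ, u, e.norm_map]
    change φ (e t) • F (c • z - c • t) = _
    rw [h1, ← smul_sub, heq _ _ hc, smul_comm]
  · intro z hz hzero
    have h1 : dist (F₁ z) (F z) ≤ δ := by
      refine dist_convolution_le hδ.le hφsupp hφ0 hφ1 hF.aestronglyMeasurable fun x hx => (hρF x ?_ z ?_ ?_).le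
      · have : dist x z < 1 := lt_of_lt_of_le hx (min_le_right _ _)
        have := norm_le_norm_add_norm_sub' x z
        rw [dist_eq_norm] at *
        simp; linarith
      · simp [hz]
      · exact lt_of_lt_of_le hx (min_le_left _ _)
    rw [hzero, dist_zero_left] at h1
    exact absurd (hmin z hz) (not_lt.2 h1)

/-- If `F` had no zeros on the sphere, it could be deformed, away from the origin and without zeros,
to `Q z = ∑ z_j ^ w C_j`; call the result `W`, equal to `Q` outside the ball of radius `2`. Compose
with a radial map `Θ` that collapses large vectors to the unit sphere. The Jacobian of `Θ ∘ W`
vanishes, because locally the image lies in the hyperplane `Re z_{j₀} = 0` or in the unit sphere,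
whereas the Jacobian of `Θ ∘ Q` is nonnegative and positive somewhere. This contradicts
`setIntegral_det_fderiv_eq`. -/
theorem equivariant_smooth_zero {ι : Type*} [Fintype ι] [DecidableEq ι] {w : ℕ} (hw : 0 < w)
    (j₀ : ι) (F : EuclideanSpace ℂ ι → EuclideanSpace ℂ ι) (hF : ContDiff ℝ 1 F)
    (heq : ∀ (c : ℂ) z, ‖c‖ = 1 → F (c • z) = c ^ w • F z) (hj : ∀ z, F z j₀ = 0) :
    ∃ z, ‖z‖ = 1 ∧ F z = 0 := by
  by_contra! hne
  have : Nonempty ι := ⟨j₀⟩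
  let G : EuclideanSpace ℂ ι → EuclideanSpace ℂ ι := fun z => F (‖z‖⁻¹ • z)
  have hGne : ∀ z, z ≠ 0 → G z ≠ 0 := fun z hz => hne _ (by
    rw [norm_smul, norm_inv, norm_norm, inv_mul_cancel₀ (norm_ne_zero_iff.2 hz)])
  have hGs : ∀ z, z ≠ 0 → ContDiffAt ℝ 1 G z := fun z hz =>
    hF.contDiffAt.comp z (((contDiffAt_norm ℝ hz).inv (norm_ne_zero_iff.2 hz)).smul contDiffAt_id)
  have hGhom : ∀ (c : ℂ) z, c ≠ 0 → G (c • z) = (‖c‖⁻¹ ^ w) • c ^ w • G z := by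
    intro c z hc
    have hcn : ‖c‖ ≠ 0 := norm_ne_zero_iff.2 hc
    have h1 : ‖c • z‖⁻¹ • c • z = (((‖c‖⁻¹ : ℝ) : ℂ) * c) • ‖z‖⁻¹ • z := by
      rw [norm_smul, mul_inv, mul_smul, mul_smul, smul_comm ‖z‖⁻¹ c z, Complex.coe_smul]
    simp only [G]
    rw [h1, heq _ _ (by simp [hcn]), mul_pow, mul_smul, ← Complex.ofReal_pow, Complex.coe_smul]
  -- generic columns
  obtain ⟨C, hC⟩ := exists_generic_columns w
    (fun z : ι → ℂ => (G (WithLp.toLp 2 z)).ofLp)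
    (fun z hz => by
      have h1 : DifferentiableAt ℝ G (WithLp.toLp 2 z) :=
        (hGs _ (by simpa using hz)).differentiableAt (by simp)
      have h2 : DifferentiableAt ℝ (fun z : ι → ℂ => (WithLp.toLp 2 z : EuclideanSpace ℂ ι)) z :=
        (PiLp.continuousLinearEquiv 2 ℝ (fun _ : ι => ℂ)).symm.differentiableAt
      exact ((PiLp.continuousLinearEquiv 2 ℝ (fun _ : ι => ℂ)).differentiableAt).comp z (h1.comp z h2))
    (fun z c hc => ⟨‖c‖⁻¹ ^ w, by positivity, by
      rw [WithLp.toLp_smul, hGhom c _ hc]; rfl⟩)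
  let Q : EuclideanSpace ℂ ι → EuclideanSpace ℂ ι := fun z => ∑ j, z j ^ w • WithLp.toLp 2 (C j)
  have hQG : ∀ z : EuclideanSpace ℂ ι, z ≠ 0 → ∀ s : ℝ, 0 ≤ s → Q z + s • G z ≠ 0 := by
    intro z hz s hs h0
    refine hC z.ofLp (by simpa using hz) s hs ?_
    have := congrArg WithLp.ofLp h0
    simpa [Q, WithLp.ofLp_sum, -WithLp.ofLp_eq_zero] using this
  have hQs : ContDiff ℂ 1 Q := by
    refine ContDiff.sum fun j _ => ContDiff.fun_smul (ContDiff.pow ?_ _) contDiff_const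
    exact (PiLp.proj 2 (fun _ : ι => ℂ) j : EuclideanSpace ℂ ι →L[ℂ] ℂ).contDiff
  have hQs' : ContDiff ℝ 1 Q := hQs.restrict_scalars ℝ
  let α : EuclideanSpace ℂ ι → ℝ := fun z => Real.smoothTransition (2 * ‖z‖ ^ 2 - 1)
  let b : EuclideanSpace ℂ ι → ℝ := fun z => Real.smoothTransition (‖z‖ ^ 2 - 2)
  have hαs : ContDiff ℝ 1 α := (Real.smoothTransition.contDiff (n := 1)).comp
    ((contDiff_const.mul (contDiff_norm_sq ℝ)).sub contDiff_const)
  have hbs : ContDiff ℝ 1 b := (Real.smoothTransition.contDiff (n := 1)).comp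
    ((contDiff_norm_sq ℝ).sub contDiff_const)
  have hαG : ContDiff ℝ 1 (fun z => α z • G z) := by
    rw [contDiff_iff_contDiffAt]
    intro z
    by_cases hz : z = 0
    · have : (fun z => α z • G z) =ᶠ[nhds z] fun _ => 0 := by
        subst hz
        filter_upwards [Metric.ball_mem_nhds (0 : EuclideanSpace ℂ ι) (show (0:ℝ) < 1 / 2 by norm_num)] with y hy
        have hy' : ‖y‖ < 1 / 2 := by simpa using hy
        have : α y = 0 := Real.smoothTransition.zero_of_nonpos (by nlinarith [norm_nonneg y])
        rw [this, zero_smul]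
      exact contDiffAt_const.congr_of_eventuallyEq this
    · exact hαs.contDiffAt.smul (hGs z hz)
  let W : EuclideanSpace ℂ ι → EuclideanSpace ℂ ι := fun z => b z • Q z + (1 - b z) • α z • G z
  have hWs : ContDiff ℝ 1 W := (hbs.smul hQs').add ((contDiff_const.sub hbs).smul hαG)
  have hWne : ∀ z : EuclideanSpace ℂ ι, 1 ≤ ‖z‖ → W z ≠ 0 := by
    intro z hz h0
    have hz0 : z ≠ 0 := fun h => by rw [h, norm_zero] at hz; linarith
    have hα1 : α z = 1 := Real.smoothTransition.one_of_one_le (by nlinarith)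
    simp only [W, hα1, one_smul] at h0
    have hb0 := Real.smoothTransition.nonneg (‖z‖ ^ 2 - 2)
    have hb1 := Real.smoothTransition.le_one (‖z‖ ^ 2 - 2)
    change 0 ≤ b z at hb0
    change b z ≤ 1 at hb1
    rcases hb0.eq_or_lt with hb | hb
    · rw [← hb] at h0
      simp only [zero_smul, zero_add, sub_zero, one_smul] at h0
      exact hGne z hz0 h0
    · refine hQG z hz0 ((1 - b z) / b z) (div_nonneg (by linarith) hb.le) ?_
      have : b z • (Q z + ((1 - b z) / b z) • G z) = 0 := by
        rw [smul_add, smul_smul, mul_div_cancel₀ _ hb.ne', h0]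
      exact (smul_eq_zero.1 this).resolve_left hb.ne'
  obtain ⟨r₀, hr₀, hWr⟩ : ∃ r₀ > 0, ∀ z : EuclideanSpace ℂ ι, 1 ≤ ‖z‖ → ‖z‖ ≤ 2 → r₀ < ‖W z‖ := by
    have hK : IsCompact (Metric.closedBall (0 : EuclideanSpace ℂ ι) 2 ∩ {z | 1 ≤ ‖z‖}) :=
      (isCompact_closedBall _ _).inter_right (isClosed_le continuous_const continuous_norm)
    rcases (Metric.closedBall (0 : EuclideanSpace ℂ ι) 2 ∩ {z | 1 ≤ ‖z‖}).eq_empty_or_nonempty with he | hne'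
    · refine ⟨1, one_pos, fun z h1 h2 => ?_⟩
      have : z ∈ Metric.closedBall (0 : EuclideanSpace ℂ ι) 2 ∩ {z | 1 ≤ ‖z‖} := ⟨by simpa using h2, h1⟩
      rw [he] at this
      exact this.elim
    · obtain ⟨z₀, hz₀, hm⟩ := hK.exists_isMinOn hne' hWs.continuous.norm.continuousOn
      have hp : 0 < ‖W z₀‖ := norm_pos_iff.2 (hWne z₀ hz₀.2)
      refine ⟨‖W z₀‖ / 2, by positivity, fun z h1 h2 => ?_⟩
      have : ‖W z₀‖ ≤ ‖W z‖ := hm (show z ∈ Metric.closedBall (0 : EuclideanSpace ℂ ι) 2 ∩ {z | 1 ≤ ‖z‖} from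
        ⟨by simpa using h2, h1⟩)
      linarith
  obtain ⟨Θ, hΘs, hΘ1, hΘ0, hΘp, hΘr⟩ := exists_radial_map (E := EuclideanSpace ℂ ι) hr₀
  have hInt := setIntegral_det_fderiv_eq (volume : Measure (EuclideanSpace ℂ ι)) (hΘs.comp hWs) (hΘs.comp hQs')
    (r := 2) two_pos (fun z hz => by
      have : b z = 1 := Real.smoothTransition.one_of_one_le (by nlinarith)
      simp [W, this])
  -- the deformed map has vanishing Jacobian
  have hdet0 : ∀ z ∈ Metric.closedBall (0 : EuclideanSpace ℂ ι) 2, (fderiv ℝ (Θ ∘ W) z).det = 0 := by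
    intro z hz
    have hz2 : ‖z‖ ≤ 2 := by simpa using hz
    have hd : HasFDerivAt (Θ ∘ W) (fderiv ℝ (Θ ∘ W) z) z :=
      ((hΘs.comp hWs).differentiable (by simp) z).hasFDerivAt
    rcases lt_or_ge (‖z‖ ^ 2) 2 with hlt | hge
    · -- image in a hyperplane
      let l : EuclideanSpace ℂ ι →L[ℝ] ℝ := Complex.reCLM.comp (PiLp.proj 2 (fun _ : ι => ℂ) j₀ : EuclideanSpace ℂ ι →L[ℝ] ℂ)
      refine det_eq_zero_of_functional _ (l : EuclideanSpace ℂ ι →ₗ[ℝ] ℝ) (fun h => ?_) fun v => ?_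
      · have := LinearMap.congr_fun h (EuclideanSpace.single j₀ 1)
        simp [l] at this
      · have h1 := l.hasFDerivAt.comp z hd
        have h2 : (l ∘ (Θ ∘ W)) =ᶠ[nhds z] fun _ => 0 := by
          filter_upwards [(isOpen_lt (continuous_norm.pow 2) continuous_const).mem_nhds hlt]
            with y hy
          have hy' : ‖y‖ ^ 2 < 2 := hy
          have hb : b y = 0 := Real.smoothTransition.zero_of_nonpos (by linarith)
          obtain ⟨c, hc⟩ := hΘr (W y)
          have hWy : W y j₀ = 0 := by simp [W, hb, G, hj]
          change (Θ (W y) j₀).re = 0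
          rw [hc]
          simp [hWy]
        have h3 := h1.unique ((hasFDerivAt_const (0:ℝ) z).congr_of_eventuallyEq h2)
        exact DFunLike.congr_fun h3 v
    · -- image in the unit sphere
      have hz1 : 1 < ‖z‖ := by nlinarith [norm_nonneg z]
      have hWz := hWr z hz1.le hz2
      have hnear : ∀ᶠ y in nhds z, ‖(Θ ∘ W) y‖ ^ 2 = 1 := by
        filter_upwards [(isOpen_lt continuous_const hWs.continuous.norm).mem_nhds hWz] with y hy
        have hy' : r₀ < ‖W y‖ := hy
        simp [hΘ1 _ hy'.le]
      refine det_eq_zero_of_functional _ (innerSL ℝ ((Θ ∘ W) z) : EuclideanSpace ℂ ι →ₗ[ℝ] ℝ) (fun h => ?_)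
        fun v => ?_
      · have h1 := LinearMap.congr_fun h ((Θ ∘ W) z)
        have h2 := hnear.self_of_nhds
        simp only [ContinuousLinearMap.coe_coe, innerSL_apply_apply, real_inner_self_eq_norm_sq, h2,
          LinearMap.zero_apply] at h1
        norm_num at h1
      · have h1 := hd.norm_sq
        have h3 := h1.unique ((hasFDerivAt_const (1:ℝ) z).congr_of_eventuallyEq hnear)
        have h4 := DFunLike.congr_fun h3 v
        simpa using h4
  rw [setIntegral_eq_zero_of_forall_eq_zero hdet0] at hInt
  -- the standard map has nonnegative Jacobian
  have hfQ : ∀ z, (fderiv ℝ (Θ ∘ Q) z).det = (fderiv ℝ Θ (Q z)).det * (fderiv ℝ Q z).det := by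
    intro z
    rw [fderiv_comp z (hΘs.differentiable (by simp) _) (hQs'.differentiable (by simp) _)]
    exact LinearMap.det_comp _ _
  have hQ0 : ∀ z, 0 ≤ (fderiv ℝ Q z).det := by
    intro z
    have h1 : fderiv ℝ Q z = (fderiv ℂ Q z).restrictScalars ℝ :=
      ((hQs.differentiable (by simp) z).hasFDerivAt.restrictScalars ℝ).fderiv
    rw [h1]
    have h2 := LinearMap.det_restrictScalars (R := ℝ) (f := (fderiv ℂ Q z : EuclideanSpace ℂ ι →ₗ[ℂ] EuclideanSpace ℂ ι))
    change 0 ≤ LinearMap.det (((fderiv ℂ Q z : EuclideanSpace ℂ ι →ₗ[ℂ] EuclideanSpace ℂ ι)).restrictScalars ℝ)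
    rw [h2, Algebra.norm_complex_eq]
    exact Complex.normSq_nonneg _
  -- the Jacobian is positive at a small point of the diagonal
  have hQd : ∀ z v : EuclideanSpace ℂ ι, fderiv ℝ Q z v = ∑ j, (w * z j ^ (w - 1) * v j) • WithLp.toLp 2 (C j) := by
    intro z v
    have h1 : HasFDerivAt Q (∑ j, ((w * z j ^ (w - 1)) • (PiLp.proj 2 (fun _ : ι => ℂ) j :
        EuclideanSpace ℂ ι →L[ℂ] ℂ)).smulRight (WithLp.toLp 2 (C j))) z := by
      refine HasFDerivAt.fun_sum fun j _ => ?_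
      have h2 : HasFDerivAt (fun z : EuclideanSpace ℂ ι => z j) (PiLp.proj 2 (fun _ : ι => ℂ) j : EuclideanSpace ℂ ι →L[ℂ] ℂ) z :=
        (PiLp.proj 2 (fun _ : ι => ℂ) j : EuclideanSpace ℂ ι →L[ℂ] ℂ).hasFDerivAt
      have h3 := (hasDerivAt_pow w (z j)).comp_hasFDerivAt z h2
      exact h3.smul_const _
    rw [(h1.restrictScalars ℝ).fderiv]
    simp
  obtain ⟨z₁, hz₁, hz₁Q, hz₁p⟩ : ∃ z₁ : EuclideanSpace ℂ ι, ‖z₁‖ < 2 ∧ ‖Q z₁‖ < r₀ ∧ (∀ j, z₁ j ≠ 0) := by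
    let γ : ℝ → EuclideanSpace ℂ ι := fun t => t • WithLp.toLp 2 (fun _ => (1:ℂ))
    have hγ : Continuous γ := continuous_id.smul continuous_const
    have hγ0 : γ 0 = 0 := by simp [γ]
    have hQ0' : Q 0 = 0 := by simp [Q, hw.ne']
    have e1 : ∀ᶠ t in nhds (0:ℝ), ‖γ t‖ < 2 :=
      hγ.norm.continuousAt.eventually (gt_mem_nhds (by simp [hγ0]))
    have e2 : ∀ᶠ t in nhds (0:ℝ), ‖Q (γ t)‖ < r₀ :=
      (hQs.continuous.comp hγ).norm.continuousAt.eventually (gt_mem_nhds (by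
        simp [hγ0, hQ0', hr₀]))
    obtain ⟨ε, hε, he⟩ := Metric.eventually_nhds_iff.1 (e1.and e2)
    obtain ⟨h1, h2⟩ := he (y := ε / 2) (by simp [abs_of_pos hε, hε])
    exact ⟨γ (ε / 2), h1, h2, fun j => by simp [γ, hε.ne']⟩
  have hpos1 : 0 < (fderiv ℝ (Θ ∘ Q) z₁).det := by
    rw [hfQ]
    refine mul_pos (hΘp _ hz₁Q) (lt_of_le_of_ne (hQ0 _) (Ne.symm ?_))
    have hinj : Function.Injective (fderiv ℝ Q z₁) := by
      rw [injective_iff_map_eq_zero]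
      intro v hv
      rw [hQd] at hv
      choose y hy using fun j => IsAlgClosed.exists_pow_nat_eq (w * z₁ j ^ (w - 1) * v j) hw
      by_contra hv0
      have hy0 : (WithLp.toLp 2 y : EuclideanSpace ℂ ι) ≠ 0 := by
        intro h
        apply hv0
        ext j
        have hyj : y j = 0 := by simpa using congrArg (fun u : EuclideanSpace ℂ ι => u j) h
        have h2 := hy j
        rw [hyj, zero_pow hw.ne'] at h2
        have h3 : (w * z₁ j ^ (w - 1) : ℂ) ≠ 0 :=
          mul_ne_zero (by exact_mod_cast hw.ne') (pow_ne_zero _ (hz₁p j))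
        simpa [h3] using h2.symm
      refine hQG _ hy0 0 le_rfl ?_
      rw [zero_smul, add_zero]
      simp only [Q]
      rw [← hv]
      exact Finset.sum_congr rfl fun j _ => by rw [← hy j]
    exact (LinearEquiv.isUnit_det' (LinearEquiv.ofInjectiveEndo
      (fderiv ℝ Q z₁ : EuclideanSpace ℂ ι →ₗ[ℝ] EuclideanSpace ℂ ι) hinj)).ne_zero
  have hcont : Continuous fun z => (fderiv ℝ (Θ ∘ Q) z).det :=
    ContinuousLinearMap.continuous_det.comp ((hΘs.comp hQs').continuous_fderiv (by simp))
  have hnn : ∀ z, 0 ≤ (fderiv ℝ (Θ ∘ Q) z).det := fun z => by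
    rw [hfQ]; exact mul_nonneg (hΘ0 _) (hQ0 _)
  have hposint : 0 < ∫ z in Metric.closedBall (0 : EuclideanSpace ℂ ι) 2, (fderiv ℝ (Θ ∘ Q) z).det := by
    rw [setIntegral_pos_iff_support_of_nonneg_ae (Filter.Eventually.of_forall hnn)
      (hcont.continuousOn.integrableOn_compact (isCompact_closedBall _ _))]
    have hU : IsOpen (Function.support (fun z => (fderiv ℝ (Θ ∘ Q) z).det) ∩
        Metric.ball (0 : EuclideanSpace ℂ ι) 2) := hcont.isOpen_support.inter Metric.isOpen_ball
    exact (hU.measure_pos volume ⟨z₁, hpos1.ne', by simpa using hz₁⟩).trans_le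
      (measure_mono (inter_subset_inter_right _ Metric.ball_subset_closedBall))
  exact hposint.ne hInt

/-- Weighted Borsuk–Ulam theorem for circle actions: fewer equations than variables, all of the same
weight `w`, have a common zero on an ellipsoid. The substitution `z_j ↦ z_j ^ (p_j)` (up to the
normalisation of the sphere) reduces it to the case where all the `p_j` are `1`. -/
theorem borsuk_ulam {ι κ : Type*} [Fintype ι] [Fintype κ]
    (hcard : Fintype.card κ < Fintype.card ι) (p : ι → ℕ) (hp : ∀ j, 0 < p j) {w : ℕ} (hw : 0 < w)
    (b : ι → ℝ) (hb : ∀ j, 0 < b j)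
    (f : (ι → ℂ) → (κ → ℂ)) (hf : Continuous f)
    (heq : ∀ (c : ℂ) z, ‖c‖ = 1 → f (fun j => c ^ p j * z j) = c ^ w • f z) :
    ∃ z, ∑ j, b j * ‖z j‖ ^ 2 = 1 ∧ f z = 0 := by
  classical
  by_contra! hne
  have hι : Nonempty ι := Fintype.card_pos_iff.1 (by omega)
  let q : EuclideanSpace ℂ ι → ℝ := fun z => ∑ j, b j * ‖z j ^ p j‖ ^ 2
  have hqc : Continuous q := by fun_prop
  have hq0 : ∀ z, 0 ≤ q z := fun z => Finset.sum_nonneg fun j _ => by have := hb j; positivity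
  have hqpos : ∀ z : EuclideanSpace ℂ ι, ‖z‖ = 1 → 0 < q z := by
    intro z hz
    rcases (hq0 z).lt_or_eq with h | h
    · exact h
    · exfalso
      have h1 := (Finset.sum_eq_zero_iff_of_nonneg
        (fun j _ => by have := hb j; positivity)).1 h.symm
      have : z = 0 := by
        ext j
        have := h1 j (Finset.mem_univ j)
        simpa [(hb j).ne', (hp j).ne'] using this
      simp [this] at hz
  obtain ⟨δ, hδ, hδq⟩ : ∃ δ > 0, ∀ z : EuclideanSpace ℂ ι, ‖z‖ = 1 → δ ≤ q z := by
    have hcpt := isCompact_sphere (0 : EuclideanSpace ℂ ι) 1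
    have hne' : (Metric.sphere (0 : EuclideanSpace ℂ ι) 1).Nonempty :=
      ⟨EuclideanSpace.single hι.some 1, by simp⟩
    obtain ⟨z, hz, hzm⟩ := hcpt.exists_isMinOn hne' hqc.continuousOn
    exact ⟨q z, hqpos z (by simpa using hz), fun y hy => hzm (by simpa using hy)⟩
  let F : EuclideanSpace ℂ ι → (κ → ℂ) := fun z =>
    f (fun j => (((Real.sqrt (max (q z) δ))⁻¹ : ℝ) : ℂ) * z j ^ p j)
  have hFc : Continuous F := by
    refine hf.comp (continuous_pi fun j => ?_)
    refine (Complex.continuous_ofReal.comp ((Continuous.sqrt (hqc.max continuous_const)).inv₀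
      fun z => ?_)).mul (by fun_prop)
    exact (Real.sqrt_pos.2 (lt_max_of_lt_right hδ)).ne'
  have hFe : ∀ (c : ℂ) z, ‖c‖ = 1 → F (c • z) = c ^ w • F z := by
    intro c z hc
    have hq : q (c • z) = q z := by simp [q, hc]
    simp only [F, hq]
    rw [← heq c _ hc]
    congr 1
    ext j
    simp
    ring
  have hF0 : ∀ z, ‖z‖ = 1 → F z ≠ 0 := by
    intro z hz
    apply hne
    have h1 := hδq z hz
    have h2 := hqpos z hz
    have h3 : ∀ j, b j * ‖(((Real.sqrt (max (q z) δ))⁻¹ : ℝ) : ℂ) * z j ^ p j‖ ^ 2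
        = (q z)⁻¹ * (b j * ‖z j ^ p j‖ ^ 2) := by
      intro j
      rw [max_eq_left h1, norm_mul, mul_pow, Complex.norm_real, norm_inv, inv_pow, Real.norm_eq_abs,
        sq_abs, Real.sq_sqrt h2.le]
      ring
    rw [Finset.sum_congr rfl fun j _ => h3 j, ← Finset.mul_sum]
    exact inv_mul_cancel₀ h2.ne'
  obtain ⟨F₁, hs, he, h0⟩ := exists_smooth_equivariant w F hFc hFe hF0
  obtain ⟨e⟩ : Nonempty (κ ↪ ι) := Function.Embedding.nonempty_of_card_le hcard.le
  obtain ⟨j₀, hj₀⟩ : ∃ j₀, j₀ ∉ Set.range e := by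
    by_contra! h
    have : Function.Surjective e := h
    exact absurd (Fintype.card_le_of_surjective e this) (by omega)
  let G : EuclideanSpace ℂ ι → EuclideanSpace ℂ ι := fun z =>
    WithLp.toLp 2 (Function.extend e (F₁ z) 0)
  have hGa : ∀ z x, G z (e x) = F₁ z x := fun z x => e.injective.extend_apply _ _ _
  have hGb : ∀ z j, j ∉ Set.range e → G z j = 0 := fun z j hj =>
    Function.extend_apply' _ _ _ hj
  obtain ⟨z, hz, hGz⟩ := equivariant_smooth_zero hw j₀ G (by
      rw [contDiff_piLp 2]
      intro j
      by_cases hj : j ∈ Set.range e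
      · obtain ⟨x, rfl⟩ := hj
        simp only [hGa]
        exact contDiff_pi.1 hs x
      · simp only [hGb _ j hj]
        exact contDiff_const) (by
      intro c z hc
      ext j
      by_cases hj : j ∈ Set.range e
      · obtain ⟨x, rfl⟩ := hj
        simp [hGa, he c z hc]
      · simp [hGb _ j hj]) (fun z => hGb z j₀ hj₀)
  refine h0 z hz (funext fun x => ?_)
  rw [← hGa, hGz]
  simp

/-! ### Fourier series on the circle -/

/-- The character `s ↦ exp (2πis)`. -/
def ex (s : ℝ) : ℂ := Complex.exp (2 * π * s * Complex.I)

theorem ex_zero : ex 0 = 1 := by simp [ex]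

theorem ex_add (s t : ℝ) : ex (s + t) = ex s * ex t := by
  rw [ex, ex, ex, ← Complex.exp_add]; push_cast; ring_nf

theorem norm_ex (s : ℝ) : ‖ex s‖ = 1 := by
  rw [ex]
  exact_mod_cast Complex.norm_exp_ofReal_mul_I (2 * π * s)

theorem ex_ne_zero (s : ℝ) : ex s ≠ 0 := Complex.exp_ne_zero _

theorem ex_neg (s : ℝ) : ex (-s) = (ex s)⁻¹ := by
  rw [ex, ex, ← Complex.exp_neg]; push_cast; ring_nf

theorem conj_ex (s : ℝ) : (starRingEnd ℂ) (ex s) = ex (-s) := by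
  rw [ex_neg, ← Complex.inv_eq_conj (norm_ex s)]

theorem ex_int_mul (m : ℤ) (s : ℝ) : ex (m * s) = ex s ^ m := by
  rw [ex, ex, ← Complex.exp_int_mul]; push_cast; ring_nf

theorem ex_intCast (m : ℤ) : ex m = 1 := by
  rw [ex, Complex.exp_eq_one_iff]
  exact ⟨m, by push_cast; ring⟩

theorem ex_one : ex 1 = 1 := by simpa using ex_intCast 1

theorem exists_ex_eq {u : ℂ} (hu : ‖u‖ = 1) : ∃ θ, ex θ = u := by
  refine ⟨Complex.arg u / (2 * π), ?_⟩
  have h := Complex.norm_mul_exp_arg_mul_I u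
  rw [hu] at h
  rw [ex]
  have : (2 * (π:ℂ) * ((Complex.arg u / (2 * π) : ℝ) : ℂ)) = Complex.arg u := by
    have := Complex.ofReal_ne_zero.2 Real.pi_ne_zero
    push_cast
    field_simp
  rw [this]
  simpa using h

theorem hasDerivAt_ex (s : ℝ) : HasDerivAt ex (2 * π * Complex.I * ex s) s := by
  have h1 : HasDerivAt (fun s : ℝ => 2 * π * (s:ℂ) * Complex.I) (2 * π * Complex.I) s := by
    have := ((Complex.ofRealCLM.hasDerivAt (x := s)).const_mul (2 * (π:ℂ))).mul_const Complex.I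
    simpa using this
  exact (mul_comm _ (2 * π * Complex.I)) ▸ h1.cexp

theorem hasDerivAt_ex_mul (m : ℝ) (s : ℝ) :
    HasDerivAt (fun t => ex (m * t)) (2 * π * m * Complex.I * ex (m * s)) s := by
  have h := (hasDerivAt_ex (m * s)).scomp s ((hasDerivAt_id s).const_mul m)
  convert! h using 1
  simp; ring

@[fun_prop]
theorem continuous_ex : Continuous ex := by unfold ex; fun_prop

theorem integral_ex (m : ℤ) : ∫ t in (0:ℝ)..1, ex (m * t) = if m = 0 then 1 else 0 := by
  split_ifs with h
  · simp [h, ex_zero]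
  · have hm : (2 * π * m * Complex.I : ℂ) ≠ 0 := by
      have := Complex.ofReal_ne_zero.2 Real.pi_ne_zero
      have : (m:ℂ) ≠ 0 := by exact_mod_cast h
      simp [Complex.I_ne_zero, h]
    have h1 := intervalIntegral.integral_eq_sub_of_hasDerivAt (a := 0) (b := 1)
      (fun t _ => hasDerivAt_ex_mul (m:ℝ) t) (by apply Continuous.intervalIntegrable; fun_prop)
    rw [intervalIntegral.integral_const_mul, mul_one, mul_zero, ex_zero, ex_intCast, sub_self] at h1
    have hm' : (2 * π * (m:ℝ) * Complex.I : ℂ) ≠ 0 := by exact_mod_cast hm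
    exact (mul_eq_zero.1 h1).resolve_left hm'

/-- The `m`-th Fourier coefficient of `f` on `[0,1]`. -/
def ft (f : ℝ → ℂ) (m : ℤ) : ℂ := ∫ t in (0:ℝ)..1, f t * ex (-(m * t))

/-- The trigonometric polynomial with coefficients `b` on the finite set `F`. -/
def tp (F : Finset ℤ) (b : ℤ → ℂ) (t : ℝ) : ℂ := ∑ m ∈ F, b m * ex (m * t)

@[fun_prop]
theorem continuous_tp (F : Finset ℤ) (b : ℤ → ℂ) : Continuous (tp F b) := by unfold tp; fun_prop

theorem integral_conj_mul_tp (F : Finset ℤ) (b : ℤ → ℂ) (f : ℝ → ℂ) (hf : Continuous f) :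
    ∫ t in (0:ℝ)..1, (starRingEnd ℂ) (f t) * tp F b t = ∑ m ∈ F, (starRingEnd ℂ) (ft f m) * b m := by
  have h1 : ∀ t, (starRingEnd ℂ) (f t) * tp F b t =
      ∑ m ∈ F, (starRingEnd ℂ) (f t * ex (-(m * t))) * b m := by
    intro t
    simp only [tp, Finset.mul_sum, map_mul, conj_ex, neg_neg]
    exact Finset.sum_congr rfl fun m _ => by ring
  simp only [h1]
  rw [intervalIntegral.integral_finsetSum]
  · refine Finset.sum_congr rfl fun m _ => ?_
    rw [intervalIntegral.integral_mul_const, ft]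
    congr 1
    exact intervalIntegral.intervalIntegral_conj
  · intro m _
    apply Continuous.intervalIntegrable
    have := Complex.continuous_conj
    fun_prop

theorem ft_tp (F : Finset ℤ) (b : ℤ → ℂ) (m : ℤ) (hm : m ∈ F) : ft (tp F b) m = b m := by
  have h1 : ∀ t, tp F b t * ex (-(m * t)) = ∑ j ∈ F, b j * ex (((j - m : ℤ) : ℝ) * t) := by
    intro t
    simp only [tp, Finset.sum_mul, mul_assoc, ← ex_add]
    refine Finset.sum_congr rfl fun j _ => ?_
    push_cast; ring_nf
  simp only [ft, h1]
  rw [intervalIntegral.integral_finsetSum fun j _ => by apply Continuous.intervalIntegrable; fun_prop]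
  simp only [intervalIntegral.integral_const_mul, integral_ex, sub_eq_zero]
  simp [hm]

theorem integral_norm_sq_tp (F : Finset ℤ) (b : ℤ → ℂ) :
    ∫ t in (0:ℝ)..1, ‖tp F b t‖ ^ 2 = ∑ m ∈ F, ‖b m‖ ^ 2 := by
  have h := integral_conj_mul_tp F b (tp F b) (continuous_tp F b)
  have h2 : ∀ t, (starRingEnd ℂ) (tp F b t) * tp F b t = ((‖tp F b t‖ ^ 2 : ℝ) : ℂ) := fun t => by
    rw [Complex.conj_mul']; push_cast; rfl
  simp only [h2] at h
  rw [intervalIntegral.integral_ofReal] at h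
  have h3 : ∑ m ∈ F, (starRingEnd ℂ) (ft (tp F b) m) * b m = ((∑ m ∈ F, ‖b m‖ ^ 2 : ℝ) : ℂ) := by
    push_cast
    refine Finset.sum_congr rfl fun m hm => ?_
    rw [ft_tp F b m hm, Complex.conj_mul']
  rw [h3] at h
  exact_mod_cast h

theorem re_integral_conj_mul_tp (F : Finset ℤ) (b : ℤ → ℂ) (f : ℝ → ℂ) (hf : Continuous f) :
    ∫ t in (0:ℝ)..1, ((starRingEnd ℂ) (f t) * tp F b t).re
      = ∑ m ∈ F, ((starRingEnd ℂ) (ft f m) * b m).re := by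
  rw [← Complex.re_sum, ← integral_conj_mul_tp F b f hf]
  have := Complex.reCLM.intervalIntegral_comp_comm (μ := volume) (a := 0) (b := 1)
    (f := fun t => (starRingEnd ℂ) (f t) * tp F b t) (by
      apply Continuous.intervalIntegrable
      have := Complex.continuous_conj
      fun_prop)
  simpa using this

/-- Bessel's inequality. -/
theorem bessel (F : Finset ℤ) (f : ℝ → ℂ) (hf : Continuous f) :
    ∑ m ∈ F, ‖ft f m‖ ^ 2 ≤ ∫ t in (0:ℝ)..1, ‖f t‖ ^ 2 := by
  have h1 := re_integral_conj_mul_tp F (ft f) f hf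
  have h2 := integral_norm_sq_tp F (ft f)
  have h3 : ∑ m ∈ F, ((starRingEnd ℂ) (ft f m) * ft f m).re = ∑ m ∈ F, ‖ft f m‖ ^ 2 := by
    refine Finset.sum_congr rfl fun m _ => ?_
    rw [Complex.conj_mul']; exact_mod_cast Complex.ofReal_re _
  have h4 : ∫ t in (0:ℝ)..1, ((starRingEnd ℂ) (f t) * tp F (ft f) t).re ≤
      ∫ t in (0:ℝ)..1, ((1 / 2) * ‖f t‖ ^ 2 + (1 / 2) * ‖tp F (ft f) t‖ ^ 2) := by
    have := Complex.continuous_conj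
    refine intervalIntegral.integral_mono_on zero_le_one ?_ ?_ fun t _ => ?_
    · apply Continuous.intervalIntegrable; fun_prop
    · apply Continuous.intervalIntegrable; fun_prop
    · refine (Complex.re_le_norm _).trans ?_
      rw [norm_mul, RCLike.norm_conj]
      nlinarith [sq_nonneg (‖f t‖ - ‖tp F (ft f) t‖)]
  rw [intervalIntegral.integral_add, intervalIntegral.integral_const_mul,
    intervalIntegral.integral_const_mul, h2, h1, h3] at h4
  · linarith
  · apply Continuous.intervalIntegrable; fun_prop
  · apply Continuous.intervalIntegrable; fun_prop

/-! ### The truncated action functional and its discrete gradient flow -/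

/-- A Hamiltonian `H` on `ℂ^ι` with gradient `g`, a one-sided second-order Taylor estimate, and
which is, up to a bounded error in the gradient, quadratic and non-resonant at infinity. -/
structure Ham (ι : Type*) [Fintype ι] where
  /-- the Hamiltonian -/
  H : (ι → ℂ) → ℝ
  /-- its gradient -/
  g : (ι → ℂ) → (ι → ℂ)
  /-- the Taylor constant -/
  C : ℝ
  /-- the frequencies at infinity -/
  d : ι → ℝ
  /-- the gradient error at infinity -/
  Cinf : ℝ
  contH : Continuous H
  contG : Continuous g
  C_nonneg : 0 ≤ C
  taylor : ∀ z u, H (z + u) ≤ H z + ∑ i, ((starRingEnd ℂ) (g z i) * u i).re + C * ∑ i, ‖u i‖ ^ 2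
  d_ne : ∀ i (m : ℤ), d i ≠ m
  near : ∀ z i, ‖g z i - ((2 * π * d i : ℝ) : ℂ) * z i‖ ≤ Cinf

/-- The modes `-N, …, N`. -/
def Mo (N : ℕ) : Finset ℤ := Finset.Icc (-(N:ℤ)) N

theorem mem_Mo {N : ℕ} {m : ℤ} : m ∈ Mo N ↔ -(N:ℤ) ≤ m ∧ m ≤ N := Finset.mem_Icc

/-- The loop in `ℂ^ι` whose Fourier coefficients are the `c i m`, `|m| ≤ N`. -/
def ev {ι : Type*} (N : ℕ) (c : ι → ℤ → ℂ) (t : ℝ) : ι → ℂ := fun i => tp (Mo N) (c i) t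

namespace Ham

variable {ι : Type*} [Fintype ι] (D : Ham ι) (N : ℕ) (c : ι → ℤ → ℂ)

/-- The action functional on loops with modes `|m| ≤ N`. -/
def Act : ℝ := ∑ i, ∑ m ∈ Mo N, π * m * ‖c i m‖ ^ 2 - ∫ t in (0:ℝ)..1, D.H (ev N c t)

/-- The Fourier coefficients of the gradient of the action functional. -/
def Grd (i : ι) (m : ℤ) : ℂ := ((2 * π * m : ℝ) : ℂ) * c i m - ft (fun t => D.g (ev N c t) i) m

/-- The squared norm of the gradient in the modes `|m| ≤ N`. -/
def gsq : ℝ := ∑ i, ∑ m ∈ Mo N, ‖D.Grd N c i m‖ ^ 2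

/-- The step length of the discrete gradient flow. -/
def tau : ℝ := 1 / (2 * (π * N + D.C + 1))

/-- One step of the discrete gradient flow of the action functional. -/
def eta : ι → ℤ → ℂ := fun i m => c i m + ((D.tau N : ℝ) : ℂ) * D.Grd N c i m

end Ham

@[fun_prop]
theorem continuous_ev {ι : Type*} (N : ℕ) (c : ι → ℤ → ℂ) : Continuous (ev N c) := by
  unfold ev; fun_prop

theorem ev_add_smul {ι : Type*} (N : ℕ) (c b : ι → ℤ → ℂ) (s : ℂ) (t : ℝ) :
    ev N (fun i m => c i m + s * b i m) t = ev N c t + fun i => s * ev N b t i := by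
  ext i
  simp only [ev, tp, Pi.add_apply, Finset.mul_sum, ← Finset.sum_add_distrib]
  exact Finset.sum_congr rfl fun m _ => by ring

namespace Ham

variable {ι : Type*} [Fintype ι] (D : Ham ι) (N : ℕ) (c : ι → ℤ → ℂ)

theorem tau_pos : 0 < D.tau N := by
  have := D.C_nonneg
  have := Real.pi_pos
  unfold tau; positivity

theorem gsq_nonneg : 0 ≤ D.gsq N c := by unfold gsq; positivity

theorem continuous_g_ev (i : ι) : Continuous fun t => D.g (ev N c t) i := by
  have := D.contG
  fun_prop

/-- One step of the discrete gradient flow raises the action by at least `τ / 2` times the squared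
norm of the gradient. -/
theorem act_eta : D.Act N c + D.tau N / 2 * D.gsq N c ≤ D.Act N (D.eta N c) := by
  set s := D.tau N with hs
  have hs0 : 0 < s := D.tau_pos N
  have hC := D.C_nonneg
  have hcg := D.continuous_g_ev N c
  have hcH := D.contH
  have hconj := Complex.continuous_conj
  set G := D.Grd N c with hG
  -- the integral term
  have h1 : ∫ t in (0:ℝ)..1, D.H (ev N (D.eta N c) t) ≤
      (∫ t in (0:ℝ)..1, D.H (ev N c t))
      + s * ∑ i, ∑ m ∈ Mo N, ((starRingEnd ℂ) (ft (fun t => D.g (ev N c t) i) m) * G i m).re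
      + D.C * s ^ 2 * D.gsq N c := by
    have e1 : ∀ i, ∑ m ∈ Mo N, ((starRingEnd ℂ) (ft (fun t => D.g (ev N c t) i) m) * G i m).re
        = ∫ t in (0:ℝ)..1, ((starRingEnd ℂ) (D.g (ev N c t) i) * ev N G t i).re := fun i =>
      (re_integral_conj_mul_tp (Mo N) (G i) _ (hcg i)).symm
    have e2 : D.gsq N c = ∑ i, ∫ t in (0:ℝ)..1, ‖ev N G t i‖ ^ 2 :=
      Finset.sum_congr rfl fun i _ => (integral_norm_sq_tp (Mo N) (G i)).symm
    have c1 : ∀ i, Continuous fun t => ((starRingEnd ℂ) (D.g (ev N c t) i) * ev N G t i).re := by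
      intro i
      have := hcg i
      fun_prop
    rw [e2, Finset.sum_congr rfl fun i _ => e1 i,
      ← intervalIntegral.integral_finsetSum fun i _ => (c1 i).intervalIntegrable _ _,
      ← intervalIntegral.integral_finsetSum fun i _ => by apply Continuous.intervalIntegrable; fun_prop,
      ← intervalIntegral.integral_const_mul, ← intervalIntegral.integral_const_mul,
      ← intervalIntegral.integral_add, ← intervalIntegral.integral_add]
    · refine intervalIntegral.integral_mono_on zero_le_one ?_ ?_ fun t _ => ?_
      · apply Continuous.intervalIntegrable; fun_prop
      · apply Continuous.intervalIntegrable; fun_prop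
      · have := D.taylor (ev N c t) (fun i => (s:ℂ) * ev N G t i)
        rw [← ev_add_smul] at this
        refine this.trans (le_of_eq ?_)
        congr 1
        · congr 1
          rw [Finset.mul_sum]
          refine Finset.sum_congr rfl fun i _ => ?_
          rw [mul_left_comm, Complex.re_ofReal_mul]
        · rw [mul_assoc]
          congr 1
          rw [Finset.mul_sum]
          refine Finset.sum_congr rfl fun i _ => ?_
          rw [norm_mul, mul_pow, Complex.norm_real, Real.norm_eq_abs, sq_abs]
    all_goals apply Continuous.intervalIntegrable; fun_prop
  -- the quadratic term
  have h2 : ∑ i, ∑ m ∈ Mo N, π * m * ‖c i m‖ ^ 2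
      + s * ∑ i, ∑ m ∈ Mo N, ((starRingEnd ℂ) (((2 * π * m : ℝ) : ℂ) * c i m) * G i m).re
      - s ^ 2 * (π * N) * D.gsq N c ≤ ∑ i, ∑ m ∈ Mo N, π * m * ‖D.eta N c i m‖ ^ 2 := by
    simp only [gsq, Finset.mul_sum, ← Finset.sum_add_distrib, ← Finset.sum_sub_distrib]
    refine Finset.sum_le_sum fun i _ => Finset.sum_le_sum fun m hm => ?_
    have hm1 : -(N:ℝ) ≤ m := by exact_mod_cast (mem_Mo.1 hm).1
    have e : ‖D.eta N c i m‖ ^ 2 = ‖c i m‖ ^ 2 + 2 * s * ((starRingEnd ℂ) (c i m) * G i m).re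
        + s ^ 2 * ‖G i m‖ ^ 2 := by
      simp only [eta, ← hs, ← hG, Complex.sq_norm, Complex.normSq_apply]
      simp
      ring
    rw [e]
    have e2 : ((starRingEnd ℂ) (((2 * π * m : ℝ) : ℂ) * c i m) * G i m).re
        = 2 * π * m * ((starRingEnd ℂ) (c i m) * G i m).re := by
      rw [map_mul, Complex.conj_ofReal, mul_assoc, Complex.re_ofReal_mul]
    rw [e2]
    have : 0 ≤ π * ((N:ℝ) + m) * (s ^ 2 * ‖G i m‖ ^ 2) := by
      have := Real.pi_pos
      have : 0 ≤ (N:ℝ) + m := by linarith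
      positivity
    linarith
  have h3 : ∑ i, ∑ m ∈ Mo N, ((starRingEnd ℂ) (((2 * π * m : ℝ) : ℂ) * c i m) * G i m).re
      - ∑ i, ∑ m ∈ Mo N, ((starRingEnd ℂ) (ft (fun t => D.g (ev N c t) i) m) * G i m).re
      = D.gsq N c := by
    simp only [gsq, ← Finset.sum_sub_distrib]
    refine Finset.sum_congr rfl fun i _ => Finset.sum_congr rfl fun m _ => ?_
    rw [← Complex.sub_re, ← sub_mul, ← map_sub]
    change ((starRingEnd ℂ) (G i m) * G i m).re = _
    rw [Complex.conj_mul']; exact_mod_cast Complex.ofReal_re _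
  have h4 : s * (π * N + D.C) ≤ 1 / 2 := by
    rw [hs, tau, one_div, inv_mul_le_iff₀ (by have := Real.pi_pos; positivity)]
    linarith
  have h5 := D.gsq_nonneg N c
  have h6 : s ^ 2 * (π * N) * D.gsq N c + D.C * s ^ 2 * D.gsq N c ≤ s / 2 * D.gsq N c := by
    have : 0 ≤ s * D.gsq N c := by positivity
    nlinarith
  unfold Act
  have h7 := congrArg (s * ·) h3
  simp only [mul_sub] at h7
  linarith

end Ham

/-- The circle action on Fourier coefficients corresponding to shifting the time of a loop. -/
def rot {ι : Type*} (u : ℂ) (c : ι → ℤ → ℂ) : ι → ℤ → ℂ := fun i m => u ^ m * c i m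

theorem ev_rot {ι : Type*} (N : ℕ) (θ : ℝ) (c : ι → ℤ → ℂ) (t : ℝ) :
    ev N (rot (ex θ) c) t = ev N c (t + θ) := by
  ext i
  simp only [ev, tp, rot]
  refine Finset.sum_congr rfl fun m _ => ?_
  rw [mul_add, ex_add, ← ex_int_mul]
  ring

theorem ev_periodic {ι : Type*} (N : ℕ) (c : ι → ℤ → ℂ) (t : ℝ) : ev N c (t + 1) = ev N c t := by
  ext i
  simp only [ev, tp]
  refine Finset.sum_congr rfl fun m _ => ?_
  rw [mul_add, ex_add, mul_one, ex_intCast, mul_one]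

theorem integral_shift {E : Type*} [NormedAddCommGroup E] [NormedSpace ℝ E] (f : ℝ → E)
    (hf : Function.Periodic f 1) (θ : ℝ) : ∫ t in (0:ℝ)..1, f (t + θ) = ∫ t in (0:ℝ)..1, f t := by
  rw [intervalIntegral.integral_comp_add_right]
  have := hf.intervalIntegral_add_eq θ 0
  rw [zero_add] at this
  rw [zero_add, add_comm, this]

theorem continuous_integral_param {X : Type*} [TopologicalSpace X] {f : X → ℝ → ℂ}
    (hf : Continuous (Function.uncurry f)) : Continuous fun x => ∫ t in (0:ℝ)..1, f x t :=
  intervalIntegral.continuous_parametric_intervalIntegral_of_continuous' hf 0 1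

theorem continuous_ev' {ι : Type*} (N : ℕ) :
    Continuous fun p : (ι → ℤ → ℂ) × ℝ => ev N p.1 p.2 := by
  unfold ev tp; fun_prop

namespace Ham

variable {ι : Type*} [Fintype ι] (D : Ham ι) (N : ℕ)

theorem act_rot (u : ℂ) (hu : ‖u‖ = 1) (c : ι → ℤ → ℂ) : D.Act N (rot u c) = D.Act N c := by
  obtain ⟨θ, rfl⟩ := exists_ex_eq hu
  unfold Act
  congr 1
  · simp [rot, norm_ex]
  · simp only [ev_rot]
    exact integral_shift (fun t => D.H (ev N c t)) (fun t => by simp [ev_periodic]) θ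

theorem grd_rot (u : ℂ) (hu : ‖u‖ = 1) (c : ι → ℤ → ℂ) :
    D.Grd N (rot u c) = rot u (D.Grd N c) := by
  obtain ⟨θ, rfl⟩ := exists_ex_eq hu
  ext i m
  have h1 : ft (fun t => D.g (ev N (rot (ex θ) c) t) i) m
      = ex θ ^ m * ft (fun t => D.g (ev N c t) i) m := by
    simp only [ft, ev_rot]
    rw [← integral_shift (fun t => D.g (ev N c t) i * ex (-(m * t))) (fun t => by
      simp only [ev_periodic]
      rw [mul_add, neg_add, ex_add, mul_one, ex_neg m, ex_intCast]; simp) θ,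
      ← intervalIntegral.integral_const_mul]
    congr 1
    ext t
    rw [mul_add, neg_add, ex_add, ← ex_int_mul, ex_neg (m * θ)]
    have := mul_inv_cancel₀ (ex_ne_zero (m * θ))
    linear_combination (-D.g (ev N c (t + θ)) i * ex (-(m * t))) * this
  simp only [Grd, h1, rot]
  ring

theorem eta_rot (u : ℂ) (hu : ‖u‖ = 1) (c : ι → ℤ → ℂ) :
    D.eta N (rot u c) = rot u (D.eta N c) := by
  ext i m
  simp only [eta, D.grd_rot N u hu, rot]
  ring

theorem eta_iterate_rot (u : ℂ) (hu : ‖u‖ = 1) (j : ℕ) (c : ι → ℤ → ℂ) :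
    (D.eta N)^[j] (rot u c) = rot u ((D.eta N)^[j] c) := by
  induction j with
  | zero => rfl
  | succ j ih => rw [Function.iterate_succ_apply', ih, D.eta_rot N u hu, Function.iterate_succ_apply']

theorem continuous_act : Continuous (D.Act N) := by
  unfold Act
  refine Continuous.sub (by fun_prop) ?_
  exact intervalIntegral.continuous_parametric_intervalIntegral_of_continuous'
    (f := fun c t => D.H (ev N c t)) (D.contH.comp (continuous_ev' N)) 0 1

theorem continuous_eta : Continuous (D.eta N) := by
  refine continuous_pi fun i => continuous_pi fun m => ?_
  unfold eta Grd
  refine Continuous.add (by fun_prop) (continuous_const.mul (Continuous.sub (by fun_prop) ?_))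
  refine continuous_integral_param ?_
  refine Continuous.mul ?_ (by fun_prop)
  exact (continuous_apply i).comp (D.contG.comp (continuous_ev' N))

theorem continuous_eta_iterate (j : ℕ) : Continuous ((D.eta N)^[j]) :=
  (D.continuous_eta N).iterate j

theorem act_le_eta (c : ι → ℤ → ℂ) : D.Act N c ≤ D.Act N (D.eta N c) := by
  have := D.act_eta N c
  have h2 := D.gsq_nonneg N c
  have h3 := D.tau_pos N
  nlinarith [mul_nonneg h3.le h2]

theorem act_iterate_le (c : ι → ℤ → ℂ) {j j' : ℕ} (h : j ≤ j') :
    D.Act N ((D.eta N)^[j] c) ≤ D.Act N ((D.eta N)^[j'] c) := by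
  induction j', h using Nat.le_induction with
  | base => exact le_rfl
  | succ j' _ ih =>
    rw [Function.iterate_succ_apply']
    exact ih.trans (D.act_le_eta N _)

theorem act_le_iterate (c : ι → ℤ → ℂ) (j : ℕ) : D.Act N c ≤ D.Act N ((D.eta N)^[j] c) := by
  have h := D.act_iterate_le N c (Nat.zero_le j)
  rwa [Function.iterate_zero_apply] at h

theorem norm_grd_le_sqrt {i : ι} {m : ℤ} (hm : m ∈ Mo N) (c : ι → ℤ → ℂ) :
    ‖D.Grd N c i m‖ ≤ Real.sqrt (D.gsq N c) := by
  refine Real.le_sqrt_of_sq_le ?_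
  refine le_trans ?_ (Finset.single_le_sum (f := fun i => ∑ m ∈ Mo N, ‖D.Grd N c i m‖ ^ 2)
    (fun i _ => by positivity) (Finset.mem_univ i))
  exact Finset.single_le_sum (f := fun m => ‖D.Grd N c i m‖ ^ 2)
    (fun i _ => by positivity) hm

/-- If the gradient is bounded below on the slab `v ≤ Act ≤ v'`, then finitely many steps of the
gradient flow lift the superlevel `v` to the superlevel `v'`. -/
theorem exists_push {v v' β : ℝ} (hβ : 0 < β)
    (h : ∀ c, v ≤ D.Act N c → D.Act N c ≤ v' → β ^ 2 ≤ D.gsq N c) :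
    ∃ I, ∀ c, v ≤ D.Act N c → v' ≤ D.Act N ((D.eta N)^[I] c) := by
  have hτ := D.tau_pos N
  obtain ⟨I, hI⟩ := exists_nat_gt ((v' - v) / (D.tau N / 2 * β ^ 2))
  rw [div_lt_iff₀ (by positivity)] at hI
  refine ⟨I, fun c hc => ?_⟩
  by_contra! hlt
  have key : ∀ j ≤ I, v + j * (D.tau N / 2 * β ^ 2) ≤ D.Act N ((D.eta N)^[j] c) := by
    intro j hj
    induction j with
    | zero => simpa using hc
    | succ j ih =>
      have h1 := ih (by omega)
      rw [Function.iterate_succ_apply']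
      have h2 := D.act_eta N ((D.eta N)^[j] c)
      have h3 := h _ (hc.trans (D.act_le_iterate N c j)) ((D.act_iterate_le N c (by omega : j ≤ I)).trans hlt.le)
      have h4 := mul_le_mul_of_nonneg_left h3 (by positivity : 0 ≤ D.tau N / 2)
      push_cast
      linarith
  have := key I le_rfl
  linarith

/-- The Lusternik–Schnirelmann form of `exists_push`: near-critical points in the slab have large
coefficient in the mode `(i, l)`, and starting points with vanishing coefficient cannot
reach them. -/
theorem exists_push_of_coeff {v v' β γ : ℝ} (hβ : 0 < β) {i : ι} {l : ℤ} (hl : l ∈ Mo N)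
    (hγ : 2 * (v' - v) < β * γ)
    (h : ∀ c, v ≤ D.Act N c → D.Act N c ≤ v' → D.gsq N c < β ^ 2 → γ ≤ ‖c i l‖) :
    ∃ I, ∀ c, c i l = 0 → v ≤ D.Act N c → v' ≤ D.Act N ((D.eta N)^[I] c) := by
  have hτ := D.tau_pos N
  obtain ⟨I, hI⟩ := exists_nat_gt ((v' - v) / (D.tau N / 2 * β ^ 2))
  rw [div_lt_iff₀ (by positivity)] at hI
  refine ⟨I, fun c hc0 hc => ?_⟩
  by_contra! hlt
  have key : ∀ j ≤ I, v + j * (D.tau N / 2 * β ^ 2) ≤ D.Act N ((D.eta N)^[j] c) ∧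
      β * ‖(D.eta N)^[j] c i l‖ ≤ 2 * (D.Act N ((D.eta N)^[j] c) - v) := by
    intro j hj
    induction j with
    | zero => simp [hc0]; linarith
    | succ j ih =>
      obtain ⟨h1, h1'⟩ := ih (by omega)
      rw [Function.iterate_succ_apply']
      set b := (D.eta N)^[j] c with hb
      have h2 := D.act_eta N b
      have hv' : D.Act N b ≤ v' := (D.act_iterate_le N c (by omega : j ≤ I)).trans hlt.le
      have h3 : β ^ 2 ≤ D.gsq N b := by
        by_contra! hcon
        have := h b (hc.trans (D.act_le_iterate N c j)) hv' hcon
        nlinarith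
      have h4 := mul_le_mul_of_nonneg_left h3 (by positivity : 0 ≤ D.tau N / 2)
      refine ⟨by push_cast; linarith, ?_⟩
      have h5 := D.norm_grd_le_sqrt N (i := i) hl b
      have h6 : ‖D.eta N b i l‖ ≤ ‖b i l‖ + D.tau N * Real.sqrt (D.gsq N b) := by
        refine (norm_add_le _ _).trans ?_
        rw [norm_mul, Complex.norm_real, Real.norm_of_nonneg hτ.le]
        gcongr
      have h7 : β * Real.sqrt (D.gsq N b) ≤ D.gsq N b := by
        have h8 : β ≤ Real.sqrt (D.gsq N b) := Real.le_sqrt_of_sq_le h3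
        nlinarith [Real.sq_sqrt (D.gsq_nonneg N b), Real.sqrt_nonneg (D.gsq N b)]
      have h8 := mul_le_mul_of_nonneg_left h7 hτ.le
      have h9 := mul_le_mul_of_nonneg_left h6 hβ.le
      nlinarith
  have := (key I le_rfl).1
  linarith

end Ham

/-! ### Compactness: from almost critical points to closed orbits -/

/-- Uniform invertibility of `m - d` on the modes `m ∈ ℤ` when `d` is not an integer; with
non-resonant slopes at infinity, it bounds almost critical points. -/
theorem exists_nonresonance (d : ℝ) (hd : ∀ m : ℤ, d ≠ m) :
    ∃ δ > 0, ∀ m : ℤ, δ * (1 + (m:ℝ) ^ 2) ≤ ((m:ℝ) - d) ^ 2 := by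
  obtain ⟨ε, hε, hεm⟩ : ∃ ε > 0, ∀ m : ℤ, ε ≤ |(m:ℝ) - d| := by
    have h1 : (⌊d⌋ : ℝ) < d := lt_of_le_of_ne (Int.floor_le d) (fun h => hd _ h.symm)
    have h2 := Int.lt_floor_add_one d
    refine ⟨min (d - ⌊d⌋) (⌊d⌋ + 1 - d), lt_min (by linarith) (by linarith), fun m => ?_⟩
    rcases le_or_gt m ⌊d⌋ with h | h
    · have : (m:ℝ) ≤ ⌊d⌋ := by exact_mod_cast h
      exact (min_le_left _ _).trans (le_trans (by linarith) (neg_le_abs _))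
    · have : (⌊d⌋:ℝ) + 1 ≤ m := by exact_mod_cast h
      exact (min_le_right _ _).trans (le_trans (by linarith) (le_abs_self _))
  refine ⟨((1 + 2 * d ^ 2) / ε ^ 2 + 2)⁻¹, by positivity, fun m => ?_⟩
  rw [inv_mul_le_iff₀ (by positivity)]
  have h1 : ε ^ 2 ≤ ((m:ℝ) - d) ^ 2 := by
    rw [← sq_abs ((m:ℝ) - d)]
    exact pow_le_pow_left₀ hε.le (hεm m) 2
  have h2 : 1 + 2 * d ^ 2 ≤ (1 + 2 * d ^ 2) / ε ^ 2 * ((m:ℝ) - d) ^ 2 := by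
    rw [div_mul_eq_mul_div, le_div_iff₀ (by positivity)]
    gcongr
  nlinarith [sq_nonneg ((m:ℝ) - 2 * d)]

/-- Points with bounded gradient are bounded in `H¹`, uniformly in `N`. -/
theorem Ham.exists_h1_bound {ι : Type*} [Fintype ι] (D : Ham ι) :
    ∃ K, 0 ≤ K ∧ ∀ N c, D.gsq N c ≤ 1 → ∀ i, ∑ m ∈ Mo N, (1 + (m:ℝ) ^ 2) * ‖c i m‖ ^ 2 ≤ K := by
  choose δ hδ hδm using fun i => exists_nonresonance (D.d i) (D.d_ne i)
  refine ⟨∑ i, (δ i)⁻¹ * (2 + 2 * D.Cinf ^ 2), Finset.sum_nonneg fun i _ => by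
    have := hδ i; positivity, fun N c hc i => ?_⟩
  refine le_trans ?_ (Finset.single_le_sum (f := fun i => (δ i)⁻¹ * (2 + 2 * D.Cinf ^ 2))
    (fun i _ => by have := hδ i; positivity) (Finset.mem_univ i))
  have hcg := D.continuous_g_ev N c i
  set r : ℝ → ℂ := fun t => D.g (ev N c t) i - ((2 * π * D.d i : ℝ) : ℂ) * ev N c t i with hr
  have hrc : Continuous r := by fun_prop
  have hb := bessel (Mo N) r hrc
  have hb2 : ∫ t in (0:ℝ)..1, ‖r t‖ ^ 2 ≤ D.Cinf ^ 2 := by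
    have : ∫ t in (0:ℝ)..1, ‖r t‖ ^ 2 ≤ ∫ t in (0:ℝ)..1, D.Cinf ^ 2 := by
      refine intervalIntegral.integral_mono_on zero_le_one ?_ ?_ fun t _ => ?_
      · apply Continuous.intervalIntegrable; fun_prop
      · apply Continuous.intervalIntegrable; fun_prop
      · exact pow_le_pow_left₀ (norm_nonneg _) (D.near _ i) 2
    simpa using this
  have hft : ∀ m ∈ Mo N, ft r m = ft (fun t => D.g (ev N c t) i) m - ((2 * π * D.d i : ℝ) : ℂ) * c i m := by
    intro m hm
    rw [← ft_tp (Mo N) (c i) m hm]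
    simp only [ft, hr, sub_mul, ← intervalIntegral.integral_const_mul]
    rw [intervalIntegral.integral_sub]
    · simp only [mul_assoc, ev]
    · apply Continuous.intervalIntegrable; fun_prop
    · apply Continuous.intervalIntegrable; fun_prop
  have hgi : ∑ m ∈ Mo N, ‖D.Grd N c i m‖ ^ 2 ≤ 1 :=
    (Finset.single_le_sum (f := fun i => ∑ m ∈ Mo N, ‖D.Grd N c i m‖ ^ 2)
      (fun i _ => by positivity) (Finset.mem_univ i)).trans hc
  have hterm : ∀ m ∈ Mo N, (1 + (m:ℝ) ^ 2) * ‖c i m‖ ^ 2 ≤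
      (δ i)⁻¹ * (2 * ‖D.Grd N c i m‖ ^ 2 + 2 * ‖ft r m‖ ^ 2) := by
    intro m hm
    rw [le_inv_mul_iff₀ (hδ i)]
    have e : ((2 * π * (m - D.d i) : ℝ) : ℂ) * c i m = D.Grd N c i m + ft r m := by
      rw [hft m hm, Ham.Grd]; push_cast; ring
    have e2 : (2 * π) ^ 2 * ((m:ℝ) - D.d i) ^ 2 * ‖c i m‖ ^ 2 = ‖D.Grd N c i m + ft r m‖ ^ 2 := by
      rw [← e, norm_mul, Complex.norm_real, Real.norm_eq_abs, mul_pow _ ‖c i m‖, sq_abs]; ring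
    have e3 : ‖D.Grd N c i m + ft r m‖ ^ 2 ≤ 2 * ‖D.Grd N c i m‖ ^ 2 + 2 * ‖ft r m‖ ^ 2 := by
      have := norm_add_le (D.Grd N c i m) (ft r m)
      nlinarith [sq_nonneg (‖D.Grd N c i m‖ - ‖ft r m‖), norm_nonneg (D.Grd N c i m + ft r m)]
    have e4 : ((m:ℝ) - D.d i) ^ 2 * ‖c i m‖ ^ 2 ≤ (2 * π) ^ 2 * ((m:ℝ) - D.d i) ^ 2 * ‖c i m‖ ^ 2 := by
      have : (1:ℝ) ≤ (2 * π) ^ 2 := by nlinarith [Real.pi_gt_three]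
      nlinarith [mul_nonneg (sq_nonneg ((m:ℝ) - D.d i)) (sq_nonneg ‖c i m‖)]
    have e5 := mul_le_mul_of_nonneg_right (hδm i m) (sq_nonneg ‖c i m‖)
    linarith
  refine (Finset.sum_le_sum hterm).trans ?_
  rw [← Finset.mul_sum, Finset.sum_add_distrib, ← Finset.mul_sum, ← Finset.mul_sum]
  have := inv_pos.2 (hδ i)
  gcongr <;> linarith

theorem summable_inv_one_add_sq : Summable fun m : ℤ => (1 + (m:ℝ) ^ 2)⁻¹ := by
  have h := Real.summable_one_div_int_pow.2 (by norm_num : 1 < 2)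
  refine Summable.of_norm_bounded_eventually h ?_
  filter_upwards [(Set.finite_singleton (0:ℤ)).compl_mem_cofinite] with m hm
  have hm0 : (m:ℝ) ≠ 0 := by exact_mod_cast hm
  rw [Real.norm_of_nonneg (by positivity), one_div]
  exact inv_anti₀ (by positivity) (by linarith)

/-- Coefficientwise convergence together with an `H¹` bound implies absolute convergence. -/
theorem tendsto_tsum_norm_sub {K : ℝ} (b : ℕ → ℤ → ℂ) (b' : ℤ → ℂ)
    (hK : ∀ l (F : Finset ℤ), ∑ m ∈ F, (1 + (m:ℝ) ^ 2) * ‖b l m‖ ^ 2 ≤ K)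
    (hb : ∀ m, Filter.Tendsto (fun l => b l m) Filter.atTop (nhds (b' m))) :
    (∀ F : Finset ℤ, ∑ m ∈ F, (1 + (m:ℝ) ^ 2) * ‖b' m‖ ^ 2 ≤ K) ∧
    (∀ l, Summable fun m => ‖b l m‖) ∧ (Summable fun m => ‖b' m‖) ∧
    Filter.Tendsto (fun l => ∑' m, ‖b l m - b' m‖) Filter.atTop (nhds 0) := by
  have hK0 : 0 ≤ K := by simpa using hK 0 ∅
  have h1 : ∀ F : Finset ℤ, ∑ m ∈ F, (1 + (m:ℝ) ^ 2) * ‖b' m‖ ^ 2 ≤ K := fun F =>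
    le_of_tendsto (tendsto_finsetSum F fun m _ => ((hb m).norm.pow 2).const_mul _)
      (Filter.Eventually.of_forall fun l => hK l F)
  have hsum : ∀ a : ℤ → ℂ, ∀ L : ℝ, (∀ F : Finset ℤ, ∑ m ∈ F, (1 + (m:ℝ) ^ 2) * ‖a m‖ ^ 2 ≤ L) →
      Summable fun m => ‖a m‖ := by
    intro a L ha
    have h2 : Summable fun m : ℤ => (1 + (m:ℝ) ^ 2) * ‖a m‖ ^ 2 :=
      summable_of_sum_le (fun m => by positivity) ha
    refine Summable.of_nonneg_of_le (fun m => norm_nonneg _) (fun m => ?_)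
      (h2.add summable_inv_one_add_sq)
    have hp : 0 < 1 + (m:ℝ) ^ 2 := by positivity
    have e : (1 + (m:ℝ) ^ 2) * (1 + (m:ℝ) ^ 2)⁻¹ = 1 := mul_inv_cancel₀ hp.ne'
    have hq := inv_pos.2 hp
    set q := (1 + (m:ℝ) ^ 2)⁻¹
    set p := 1 + (m:ℝ) ^ 2
    nlinarith [sq_nonneg (p * ‖a m‖ - 1), mul_nonneg hq.le (sq_nonneg (p * ‖a m‖ - 1)), norm_nonneg (a m)]
  have hu : ∀ l (F : Finset ℤ), ∑ m ∈ F, (1 + (m:ℝ) ^ 2) * ‖b l m - b' m‖ ^ 2 ≤ 4 * K := by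
    intro l F
    have : ∀ m ∈ F, (1 + (m:ℝ) ^ 2) * ‖b l m - b' m‖ ^ 2 ≤
        2 * ((1 + (m:ℝ) ^ 2) * ‖b l m‖ ^ 2) + 2 * ((1 + (m:ℝ) ^ 2) * ‖b' m‖ ^ 2) := by
      intro m _
      have := norm_sub_le (b l m) (b' m)
      have h3 : ‖b l m - b' m‖ ^ 2 ≤ 2 * ‖b l m‖ ^ 2 + 2 * ‖b' m‖ ^ 2 := by
        nlinarith [sq_nonneg (‖b l m‖ - ‖b' m‖), norm_nonneg (b l m - b' m)]
      nlinarith [mul_le_mul_of_nonneg_left h3 (by positivity : 0 ≤ 1 + (m:ℝ) ^ 2)]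
    refine (Finset.sum_le_sum this).trans ?_
    rw [Finset.sum_add_distrib, ← Finset.mul_sum, ← Finset.mul_sum]
    linarith [hK l F, h1 F]
  refine ⟨h1, fun l => hsum _ K (hK l), hsum _ K h1, ?_⟩
  rw [Metric.tendsto_atTop]
  intro η hη
  set ε := η / (8 * (K + 1)) with hε
  have hε0 : 0 < ε := by positivity
  -- the part of `‖u‖` not controlled by the `H¹` norm is dominated by a summable sequence
  let f : ℕ → ℤ → ℝ := fun l m => max (‖b l m - b' m‖ - ε * ((1 + (m:ℝ) ^ 2) * ‖b l m - b' m‖ ^ 2)) 0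
  have hfb : ∀ l m, ‖f l m‖ ≤ ε⁻¹ * (1 + (m:ℝ) ^ 2)⁻¹ := by
    intro l m
    have hp : 0 < 1 + (m:ℝ) ^ 2 := by positivity
    rw [Real.norm_of_nonneg (le_max_right _ _)]
    refine max_le ?_ (by positivity)
    have hk : 0 < ε * (1 + (m:ℝ) ^ 2) := by positivity
    rw [← mul_inv, ← one_div, le_div_iff₀ hk, ← mul_assoc]
    set k := ε * (1 + (m:ℝ) ^ 2)
    nlinarith [sq_nonneg (k * ‖b l m - b' m‖ - 1 / 2)]
  have hft : Filter.Tendsto (fun l => ∑' m, f l m) Filter.atTop (nhds (∑' _ : ℤ, (0:ℝ))) := by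
    refine tendsto_tsum_of_dominated_convergence (summable_inv_one_add_sq.mul_left ε⁻¹) (fun m => ?_)
      (Filter.Eventually.of_forall fun l m => hfb l m)
    have h3 : Filter.Tendsto (fun l => ‖b l m - b' m‖) Filter.atTop (nhds 0) := by
      have := ((hb m).sub_const (b' m)).norm
      simpa using this
    have h4 := ((h3.sub (((h3.pow 2).const_mul (1 + (m:ℝ) ^ 2)).const_mul ε)).max
      (tendsto_const_nhds (x := (0:ℝ))))
    simpa using h4
  rw [tsum_zero, Metric.tendsto_atTop] at hft
  obtain ⟨l₀, hl₀⟩ := hft (η / 2) (by positivity)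
  refine ⟨l₀, fun l hl => ?_⟩
  have h5 := hl₀ l hl
  rw [Real.dist_eq, sub_zero] at h5 ⊢
  rw [abs_of_nonneg (tsum_nonneg fun m => norm_nonneg _)]
  have hfs : Summable (f l) := Summable.of_norm_bounded (summable_inv_one_add_sq.mul_left ε⁻¹) (hfb l)
  have h6 : ∑' m, ‖b l m - b' m‖ ≤ ∑' m, f l m + ε * (4 * K) := by
    refine Summable.tsum_le_of_sum_le (hsum _ _ (hu l)) fun F => ?_
    have : ∀ m ∈ F, ‖b l m - b' m‖ ≤ f l m + ε * ((1 + (m:ℝ) ^ 2) * ‖b l m - b' m‖ ^ 2) := by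
      intro m _
      have := le_max_left (‖b l m - b' m‖ - ε * ((1 + (m:ℝ) ^ 2) * ‖b l m - b' m‖ ^ 2)) 0
      simp only [f]
      linarith
    refine (Finset.sum_le_sum this).trans ?_
    rw [Finset.sum_add_distrib, ← Finset.mul_sum]
    exact add_le_add (hfs.sum_le_tsum F fun m _ => le_max_right _ _)
      (mul_le_mul_of_nonneg_left (hu l F) hε0.le)
  have h7 : ε * (4 * K) < η / 2 := by
    rw [hε, div_mul_eq_mul_div, div_lt_div_iff₀ (by positivity) (by positivity)]
    nlinarith
  have := le_abs_self (∑' m, f l m)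
  linarith

theorem hasSum_ft {y : ℝ → ℂ} (hy : Continuous y) (hp : Function.Periodic y 1)
    (hs : Summable fun m => ‖ft y m‖) (t : ℝ) : HasSum (fun m : ℤ => ft y m * ex (m * t)) (y t) := by
  have : Fact ((0:ℝ) < 1) := ⟨one_pos⟩
  let Y : C(AddCircle (1:ℝ), ℂ) := ⟨hp.lift, by
    apply continuous_coinduced_dom.mpr
    exact hy⟩
  have hY : ∀ s : ℝ, Y (s : AddCircle (1:ℝ)) = y s := fun s => hp.lift_coe s
  have hex : ∀ (m : ℤ) (s : ℝ), fourier m (s : AddCircle (1:ℝ)) = ex (m * s) := by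
    intro m s
    rw [fourier_coe_apply, ex]
    congr 1
    push_cast
    ring
  have hc : ∀ m, fourierCoeff Y m = ft y m := by
    intro m
    rw [fourierCoeff_eq_intervalIntegral _ _ 0, ft]
    rw [zero_add, div_one, one_smul]
    refine intervalIntegral.integral_congr fun s _ => ?_
    rw [hex, hY]
    change ex (((-m : ℤ) : ℝ) * s) * y s = y s * ex (-(m * s))
    rw [mul_comm]
    push_cast
    rw [neg_mul]
  have := has_pointwise_sum_fourier_series_of_summable (f := Y) (by
    rw [show fourierCoeff (Y : AddCircle (1:ℝ) → ℂ) = ft y from funext hc]; exact hs.of_norm) (t : AddCircle (1:ℝ))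
  simpa only [hc, hex, hY, smul_eq_mul] using this

/-- A continuous periodic `x` given by an absolutely convergent Fourier series with coefficients
`b`, such that `2πm b m` are the coefficients of a continuous periodic `f`, satisfies `x' = i f`. -/
theorem hasDerivAt_of_ft {x f : ℝ → ℂ} {b : ℤ → ℂ} (hf : Continuous f)
    (hfp : Function.Periodic f 1) (hs : Summable fun m => ‖b m‖)
    (hx : ∀ t, HasSum (fun m : ℤ => b m * ex (m * t)) (x t))
    (hb : ∀ m : ℤ, ((2 * π * m : ℝ) : ℂ) * b m = ft f m) (t : ℝ) :
    HasDerivAt x (Complex.I * f t) t := by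
  let y : ℝ → ℂ := fun t => Complex.I * ∫ s in (0:ℝ)..t, f s
  have hyd : ∀ t, HasDerivAt y (Complex.I * f t) t := fun t =>
    (intervalIntegral.integral_hasDerivAt_right (hf.intervalIntegrable _ _)
      (hf.stronglyMeasurableAtFilter _ _) hf.continuousAt).const_mul _
  have hyc : Continuous y := continuous_iff_continuousAt.2 fun t => (hyd t).continuousAt
  have hf0 : ∫ s in (0:ℝ)..1, f s = 0 := by
    have := hb 0
    simpa [ft, ex_zero] using this.symm
  have hyp : Function.Periodic y 1 := by
    intro t
    simp only [y]
    rw [← intervalIntegral.integral_add_adjacent_intervals (b := t) (hf.intervalIntegrable _ _)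
      (hf.intervalIntegrable _ _), hfp.intervalIntegral_add_eq t 0, zero_add, hf0, add_zero]
  have hyft : ∀ m : ℤ, m ≠ 0 → ft y m = b m := by
    intro m hm
    have hd : ∀ t, HasDerivAt (fun t => y t * ex (-(m * t)))
        (Complex.I * f t * ex (-(m * t)) + y t * (-(2 * π * m * Complex.I) * ex (-(m * t)))) t := by
      intro t
      have h2 : HasDerivAt (fun t => ex (-(m * t))) (-(2 * π * m * Complex.I) * ex (-(m * t))) t := by
        have := hasDerivAt_ex_mul (-(m:ℝ)) t
        simp only [neg_mul] at this
        convert! this using 1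
        push_cast; ring
      exact (hyd t).mul h2
    have h1 := intervalIntegral.integral_eq_sub_of_hasDerivAt (a := 0) (b := 1) (fun t _ => hd t)
      (by apply Continuous.intervalIntegrable; fun_prop)
    have h3 : y 1 = y 0 := by simpa using hyp 0
    have h4 : ex (-(m:ℝ)) = 1 := by rw [ex_neg, ex_intCast, inv_one]
    rw [h3, mul_one, h4, mul_zero, neg_zero, ex_zero, sub_self, intervalIntegral.integral_add] at h1
    rotate_left
    · apply Continuous.intervalIntegrable; fun_prop
    · apply Continuous.intervalIntegrable; fun_prop
    have h5 : ∫ t in (0:ℝ)..1, Complex.I * f t * ex (-(m * t)) = Complex.I * ft f m := by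
      rw [ft, ← intervalIntegral.integral_const_mul]; simp only [mul_assoc]
    have h6 : ∫ t in (0:ℝ)..1, y t * (-(2 * π * m * Complex.I) * ex (-(m * t)))
        = -(2 * π * m * Complex.I) * ft y m := by
      rw [ft, ← intervalIntegral.integral_const_mul]
      refine intervalIntegral.integral_congr fun s _ => by ring
    rw [h5, h6, ← hb m] at h1
    have hm' : (2 * π * m * Complex.I : ℂ) ≠ 0 := by
      simp [Complex.I_ne_zero, hm]
    apply mul_left_cancel₀ hm'
    push_cast at h1
    linear_combination -h1
  have hys : Summable fun m => ‖ft y m‖ := by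
    refine (summable_congr_cofinite ?_).2 hs
    filter_upwards [(Set.finite_singleton (0:ℤ)).compl_mem_cofinite] with m hm
    rw [hyft m hm]
  have hdiff : ∀ t, x t = y t + (b 0 - ft y 0) := by
    intro t
    have h1 := (hx t).sub (hasSum_ft hyc hyp hys t)
    have h2 : (fun m : ℤ => b m * ex (m * t) - ft y m * ex (m * t)) =
        fun m => if m = 0 then b 0 - ft y 0 else 0 := by
      ext m
      split_ifs with h
      · simp [h, ex_zero]
      · rw [hyft m h, sub_self]
    rw [h2] at h1
    have h3 := h1.unique (hasSum_ite_eq (0:ℤ) (b 0 - ft y 0))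
    linear_combination h3
  rw [show x = fun t => y t + (b 0 - ft y 0) from funext hdiff]
  exact (hyd t).add_const _

/-- Dominated convergence along a uniformly bounded, pointwise convergent sequence of curves. -/
theorem tendsto_integral_comp {ι E : Type*} [Fintype ι] [NormedAddCommGroup E] [NormedSpace ℝ E]
    (Φ : ℝ × (ι → ℂ) → E) (hΦ : Continuous Φ) (y : ℕ → ℝ → ι → ℂ) (x : ℝ → ι → ℂ) (B : ℝ)
    (hy : ∀ l, Continuous (y l)) (hB : ∀ l t, ‖y l t‖ ≤ B)
    (hlim : ∀ t, Filter.Tendsto (fun l => y l t) Filter.atTop (nhds (x t))) :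
    Filter.Tendsto (fun l => ∫ t in (0:ℝ)..1, Φ (t, y l t)) Filter.atTop
      (nhds (∫ t in (0:ℝ)..1, Φ (t, x t))) := by
  have hcpt : IsCompact ((Icc (0:ℝ) 1) ×ˢ Metric.closedBall (0 : ι → ℂ) B) :=
    isCompact_Icc.prod (isCompact_closedBall _ _)
  obtain ⟨M, hM⟩ := hcpt.exists_bound_of_continuousOn hΦ.continuousOn
  refine intervalIntegral.tendsto_integral_filter_of_dominated_convergence (fun _ => M) ?_ ?_ ?_ ?_
  · refine Filter.Eventually.of_forall fun l => Continuous.aestronglyMeasurable ?_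
    have := hy l
    fun_prop
  · refine Filter.Eventually.of_forall fun l => Filter.Eventually.of_forall fun t ht => ?_
    rw [uIoc_of_le zero_le_one] at ht
    exact hM _ ⟨⟨ht.1.le, ht.2⟩, by simpa using hB l t⟩
  · exact intervalIntegrable_const
  · refine Filter.Eventually.of_forall fun t _ => ?_
    exact (hΦ.tendsto (t, x t)).comp (tendsto_const_nhds.prodMk_nhds (hlim t))

/-- `x` is a one-periodic solution of `x' = i ∇H(x)`. -/
def Ham.IsOrbit {ι : Type*} [Fintype ι] (D : Ham ι) (x : ℝ → ι → ℂ) : Prop :=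
  (∀ t i, HasDerivAt (fun t => x t i) (Complex.I * D.g (x t) i) t) ∧ ∀ t, x (t + 1) = x t

/-- The action of a one-periodic orbit. -/
def Ham.AO {ι : Type*} [Fintype ι] (D : Ham ι) (x : ℝ → ι → ℂ) : ℝ :=
  (∫ t in (0:ℝ)..1, ∑ i, ((starRingEnd ℂ) (D.g (x t) i) * x t i).re) / 2 -
    ∫ t in (0:ℝ)..1, D.H (x t)

theorem sum_norm_le_of_h1 {K : ℝ} (F : Finset ℤ) (b : ℤ → ℂ)
    (h : ∑ m ∈ F, (1 + (m:ℝ) ^ 2) * ‖b m‖ ^ 2 ≤ K) :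
    ∑ m ∈ F, ‖b m‖ ≤ (K + ∑' m : ℤ, (1 + (m:ℝ) ^ 2)⁻¹) / 2 := by
  have h1 : ∑ m ∈ F, (1 + (m:ℝ) ^ 2)⁻¹ ≤ ∑' m : ℤ, (1 + (m:ℝ) ^ 2)⁻¹ :=
    summable_inv_one_add_sq.sum_le_tsum F fun m _ => by positivity
  have h2 : ∑ m ∈ F, ‖b m‖ ≤ ∑ m ∈ F, ((1 + (m:ℝ) ^ 2) * ‖b m‖ ^ 2 + (1 + (m:ℝ) ^ 2)⁻¹) / 2 := by
    refine Finset.sum_le_sum fun m _ => ?_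
    have h3 : (0:ℝ) < 1 + (m:ℝ) ^ 2 := by positivity
    have h4 : (1 + (m:ℝ) ^ 2) * ‖b m‖ ^ 2 + (1 + (m:ℝ) ^ 2)⁻¹ - 2 * ‖b m‖ =
        (1 + (m:ℝ) ^ 2)⁻¹ * ((1 + (m:ℝ) ^ 2) * ‖b m‖ - 1) ^ 2 := by
      field_simp; ring
    have h5 : 0 ≤ (1 + (m:ℝ) ^ 2)⁻¹ * ((1 + (m:ℝ) ^ 2) * ‖b m‖ - 1) ^ 2 := by positivity
    linarith
  rw [← Finset.sum_div, Finset.sum_add_distrib] at h2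
  linarith

/-- The action as the pairing of the loop with the gradient plus the orbit action `AO`, so that the
two actions agree on critical points. -/
theorem Ham.act_eq_grd {ι : Type*} [Fintype ι] (D : Ham ι) (N : ℕ) (c : ι → ℤ → ℂ) :
    D.Act N c = (∑ i, ∑ m ∈ Mo N, ((starRingEnd ℂ) (D.Grd N c i m) * c i m).re) / 2 +
      D.AO (ev N c) := by
  have hconj := Complex.continuous_conj
  have hg := D.contG
  have h1 : ∫ t in (0:ℝ)..1, ∑ i, ((starRingEnd ℂ) (D.g (ev N c t) i) * ev N c t i).re =
      ∑ i, ∑ m ∈ Mo N, ((starRingEnd ℂ) (ft (fun t => D.g (ev N c t) i) m) * c i m).re := by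
    rw [intervalIntegral.integral_finsetSum]
    · exact Finset.sum_congr rfl fun i _ =>
        re_integral_conj_mul_tp (Mo N) (c i) _ (D.continuous_g_ev N c i)
    · intro i _
      apply Continuous.intervalIntegrable
      apply Complex.continuous_re.comp
      have := D.continuous_g_ev N c i
      exact (hconj.comp this).mul ((continuous_apply i).comp (continuous_ev N c))
  rw [AO, h1, Act]
  have h2 : ∑ i, ∑ m ∈ Mo N, π * m * ‖c i m‖ ^ 2 =
      (∑ i, ∑ m ∈ Mo N, ((starRingEnd ℂ) (D.Grd N c i m) * c i m).re) / 2 +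
      (∑ i, ∑ m ∈ Mo N, ((starRingEnd ℂ) (ft (fun t => D.g (ev N c t) i) m) * c i m).re) / 2 := by
    rw [← add_div, ← Finset.sum_add_distrib, Finset.sum_div]
    refine Finset.sum_congr rfl fun i _ => ?_
    rw [← Finset.sum_add_distrib, Finset.sum_div]
    refine Finset.sum_congr rfl fun m _ => ?_
    rw [← Complex.add_re, ← add_mul, ← map_add, Grd, sub_add_cancel, map_mul, Complex.conj_ofReal,
      mul_assoc (_ : ℂ), Complex.conj_mul', Complex.re_ofReal_mul, ← Complex.ofReal_pow, Complex.ofReal_re]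
    ring
  rw [h2]; ring

/-- Palais–Smale compactness: almost critical points of the truncated action functionals
subconverge to one-periodic orbits. -/
theorem Ham.palais_smale {ι : Type*} [Fintype ι] (D : Ham ι) {v v' : ℝ} (Nn : ℕ → ℕ)
    (hN : Filter.Tendsto Nn Filter.atTop Filter.atTop) (c : ℕ → ι → ℤ → ℂ)
    (hv : ∀ l, v ≤ D.Act (Nn l) (c l)) (hv' : ∀ l, D.Act (Nn l) (c l) ≤ v')
    (hg1 : ∀ l, D.gsq (Nn l) (c l) ≤ 1)
    (hg0 : Filter.Tendsto (fun l => D.gsq (Nn l) (c l)) Filter.atTop (nhds 0)) :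
    ∃ x, D.IsOrbit x ∧ v ≤ D.AO x ∧ D.AO x ≤ v' ∧ ∃ ψ : ℕ → ℕ, StrictMono ψ ∧
      ∀ i m, Filter.Tendsto (fun l => c (ψ l) i m) Filter.atTop (nhds (ft (fun t => x t i) m)) := by
  classical
  obtain ⟨K, hK0, hK⟩ := D.exists_h1_bound
  have hconj := Complex.continuous_conj
  have hcg := D.contG
  have hcH := D.contH
  let b : ℕ → ι → ℤ → ℂ := fun l i m => if m ∈ Mo (Nn l) then c l i m else 0
  have hbK : ∀ l i (F : Finset ℤ), ∑ m ∈ F, (1 + (m:ℝ) ^ 2) * ‖b l i m‖ ^ 2 ≤ K := by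
    intro l i F
    have h1 : ∀ m : ℤ, (1 + (m:ℝ) ^ 2) * ‖b l i m‖ ^ 2 =
        if m ∈ Mo (Nn l) then (1 + (m:ℝ) ^ 2) * ‖c l i m‖ ^ 2 else 0 := by
      intro m; simp only [b]; split_ifs <;> simp
    simp only [h1]
    rw [← Finset.sum_filter]
    refine le_trans (Finset.sum_le_sum_of_subset_of_nonneg (t := Mo (Nn l)) ?_ ?_)
      (hK _ _ (hg1 l) i)
    · intro m hm; exact (Finset.mem_filter.1 hm).2
    · intro m _ _; positivity
  have hbn : ∀ l i m, ‖b l i m‖ ≤ K + 1 := by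
    intro l i m
    have := hbK l i {m}
    rw [Finset.sum_singleton] at this
    have h0 := norm_nonneg (b l i m)
    nlinarith [sq_nonneg (m:ℝ), mul_nonneg (sq_nonneg (m:ℝ)) (sq_nonneg ‖b l i m‖)]
  have hcpt : IsCompact (Set.pi univ fun _ : ι => Set.pi univ fun _ : ℤ =>
      Metric.closedBall (0:ℂ) (K + 1)) :=
    isCompact_univ_pi fun _ => isCompact_univ_pi fun _ => isCompact_closedBall _ _
  obtain ⟨b', -, ψ, hψ, hlim⟩ := hcpt.tendsto_subseq (x := b) (fun l i _ m _ => by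
    simpa using hbn l i m)
  have hlim' : ∀ i m, Filter.Tendsto (fun l => b (ψ l) i m) Filter.atTop (nhds (b' i m)) :=
    fun i m => tendsto_pi_nhds.1 (tendsto_pi_nhds.1 hlim i) m
  have hNψ : Filter.Tendsto (fun l => Nn (ψ l)) Filter.atTop Filter.atTop :=
    hN.comp hψ.tendsto_atTop
  have hmem : ∀ m : ℤ, ∀ᶠ l in Filter.atTop, m ∈ Mo (Nn (ψ l)) := by
    intro m
    filter_upwards [hNψ.eventually_ge_atTop m.natAbs] with l hl
    rw [mem_Mo]; omega
  have hclim : ∀ i m, Filter.Tendsto (fun l => c (ψ l) i m) Filter.atTop (nhds (b' i m)) := by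
    intro i m
    refine (hlim' i m).congr' ?_
    filter_upwards [hmem m] with l hl
    simp only [b, if_pos hl]
  have hT := fun i => tendsto_tsum_norm_sub (fun l => b (ψ l) i) (b' i)
    (fun l F => hbK (ψ l) i F) (hlim' i)
  let x : ℝ → ι → ℂ := fun t i => ∑' m : ℤ, b' i m * ex (m * t)
  have hnex : ∀ (a : ℂ) (s : ℝ), ‖a * ex s‖ = ‖a‖ := fun a s => by rw [norm_mul, norm_ex, mul_one]
  have hxs : ∀ t i, HasSum (fun m : ℤ => b' i m * ex (m * t)) (x t i) := by
    intro t i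
    refine (Summable.of_norm ?_).hasSum
    simpa only [hnex] using (hT i).2.2.1
  have hxc : Continuous x := by
    refine continuous_pi fun i => ?_
    refine continuous_tsum (u := fun m => ‖b' i m‖) (fun m => ?_) (hT i).2.2.1 fun m t => ?_
    · fun_prop
    · rw [hnex]
  have hxp : ∀ t, x (t + 1) = x t := by
    intro t; ext i
    refine tsum_congr fun m => ?_
    rw [mul_add, mul_one, ex_add, ex_intCast, mul_one]
  let y : ℕ → ℝ → ι → ℂ := fun l => ev (Nn (ψ l)) (c (ψ l))
  have hyb : ∀ l t i, HasSum (fun m : ℤ => b (ψ l) i m * ex (m * t)) (y l t i) := by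
    intro l t i
    have h1 : y l t i = ∑ m ∈ Mo (Nn (ψ l)), b (ψ l) i m * ex (m * t) := by
      simp only [y, ev, tp, b]
      exact Finset.sum_congr rfl fun m hm => by rw [if_pos hm]
    rw [h1]
    refine hasSum_sum_of_ne_finset_zero fun m hm => ?_
    simp only [b, if_neg hm, zero_mul]
  set S : ℝ := (K + ∑' m : ℤ, (1 + (m:ℝ) ^ 2)⁻¹) / 2 with hS
  have hcS : ∀ l i, ∑ m ∈ Mo (Nn (ψ l)), ‖c (ψ l) i m‖ ≤ S := fun l i =>
    sum_norm_le_of_h1 _ _ (hK _ _ (hg1 (ψ l)) i)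
  have hS0 : 0 ≤ S := by
    have : 0 ≤ ∑' m : ℤ, (1 + (m:ℝ) ^ 2)⁻¹ := tsum_nonneg fun m => by positivity
    positivity
  have hyB : ∀ l t, ‖y l t‖ ≤ S := by
    intro l t
    refine (pi_norm_le_iff_of_nonneg hS0).2 fun i => ?_
    have h1 : y l t i = ∑ m ∈ Mo (Nn (ψ l)), c (ψ l) i m * ex (m * t) := rfl
    rw [h1]
    refine (norm_sum_le _ _).trans (le_trans (le_of_eq ?_) (hcS l i))
    simp only [hnex]
  have hyx : ∀ t, Filter.Tendsto (fun l => y l t) Filter.atTop (nhds (x t)) := by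
    intro t
    refine tendsto_pi_nhds.2 fun i => ?_
    rw [tendsto_iff_norm_sub_tendsto_zero]
    refine squeeze_zero (fun _ => norm_nonneg _) (fun l => ?_) (hT i).2.2.2
    have h1 := (hyb l t i).sub (hxs t i)
    rw [← h1.tsum_eq]
    have h2 : ∀ m : ℤ, ‖b (ψ l) i m * ex (m * t) - b' i m * ex (m * t)‖ = ‖b (ψ l) i m - b' i m‖ :=
      fun m => by rw [← sub_mul, hnex]
    refine (norm_tsum_le_tsum_norm ?_).trans (le_of_eq (tsum_congr h2))
    simp only [h2]
    exact Summable.of_nonneg_of_le (fun _ => norm_nonneg _) (fun m => norm_sub_le _ _)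
      (((hT i).2.1 l).add (hT i).2.2.1)
  have hyc : ∀ l, Continuous (y l) := fun l => continuous_ev _ _
  have hsq : Filter.Tendsto (fun l => √(D.gsq (Nn (ψ l)) (c (ψ l)))) Filter.atTop (nhds 0) := by
    have := (hg0.comp hψ.tendsto_atTop).sqrt
    simpa using this
  have hbft : ∀ i m, b' i m = ft (fun t => x t i) m := by
    intro i m
    have h1 := tendsto_integral_comp (fun p : ℝ × (ι → ℂ) => p.2 i * ex (-(m * p.1)))
      (by fun_prop) y x S hyc hyB hyx
    refine tendsto_nhds_unique (hclim i m) (h1.congr' ?_)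
    filter_upwards [hmem m] with l hl
    exact ft_tp _ _ _ hl
  have hgft : ∀ i (m : ℤ), ((2 * π * m : ℝ) : ℂ) * b' i m = ft (fun t => D.g (x t) i) m := by
    intro i m
    have h1 := tendsto_integral_comp (fun p : ℝ × (ι → ℂ) => D.g p.2 i * ex (-(m * p.1)))
      (by fun_prop) y x S hyc hyB hyx
    have h2 : Filter.Tendsto (fun l => D.Grd (Nn (ψ l)) (c (ψ l)) i m) Filter.atTop (nhds 0) := by
      rw [tendsto_zero_iff_norm_tendsto_zero]
      refine squeeze_zero' (Filter.Eventually.of_forall fun _ => norm_nonneg _) ?_ hsq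
      filter_upwards [hmem m] with l hl
      exact D.norm_grd_le_sqrt _ hl _
    have h3 := ((hclim i m).const_mul ((2 * π * m : ℝ) : ℂ)).sub h1
    have h4 := tendsto_nhds_unique h3 h2
    exact sub_eq_zero.1 h4
  have horb : D.IsOrbit x := by
    refine ⟨fun t i => ?_, hxp⟩
    refine hasDerivAt_of_ft (f := fun t => D.g (x t) i) (b := b' i) (by fun_prop) (fun t => ?_)
      (hT i).2.2.1 (fun t => hxs t i) (hgft i) t
    simp only [hxp]
  have hAO : Filter.Tendsto (fun l => D.Act (Nn (ψ l)) (c (ψ l))) Filter.atTop (nhds (D.AO x)) := by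
    have h1 := tendsto_integral_comp (fun p : ℝ × (ι → ℂ) =>
      ∑ i, ((starRingEnd ℂ) (D.g p.2 i) * p.2 i).re) (by fun_prop) y x S hyc hyB hyx
    have h2 := tendsto_integral_comp (fun p : ℝ × (ι → ℂ) => D.H p.2) (by fun_prop) y x S hyc hyB hyx
    have h3 : Filter.Tendsto (fun l => (∑ i, ∑ m ∈ Mo (Nn (ψ l)),
        ((starRingEnd ℂ) (D.Grd (Nn (ψ l)) (c (ψ l)) i m) * c (ψ l) i m).re) / 2)
        Filter.atTop (nhds 0) := by
      have h4 := hsq.mul_const ((∑ _i : ι, S))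
      rw [zero_mul] at h4
      refine squeeze_zero_norm (fun l => ?_) h4
      rw [norm_div, Real.norm_two]
      have h5 : ‖∑ i, ∑ m ∈ Mo (Nn (ψ l)),
          ((starRingEnd ℂ) (D.Grd (Nn (ψ l)) (c (ψ l)) i m) * c (ψ l) i m).re‖ ≤
          √(D.gsq (Nn (ψ l)) (c (ψ l))) * ∑ _i : ι, S := by
        rw [Finset.mul_sum]
        refine (norm_sum_le _ _).trans (Finset.sum_le_sum fun i _ => ?_)
        refine (norm_sum_le _ _).trans ?_
        refine le_trans ?_ (mul_le_mul_of_nonneg_left (hcS l i) (Real.sqrt_nonneg _))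
        rw [Finset.mul_sum]
        refine Finset.sum_le_sum fun m hm => ?_
        refine (Complex.abs_re_le_norm _).trans ?_
        rw [norm_mul, RCLike.norm_conj]
        exact mul_le_mul_of_nonneg_right (D.norm_grd_le_sqrt _ hm _) (norm_nonneg _)
      linarith [norm_nonneg (∑ i, ∑ m ∈ Mo (Nn (ψ l)),
          ((starRingEnd ℂ) (D.Grd (Nn (ψ l)) (c (ψ l)) i m) * c (ψ l) i m).re)]
    have h6 := h3.add ((h1.div_const 2).sub h2)
    rw [zero_add] at h6
    refine h6.congr fun l => ?_
    rw [D.act_eq_grd]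
    rfl
  refine ⟨x, horb, ge_of_tendsto' hAO fun l => hv _, le_of_tendsto' hAO fun l => hv' _, ψ, hψ, ?_⟩
  intro i m
  rw [← hbft]; exact hclim i m

/-- If no one-periodic orbit has action in `[v, v']`, the gradients are bounded below there. -/
theorem Ham.exists_gap {ι : Type*} [Fintype ι] (D : Ham ι) {v v' : ℝ}
    (h : ∀ x, D.IsOrbit x → v ≤ D.AO x → D.AO x ≤ v' → False) :
    ∃ N₀ : ℕ, ∃ β > 0, ∀ N ≥ N₀, ∀ c, v ≤ D.Act N c → D.Act N c ≤ v' → β ^ 2 ≤ D.gsq N c := by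
  by_contra! hc
  choose Nn hN c hv hv' hg using fun l : ℕ => hc l (1 / ((l:ℝ) + 1)) (by positivity)
  have hg' : ∀ l, D.gsq (Nn l) (c l) ≤ 1 / ((l:ℝ) + 1) := fun l => (hg l).le.trans (by
    have h1 : 1 / ((l:ℝ) + 1) ≤ 1 := by rw [div_le_one (by positivity)]; linarith [Nat.cast_nonneg (α := ℝ) l]
    have h2 : 0 < 1 / ((l:ℝ) + 1) := by positivity
    nlinarith)
  obtain ⟨x, hx, h1, h2, -⟩ := D.palais_smale Nn (Filter.tendsto_atTop_mono hN Filter.tendsto_id) c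
    hv hv' (fun l => (hg' l).trans (by
      rw [div_le_one (by positivity)]; linarith [Nat.cast_nonneg (α := ℝ) l]))
    (squeeze_zero (fun l => D.gsq_nonneg _ _) hg' tendsto_one_div_add_atTop_nhds_zero_nat)
  exact h x hx h1 h2

/-- If every orbit with action in `[v, v']` has a Fourier coefficient of index `(i, m)` larger than
`γ`, then so have (up to equality) the almost critical points of the truncated functionals. -/
theorem Ham.exists_coeff_gap {ι : Type*} [Fintype ι] (D : Ham ι) {v v' γ : ℝ} (i : ι) (m : ℤ)
    (h : ∀ x, D.IsOrbit x → v ≤ D.AO x → D.AO x ≤ v' → γ < ‖ft (fun t => x t i) m‖) :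
    ∃ N₀ : ℕ, ∃ β > 0, ∀ N ≥ N₀, ∀ c, v ≤ D.Act N c → D.Act N c ≤ v' → D.gsq N c < β ^ 2 →
      γ ≤ ‖c i m‖ := by
  by_contra! hc
  choose Nn hN c hv hv' hg hl using fun l : ℕ => hc l (1 / ((l:ℝ) + 1)) (by positivity)
  have hg' : ∀ l, D.gsq (Nn l) (c l) ≤ 1 / ((l:ℝ) + 1) := fun l => (hg l).le.trans (by
    have h1 : 1 / ((l:ℝ) + 1) ≤ 1 := by rw [div_le_one (by positivity)]; linarith [Nat.cast_nonneg (α := ℝ) l]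
    have h2 : 0 < 1 / ((l:ℝ) + 1) := by positivity
    nlinarith)
  obtain ⟨x, hx, h1, h2, ψ, -, hψ⟩ := D.palais_smale Nn (Filter.tendsto_atTop_mono hN Filter.tendsto_id) c
    hv hv' (fun l => (hg' l).trans (by
      rw [div_le_one (by positivity)]; linarith [Nat.cast_nonneg (α := ℝ) l]))
    (squeeze_zero (fun l => D.gsq_nonneg _ _) hg' tendsto_one_div_add_atTop_nhds_zero_nat)
  exact absurd (le_of_tendsto' (hψ i m).norm fun l => (hl _).le) (not_le.2 (h x hx h1 h2))

/-! ### Radial Hamiltonians -/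

section Radial

variable {ι : Type*} [Fintype ι]

/-- The quadratic form `∑ π|zᵢ|²/aᵢ`. -/
def qf (a : ι → ℝ) (z : ι → ℂ) : ℝ := ∑ i, π * ‖z i‖ ^ 2 / a i

/-- The scalar product with quadratic form `qf a`. -/
def qb (a : ι → ℝ) (z u : ι → ℂ) : ℝ := ∑ i, π * ((starRingEnd ℂ) (z i) * u i).re / a i

/-- The factor `1 - ρ / max (√q) ρ`, which vanishes on the ellipsoid `√q ≤ ρ`. -/
def lamF (a : ι → ℝ) (ρ : ℝ) (z : ι → ℂ) : ℝ := 1 - ρ / max (√(qf a z)) ρ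

/-- The radial function `T (√q - ρ)₊²`. -/
def Frad (a : ι → ℝ) (T ρ : ℝ) (z : ι → ℂ) : ℝ := T * (max (√(qf a z) - ρ) 0) ^ 2

/-- The gradient of `Frad a T ρ`. -/
def gFrad (a : ι → ℝ) (T ρ : ℝ) (z : ι → ℂ) : ι → ℂ :=
  fun i => ((2 * π * T * lamF a ρ z / a i : ℝ) : ℂ) * z i

variable {a : ι → ℝ} {T ρ : ℝ}

theorem qf_nonneg (ha : ∀ i, 0 < a i) (z : ι → ℂ) : 0 ≤ qf a z :=
  Finset.sum_nonneg fun i _ => by have := ha i; have := Real.pi_pos; positivity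

@[fun_prop]
theorem continuous_qf : Continuous (qf a) := by unfold qf; fun_prop

theorem continuous_lamF (hρ : 0 < ρ) : Continuous (lamF a ρ) := by
  unfold lamF
  refine continuous_const.sub (continuous_const.div (by fun_prop) fun z => ?_)
  exact (lt_of_lt_of_le hρ (le_max_right _ _)).ne'

theorem continuous_Frad : Continuous (Frad a T ρ) := by unfold Frad; fun_prop

theorem continuous_gFrad (hρ : 0 < ρ) : Continuous (gFrad a T ρ) := by
  have := continuous_lamF (a := a) hρ
  unfold gFrad
  refine continuous_pi fun i => ?_
  refine (Complex.continuous_ofReal.comp ?_).mul (continuous_apply i)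
  fun_prop

theorem qf_add_smul (l : ℝ) (z u : ι → ℂ) :
    qf a (fun i => (l:ℂ) * z i + u i) = l ^ 2 * qf a z + 2 * l * qb a z u + qf a u := by
  simp only [qf, qb, Finset.mul_sum, ← Finset.sum_add_distrib]
  refine Finset.sum_congr rfl fun i _ => ?_
  have : ‖(l:ℂ) * z i + u i‖ ^ 2 =
      l ^ 2 * ‖z i‖ ^ 2 + 2 * l * ((starRingEnd ℂ) (z i) * u i).re + ‖u i‖ ^ 2 := by
    simp only [← Complex.normSq_eq_norm_sq, Complex.normSq_apply, Complex.add_re, Complex.add_im,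
      Complex.mul_re, Complex.mul_im, Complex.ofReal_re, Complex.ofReal_im, Complex.conj_re,
      Complex.conj_im]
    ring
  rw [this]; ring

theorem sqrt_qf_add_le (ha : ∀ i, 0 < a i) (z u : ι → ℂ) :
    √(qf a (z + u)) ≤ √(qf a z) + √(qf a u) := by
  have h : ∀ z, √(qf a z) = ‖WithLp.toLp 2 (fun i => ((√(π / a i) : ℝ) : ℂ) * z i)‖ := by
    intro z
    rw [EuclideanSpace.norm_eq]
    congr 1
    refine Finset.sum_congr rfl fun i _ => ?_
    have h1 : 0 ≤ π / a i := div_nonneg Real.pi_pos.le (ha i).le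
    simp only [norm_mul, mul_pow, Complex.norm_real, Real.norm_eq_abs, sq_abs, Real.sq_sqrt h1]
    ring
  rw [h, h, h]
  refine le_trans (le_of_eq ?_) (norm_add_le _ _)
  congr 1
  ext i
  simp [mul_add]

theorem qf_smul (l : ℝ) (z : ι → ℂ) : qf a (fun i => (l:ℂ) * z i) = l ^ 2 * qf a z := by
  simp only [qf, Finset.mul_sum]
  refine Finset.sum_congr rfl fun i _ => ?_
  rw [norm_mul, mul_pow, Complex.norm_real, Real.norm_eq_abs, sq_abs]; ring

theorem lamF_nonneg (hρ : 0 < ρ) (z : ι → ℂ) : 0 ≤ lamF a ρ z := by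
  have h : 0 < max (√(qf a z)) ρ := lt_of_lt_of_le hρ (le_max_right _ _)
  rw [lamF, sub_nonneg, div_le_one h]
  exact le_max_right _ _

theorem lamF_lt_one (hρ : 0 < ρ) (z : ι → ℂ) : lamF a ρ z < 1 := by
  have h : 0 < max (√(qf a z)) ρ := lt_of_lt_of_le hρ (le_max_right _ _)
  have : 0 < ρ / max (√(qf a z)) ρ := by positivity
  rw [lamF]; linarith

theorem lamF_of_le (hρ : 0 < ρ) {z : ι → ℂ} (h : √(qf a z) ≤ ρ) : lamF a ρ z = 0 := by
  rw [lamF, max_eq_right h, div_self hρ.ne', sub_self]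

theorem lamF_mul_sqrt (hρ : 0 < ρ) (z : ι → ℂ) :
    lamF a ρ z * √(qf a z) = max (√(qf a z) - ρ) 0 := by
  rcases le_or_gt (√(qf a z)) ρ with h | h
  · rw [lamF_of_le hρ h, max_eq_right (by linarith), zero_mul]
  · have h0 : √(qf a z) ≠ 0 := (hρ.trans h).ne'
    rw [lamF, max_eq_left h.le, max_eq_left (by linarith)]
    field_simp

theorem Frad_eq (ha : ∀ i, 0 < a i) (hρ : 0 < ρ) (z : ι → ℂ) :
    Frad a T ρ z = T * lamF a ρ z ^ 2 * qf a z := by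
  rw [Frad, ← lamF_mul_sqrt hρ, mul_pow, Real.sq_sqrt (qf_nonneg ha z), mul_assoc]

theorem gFrad_inner (z u : ι → ℂ) :
    ∑ i, ((starRingEnd ℂ) (gFrad a T ρ z i) * u i).re = 2 * T * lamF a ρ z * qb a z u := by
  simp only [gFrad, qb, Finset.mul_sum, map_mul, Complex.conj_ofReal, mul_assoc (_ : ℂ),
    Complex.re_ofReal_mul]
  exact Finset.sum_congr rfl fun i _ => by ring

theorem qb_self (z : ι → ℂ) : qb a z z = qf a z := by
  simp only [qb, qf, Complex.conj_mul', ← Complex.ofReal_pow, Complex.ofReal_re]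

/-- One-sided Taylor estimate: `Frad` is `T` times the squared distance to an ellipsoid. -/
theorem Frad_taylor (ha : ∀ i, 0 < a i) (hT : 0 ≤ T) (hρ : 0 < ρ) (z u : ι → ℂ) :
    Frad a T ρ (z + u) ≤ Frad a T ρ z + ∑ i, ((starRingEnd ℂ) (gFrad a T ρ z i) * u i).re +
      T * qf a u := by
  set l := lamF a ρ z with hl
  have hl0 : 0 ≤ l := lamF_nonneg hρ z
  have hl1 : l < 1 := lamF_lt_one hρ z
  have h1 : √(qf a (z + u)) ≤ ρ + √(qf a (fun i => (l:ℂ) * z i + u i)) := by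
    have h2 : z + u = (fun i => ((1 - l : ℝ) : ℂ) * z i) + fun i => (l:ℂ) * z i + u i := by
      ext i; simp only [Pi.add_apply]; push_cast; ring
    rw [h2]
    refine (sqrt_qf_add_le ha _ _).trans (add_le_add_left ?_ _)
    rw [qf_smul, Real.sqrt_mul (sq_nonneg _), Real.sqrt_sq (by linarith), sub_mul, one_mul, hl,
      lamF_mul_sqrt hρ]
    linarith [le_max_left (√(qf a z) - ρ) 0]
  have h3 : max (√(qf a (z + u)) - ρ) 0 ≤ √(qf a (fun i => (l:ℂ) * z i + u i)) :=
    max_le (by linarith) (Real.sqrt_nonneg _)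
  have h4 : (max (√(qf a (z + u)) - ρ) 0) ^ 2 ≤ qf a (fun i => (l:ℂ) * z i + u i) := by
    rw [← Real.sq_sqrt (qf_nonneg ha (fun i => (l:ℂ) * z i + u i))]
    exact pow_le_pow_left₀ (le_max_right _ _) h3 2
  rw [gFrad_inner, Frad_eq ha hρ z, Frad]
  refine (mul_le_mul_of_nonneg_left h4 hT).trans (le_of_eq ?_)
  rw [qf_add_smul]; ring

theorem qf_le_sum (ha : ∀ i, 0 < a i) (u : ι → ℂ) :
    qf a u ≤ (∑ i, π / a i) * ∑ i, ‖u i‖ ^ 2 := by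
  rw [Finset.mul_sum]
  refine Finset.sum_le_sum fun i _ => ?_
  have h1 : π / a i ≤ ∑ i, π / a i := Finset.single_le_sum (f := fun i => π / a i)
    (fun i _ => div_nonneg Real.pi_pos.le (ha i).le) (Finset.mem_univ i)
  calc π * ‖u i‖ ^ 2 / a i = π / a i * ‖u i‖ ^ 2 := by ring
    _ ≤ _ := mul_le_mul_of_nonneg_right h1 (by positivity)

theorem norm_le_sqrt_qf (ha : ∀ i, 0 < a i) (z : ι → ℂ) (i : ι) :
    ‖z i‖ ≤ √(a i / π) * √(qf a z) := by
  have h1 : π * ‖z i‖ ^ 2 / a i ≤ qf a z := Finset.single_le_sum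
    (f := fun i => π * ‖z i‖ ^ 2 / a i)
    (fun i _ => by have := ha i; have := Real.pi_pos; positivity) (Finset.mem_univ i)
  have h2 : 0 < a i := ha i
  have h3 := Real.pi_pos
  rw [← Real.sqrt_mul (by positivity)]
  refine Real.le_sqrt_of_sq_le ?_
  calc ‖z i‖ ^ 2 = a i / π * (π * ‖z i‖ ^ 2 / a i) := by field_simp
    _ ≤ _ := mul_le_mul_of_nonneg_left h1 (by positivity)

/-- The gradient of `Frad` is at bounded distance from that of `T q`. -/
theorem gFrad_near (ha : ∀ i, 0 < a i) (hT : 0 ≤ T) (hρ : 0 < ρ) (z : ι → ℂ) (i : ι) :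
    ‖gFrad a T ρ z i - ((2 * π * (T / a i) : ℝ) : ℂ) * z i‖ ≤
      ∑ j, 2 * π * (T / a j) * ρ * √(a j / π) := by
  have hp := Real.pi_pos
  have h0 : ∀ j, 0 ≤ 2 * π * (T / a j) * ρ * √(a j / π) := fun j => by
    have := ha j; positivity
  refine le_trans ?_ (Finset.single_le_sum (f := fun j => 2 * π * (T / a j) * ρ * √(a j / π))
    (fun j _ => h0 j) (Finset.mem_univ i))
  have hm : 0 < max (√(qf a z)) ρ := lt_of_lt_of_le hρ (le_max_right _ _)
  have hai := ha i
  have h1 : gFrad a T ρ z i - ((2 * π * (T / a i) : ℝ) : ℂ) * z i =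
      ((-(2 * π * (T / a i) * (ρ / max (√(qf a z)) ρ)) : ℝ) : ℂ) * z i := by
    rw [gFrad, lamF, ← sub_mul]; congr 1; push_cast; ring
  rw [h1, norm_mul, Complex.norm_real, norm_neg, Real.norm_of_nonneg (by positivity)]
  have h2 := norm_le_sqrt_qf ha z i
  have h3 : ρ / max (√(qf a z)) ρ * ‖z i‖ ≤ ρ * √(a i / π) := by
    rw [div_mul_eq_mul_div, div_le_iff₀ hm, mul_assoc]
    refine mul_le_mul_of_nonneg_left (h2.trans ?_) hρ.le
    exact mul_le_mul_of_nonneg_left (le_max_left _ _) (Real.sqrt_nonneg _)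
  calc 2 * π * (T / a i) * (ρ / max (√(qf a z)) ρ) * ‖z i‖
      = 2 * π * (T / a i) * (ρ / max (√(qf a z)) ρ * ‖z i‖) := by ring
    _ ≤ 2 * π * (T / a i) * (ρ * √(a i / π)) := mul_le_mul_of_nonneg_left h3 (by positivity)
    _ = _ := by ring

end Radial

theorem eq_ex_mul_of_hasDerivAt {y : ℝ → ℂ} (μ : ℝ)
    (hy : ∀ t, HasDerivAt y (Complex.I * (((2 * π * μ : ℝ) : ℂ) * y t)) t) (t : ℝ) :
    y t = ex (μ * t) * y 0 := by
  have hd : ∀ t, HasDerivAt (fun t => ex (-μ * t) * y t) 0 t := by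
    intro t
    convert! (hasDerivAt_ex_mul (-μ) t).mul (hy t) using 1
    push_cast; ring
  have h1 := is_const_of_deriv_eq_zero (fun t => (hd t).differentiableAt) (fun t => (hd t).deriv) t 0
  simp only [mul_zero, ex_zero, one_mul] at h1
  rw [← h1, ← mul_assoc, ← ex_add, show μ * t + -μ * t = 0 by ring, ex_zero, one_mul]

theorem exists_int_of_ex_eq_one {μ : ℝ} (h : ex μ = 1) : ∃ l : ℤ, μ = l := by
  rw [ex, Complex.exp_eq_one_iff] at h
  obtain ⟨l, hl⟩ := h
  refine ⟨l, ?_⟩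
  have h2 : (2 * π * Complex.I : ℂ) ≠ 0 := Complex.two_pi_I_ne_zero
  have h3 : (μ : ℂ) = l := by
    apply mul_left_cancel₀ h2
    linear_combination hl
  exact_mod_cast h3

/-- The one-dimensional Hamiltonian `R (√π|x| - ρ)₊²`. -/
def hHam (R ρ : ℝ) (hR : 0 ≤ R) (hRn : ∀ m : ℤ, R ≠ m) (hρ : 0 < ρ) : Ham Unit where
  H := Frad (fun _ => 1) R ρ
  g := gFrad (fun _ => 1) R ρ
  C := R * π
  d := fun _ => R
  Cinf := ∑ _j : Unit, 2 * π * (R / 1) * ρ * √(1 / π)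
  contH := continuous_Frad
  contG := continuous_gFrad hρ
  C_nonneg := mul_nonneg hR Real.pi_pos.le
  taylor := fun z u => by
    refine (Frad_taylor (fun _ => one_pos) hR hρ z u).trans (add_le_add_right ?_ _)
    have := qf_le_sum (a := fun _ : Unit => (1:ℝ)) (fun _ => one_pos) u
    rw [mul_assoc]
    refine mul_le_mul_of_nonneg_left (this.trans (le_of_eq ?_)) hR
    simp
  d_ne := fun _ m => hRn m
  near := fun z i => by
    simpa using gFrad_near (a := fun _ : Unit => (1:ℝ)) (fun _ => one_pos) hR hρ z i

theorem qf_unit (z : Unit → ℂ) : qf (fun _ => 1) z = π * ‖z ()‖ ^ 2 := by simp [qf]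

/-- One-periodic orbits of `hHam`: either of action zero, or circles of integral frequency `l`. -/
theorem hHam_orbit {R ρ : ℝ} (hR : 0 ≤ R) (hRn : ∀ m : ℤ, R ≠ m) (hρ : 0 < ρ) (x : ℝ → Unit → ℂ)
    (hx : (hHam R ρ hR hRn hρ).IsOrbit x) :
    (hHam R ρ hR hRn hρ).AO x = 0 ∨ ∃ l : ℤ, 1 ≤ l ∧ (l:ℝ) < R ∧
      (hHam R ρ hR hRn hρ).AO x = l * ρ ^ 2 * R / (R - l) ∧
      ρ / √π ≤ ‖ft (fun t => x t ()) l‖ := by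
  have hpi := Real.pi_pos
  obtain ⟨hd, hp⟩ := hx
  replace hd : ∀ t, HasDerivAt (fun t => x t ()) (Complex.I * (((2 * π * (R *
      lamF (fun _ => 1) ρ (x t)) : ℝ) : ℂ) * x t ())) t := by
    intro t
    have := hd t ()
    simp only [hHam, gFrad, div_one, mul_assoc] at this ⊢
    exact this
  have hns : ∀ t, ‖x t ()‖ ^ 2 = ‖x 0 ()‖ ^ 2 := by
    intro t
    have h1 : ∀ t, HasDerivAt (fun t => ‖x t ()‖ ^ 2) 0 t := by
      intro t
      convert! (hd t).norm_sq using 1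
      simp only [Complex.inner, Complex.mul_re, Complex.mul_im, Complex.I_re, Complex.I_im,
        Complex.ofReal_re, Complex.ofReal_im, Complex.conj_re, Complex.conj_im]
      ring
    exact is_const_of_deriv_eq_zero (fun t => (h1 t).differentiableAt) (fun t => (h1 t).deriv) t 0
  have hq : ∀ t, qf (fun _ => 1) (x t) = qf (fun _ => 1) (x 0) := fun t => by
    rw [qf_unit, qf_unit, hns]
  have hlam : ∀ t, lamF (fun _ => 1) ρ (x t) = lamF (fun _ => 1) ρ (x 0) := fun t => by
    rw [lamF, lamF, hq]
  set lam := lamF (fun _ => 1) ρ (x 0) with hlamdef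
  set Q := qf (fun _ => 1) (x 0) with hQ
  have hAO : (hHam R ρ hR hRn hρ).AO x = R * lam * Q - R * lam ^ 2 * Q := by
    have h1 : ∀ t, ∑ i, ((starRingEnd ℂ) ((hHam R ρ hR hRn hρ).g (x t) i) * x t i).re =
        2 * R * lam * Q := by
      intro t
      have := gFrad_inner (a := fun _ => 1) (T := R) (ρ := ρ) (x t) (x t)
      rw [qb_self, hlam, hq] at this
      exact this
    have h2 : ∀ t, (hHam R ρ hR hRn hρ).H (x t) = R * lam ^ 2 * Q := by
      intro t
      have := Frad_eq (a := fun _ => 1) (T := R) (fun _ => one_pos) hρ (x t)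
      rw [hlam, hq] at this
      exact this
    rw [Ham.AO]
    simp only [h1, h2, intervalIntegral.integral_const, sub_zero, one_smul]
    ring
  rcases le_or_gt (√Q) ρ with h | h
  · left
    rw [hAO, hlamdef, lamF_of_le hρ h]; ring
  right
  have hx0 : x 0 () ≠ 0 := by
    intro h0
    rw [hQ, qf_unit, h0] at h
    simp at h
    linarith
  have hQ0 : 0 ≤ Q := qf_nonneg (fun _ => one_pos) _
  have hxt : ∀ t, x t () = ex (R * lam * t) * x 0 () :=
    eq_ex_mul_of_hasDerivAt (y := fun t => x t ()) (R * lam) (fun t => by simpa only [hlam] using hd t)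
  obtain ⟨l, hl⟩ : ∃ l : ℤ, R * lam = l := by
    apply exists_int_of_ex_eq_one
    have h1 := hxt 1
    have h2 : x 1 () = x 0 () := by have := hp 0; rw [zero_add] at this; rw [this]
    rw [h2, mul_one] at h1
    exact (mul_right_cancel₀ hx0 ((one_mul _).trans h1)).symm
  have hlp : 0 < lam := by
    have := lamF_mul_sqrt (a := fun _ => 1) hρ (x 0)
    rw [← hlamdef, ← hQ, max_eq_left (by linarith)] at this
    by_contra hneg
    nlinarith
  have hRpos : 0 < R := lt_of_le_of_ne hR (by simpa using (hRn 0).symm)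
  have hl1 : lam < 1 := lamF_lt_one hρ _
  have hlR : (l:ℝ) < R := by rw [← hl]; nlinarith
  have hlpos : (0:ℝ) < l := by rw [← hl]; positivity
  refine ⟨l, by exact_mod_cast hlpos, hlR, ?_, ?_⟩
  · rw [hAO, ← hl]
    have h3 : (1 - lam) * √Q = ρ := by
      have := lamF_mul_sqrt (a := fun _ => 1) hρ (x 0)
      rw [← hlamdef, ← hQ, max_eq_left (by linarith)] at this
      linarith
    have h4 : ρ ^ 2 = (1 - lam) ^ 2 * Q := by
      rw [← h3, mul_pow, Real.sq_sqrt hQ0]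
    have h5 : (1 - lam) ≠ 0 := by linarith
    rw [h4, eq_div_iff (by nlinarith)]
    ring
  · have h1 : ft (fun t => x t ()) l = x 0 () := by
      rw [ft]
      have : ∀ t : ℝ, x t () * ex (-(l * t)) = x 0 () := by
        intro t
        rw [hxt, hl, mul_right_comm, ← ex_add, add_neg_cancel, ex_zero, one_mul]
      simp only [this, intervalIntegral.integral_const, sub_zero, one_smul]
    rw [h1, div_le_iff₀ (by positivity)]
    rw [hQ, qf_unit, Real.sqrt_mul hpi.le, Real.sqrt_sq (norm_nonneg _)] at h
    linarith

/-! ### Equivariant families in the radial model -/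

/-- The action of the one-periodic orbits of frequency `l` of `hHam R ρ`. -/
def lev (R ρ l : ℝ) : ℝ := l * ρ ^ 2 * R / (R - l)

theorem lev_zero (R ρ : ℝ) : lev R ρ 0 = 0 := by simp [lev]

theorem lev_add_le {R ρ l l' : ℝ} (h0 : 0 ≤ l) (h : l + 1 ≤ l') (hR : l' < R) :
    lev R ρ l + ρ ^ 2 ≤ lev R ρ l' := by
  have h1 : 0 < R - l' := by linarith
  have h2 : 0 < R - l := by linarith
  have h3 : lev R ρ l' - lev R ρ l - ρ ^ 2 =
      ρ ^ 2 * (R ^ 2 * (l' - l) - (R - l) * (R - l')) / ((R - l) * (R - l')) := by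
    rw [lev, lev]; field_simp; ring
  have h4 : 0 ≤ R ^ 2 * (l' - l) - (R - l) * (R - l') := by nlinarith
  have h5 : 0 ≤ ρ ^ 2 * (R ^ 2 * (l' - l) - (R - l) * (R - l')) / ((R - l) * (R - l')) := by
    positivity
  linarith

theorem mul_le_lev {R ρ l : ℝ} (h0 : 0 ≤ l) (hR : l < R) : l * ρ ^ 2 ≤ lev R ρ l := by
  rw [lev, le_div_iff₀ (by linarith)]
  nlinarith [mul_nonneg h0 (sq_nonneg ρ)]

theorem exists_pos_le_of_finite (k : ℕ) (f : ℕ → ℝ) (hf : ∀ l, 0 < f l) :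
    ∃ δ > 0, ∀ l < k, δ ≤ f l := by
  induction k with
  | zero => exact ⟨1, one_pos, fun l hl => absurd hl (Nat.not_lt_zero _)⟩
  | succ k ih =>
    obtain ⟨δ, hδ, h⟩ := ih
    refine ⟨min δ (f k), lt_min hδ (hf k), fun l hl => ?_⟩
    rcases Nat.lt_succ_iff_lt_or_eq.1 hl with h' | rfl
    · exact (min_le_left _ _).trans (h l h')
    · exact min_le_right _ _

section Stages

variable {R ρ : ℝ} (hR : 0 ≤ R) (hRn : ∀ m : ℤ, R ≠ m) (hρ : 0 < ρ)

/-- Orbits of `hHam` with action close to `lev l` have frequency `l`. -/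
theorem hHam_orbit_near {l : ℕ} (hl : 1 ≤ l) (hlR : (l:ℝ) < R) (x : ℝ → Unit → ℂ)
    (hx : (hHam R ρ hR hRn hρ).IsOrbit x)
    (h1 : lev R ρ l - ρ ^ 2 / 4 ≤ (hHam R ρ hR hRn hρ).AO x)
    (h2 : (hHam R ρ hR hRn hρ).AO x ≤ lev R ρ l + ρ ^ 2 / 4) :
    ρ / √π ≤ ‖ft (fun t => x t ()) (l:ℤ)‖ := by
  have hρ2 : 0 < ρ ^ 2 := by positivity
  have hl' : (1:ℝ) ≤ l := by exact_mod_cast hl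
  rcases hHam_orbit hR hRn hρ x hx with h0 | ⟨l', hl1, hl'R, hA, hf⟩
  · have := mul_le_lev (ρ := ρ) (by linarith) hlR
    nlinarith
  · have hA' : (hHam R ρ hR hRn hρ).AO x = lev R ρ l' := hA
    rcases lt_trichotomy (l:ℤ) l' with h | h | h
    · have h3 : (l:ℝ) + 1 ≤ l' := by exact_mod_cast h
      have := lev_add_le (ρ := ρ) (by linarith) h3 hl'R
      linarith
    · rw [h]; exact hf
    · have h3 : (l':ℝ) + 1 ≤ l := by exact_mod_cast h
      have h4 : (0:ℝ) ≤ l' := by exact_mod_cast (by omega : (0:ℤ) ≤ l')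
      have := lev_add_le (ρ := ρ) h4 h3 hlR
      linarith

/-- There are no orbits of `hHam` with action strictly between consecutive levels. -/
theorem hHam_orbit_gap {l : ℕ} (hlR : (l:ℝ) + 1 < R) {ε ε' : ℝ} (hε : 0 < ε) (hε' : 0 < ε')
    (x : ℝ → Unit → ℂ) (hx : (hHam R ρ hR hRn hρ).IsOrbit x)
    (h1 : lev R ρ l + ε ≤ (hHam R ρ hR hRn hρ).AO x)
    (h2 : (hHam R ρ hR hRn hρ).AO x ≤ lev R ρ ((l:ℝ) + 1) - ε') : False := by
  have hρ2 : 0 < ρ ^ 2 := by positivity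
  have hl0 : (0:ℝ) ≤ l := Nat.cast_nonneg l
  have h0l := mul_le_lev (ρ := ρ) hl0 (by linarith : (l:ℝ) < R)
  rcases hHam_orbit hR hRn hρ x hx with h0 | ⟨l', hl1, hl'R, hA, -⟩
  · nlinarith
  · have hA' : (hHam R ρ hR hRn hρ).AO x = lev R ρ l' := hA
    have h4 : (0:ℝ) ≤ l' := by exact_mod_cast (by omega : (0:ℤ) ≤ l')
    rcases lt_trichotomy (l':ℤ) l with h | h | h
    · have h3 : (l':ℝ) + 1 ≤ l := by exact_mod_cast h
      have := lev_add_le (ρ := ρ) h4 h3 (by linarith : (l:ℝ) < R)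
      linarith
    · rw [hA', h] at h1; push_cast at h1; linarith
    · rcases eq_or_lt_of_le (show (l:ℤ) + 1 ≤ l' by omega) with h5 | h5
      · rw [hA', ← h5] at h2; push_cast at h2; linarith
      · have h3 : (l:ℝ) + 1 + 1 ≤ l' := by exact_mod_cast h5
        have := lev_add_le (ρ := ρ) (by linarith) h3 hl'R
        linarith

/-- The discrete gradient flow of `hHam` pushes a loop of action at least `e₀ > 0` up to the level
`lev R ρ k - ε`, provided that for each `l < k` the `l`-th Fourier coefficient vanishes at the stage
`I l` if the action has reached `lev R ρ l - ε` there: near a critical point at the level of `l`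
this coefficient is nonzero, so such loops are pushed past it. -/
theorem hHam_stages {k : ℕ} (hk : 1 ≤ k) (hkR : (k:ℝ) < R) {e₀ e : ℝ} (he₀ : 0 < e₀) (he : 0 < e) :
    ∃ ε > 0, ε ≤ e ∧ ∃ N₀ : ℕ, ∀ N ≥ N₀, ∃ I : ℕ → ℕ, Monotone I ∧
      ∀ c, e₀ ≤ (hHam R ρ hR hRn hρ).Act N c →
        (∀ l : ℕ, 1 ≤ l → l < k →
          lev R ρ l - ε ≤ (hHam R ρ hR hRn hρ).Act N (((hHam R ρ hR hRn hρ).eta N)^[I l] c) →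
          (((hHam R ρ hR hRn hρ).eta N)^[I l] c) () (l:ℤ) = 0) →
        lev R ρ k - ε ≤ (hHam R ρ hR hRn hρ).Act N (((hHam R ρ hR hRn hρ).eta N)^[I k] c) := by
  set D := hHam R ρ hR hRn hρ with hD
  have hρ2 : 0 < ρ ^ 2 := by positivity
  set γ : ℝ := ρ / √π / 2 with hγ
  have hpi : 0 < √π := Real.sqrt_pos.2 Real.pi_pos
  have hγ0 : 0 < γ := by positivity
  have hlt : ∀ l : ℕ, l ≤ k → (l:ℝ) < R := fun l hl =>
    lt_of_le_of_lt (by exact_mod_cast hl) hkR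
  have hA : ∀ l : ℕ, ∃ N₀ : ℕ, ∃ β > 0, 1 ≤ l → l < k → ∀ N ≥ N₀, ∀ c,
      lev R ρ l - ρ ^ 2 / 4 ≤ D.Act N c → D.Act N c ≤ lev R ρ l + ρ ^ 2 / 4 →
      D.gsq N c < β ^ 2 → γ ≤ ‖c () (l:ℤ)‖ := by
    intro l
    by_cases h : 1 ≤ l ∧ l < k
    · obtain ⟨N₀, β, hβ, h3⟩ := D.exists_coeff_gap (v := lev R ρ l - ρ ^ 2 / 4)
        (v' := lev R ρ l + ρ ^ 2 / 4) (γ := γ) () (l:ℤ) (fun x hx h1 h2 => by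
          have := hHam_orbit_near hR hRn hρ h.1 (hlt l h.2.le) x hx h1 h2
          have h5 : 0 < ρ / √π := by positivity
          rw [hγ]; linarith)
      exact ⟨N₀, β, hβ, fun _ _ => h3⟩
    · exact ⟨0, 1, one_pos, fun h1 h2 => absurd ⟨h1, h2⟩ h⟩
  choose N₁ β hβ hA using hA
  obtain ⟨δ, hδ, hδβ⟩ := exists_pos_le_of_finite k β hβ
  set ε : ℝ := min e (min (ρ ^ 2 / 4) (δ * γ / 8)) with hε
  have hε0 : 0 < ε := by positivity
  have hεe : ε ≤ e := min_le_left _ _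
  have hερ : ε ≤ ρ ^ 2 / 4 := (min_le_right _ _).trans (min_le_left _ _)
  have hεδ : ε ≤ δ * γ / 8 := (min_le_right _ _).trans (min_le_right _ _)
  have hB : ∀ l : ℕ, ∃ N₀ : ℕ, ∃ β > 0, l < k → ∀ N ≥ N₀, ∀ c,
      lev R ρ l + min ε e₀ ≤ D.Act N c → D.Act N c ≤ lev R ρ ((l:ℝ) + 1) - ε →
      β ^ 2 ≤ D.gsq N c := by
    intro l
    by_cases h : l < k
    · obtain ⟨N₀, β, hβ, h3⟩ := D.exists_gap (v := lev R ρ l + min ε e₀)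
        (v' := lev R ρ ((l:ℝ) + 1) - ε) (fun x hx h1 h2 =>
          hHam_orbit_gap hR hRn hρ (by exact_mod_cast hlt (l + 1) h) (lt_min hε0 he₀) hε0 x hx h1 h2)
      exact ⟨N₀, β, hβ, fun _ => h3⟩
    · exact ⟨0, 1, one_pos, fun h1 => absurd h1 h⟩
  choose N₂ β₂ hβ₂ hB using hB
  refine ⟨ε, hε0, hεe, (∑ l ∈ Finset.range k, (N₁ l + N₂ l)) + k, fun N hN => ?_⟩
  have hN12 : ∀ l < k, N₁ l ≤ N ∧ N₂ l ≤ N := by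
    intro l hl
    have := Finset.single_le_sum (f := fun l => N₁ l + N₂ l) (fun _ _ => Nat.zero_le _)
      (Finset.mem_range.2 hl)
    omega
  have hJ : ∀ l : ℕ, ∃ J : ℕ, l < k → ∀ c, (l = 0 ∧ e₀ ≤ D.Act N c) ∨
      (1 ≤ l ∧ c () (l:ℤ) = 0 ∧ lev R ρ l - ε ≤ D.Act N c) →
      lev R ρ ((l:ℝ) + 1) - ε ≤ D.Act N ((D.eta N)^[J] c) := by
    intro l
    by_cases hl : l < k
    swap
    · exact ⟨0, fun h => absurd h hl⟩
    obtain ⟨J₁, hJ₁⟩ := D.exists_push N (hβ₂ l) (hB l hl N (hN12 l hl).2)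
    rcases Nat.eq_zero_or_pos l with rfl | hl1
    · refine ⟨J₁, fun _ c hc => hJ₁ c ?_⟩
      rcases hc with ⟨-, hc⟩ | ⟨hc, -⟩
      · rw [Nat.cast_zero, lev_zero, zero_add]; exact (min_le_right _ _).trans hc
      · omega
    · have h5 : 2 * ((lev R ρ l + ε) - (lev R ρ l - ε)) < β l * γ := by
        have := mul_le_mul_of_nonneg_right (hδβ l hl) hγ0.le
        have := mul_pos hδ hγ0
        linarith
      obtain ⟨J₂, hJ₂⟩ := D.exists_push_of_coeff N (i := ()) (l := (l:ℤ)) (hβ l)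
        (mem_Mo.2 ⟨by omega, by omega⟩) h5
        (fun c h1 h2 h3 => hA l hl1 hl N (hN12 l hl).1 c (by linarith) (by linarith) h3)
      refine ⟨J₁ + J₂, fun _ c hc => ?_⟩
      rcases hc with ⟨hc, -⟩ | ⟨-, hc, hc'⟩
      · omega
      · rw [Function.iterate_add_apply]
        refine hJ₁ _ (le_trans ?_ (hJ₂ c hc hc'))
        linarith [min_le_left ε e₀]
  choose J hJ using hJ
  refine ⟨fun l => ∑ j ∈ Finset.range l, J j, ?_, fun c hc hcoef => ?_⟩
  · exact monotone_nat_of_le_succ fun l => by rw [Finset.sum_range_succ]; omega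
  have key : ∀ l : ℕ, 1 ≤ l → l ≤ k →
      lev R ρ l - ε ≤ D.Act N ((D.eta N)^[∑ j ∈ Finset.range l, J j] c) := by
    intro l hl
    induction l, hl using Nat.le_induction with
    | base =>
      intro h
      have := hJ 0 (by omega) c (Or.inl ⟨rfl, hc⟩)
      simpa using this
    | succ l hl ih =>
      intro h
      have h1 := ih (by omega)
      have h2 := hcoef l hl (by omega) h1
      have := hJ l (by omega) _ (Or.inr ⟨hl, h2, h1⟩)
      rw [Finset.sum_range_succ, add_comm (∑ j ∈ Finset.range l, J j), Function.iterate_add_apply]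
      push_cast
      exact this
  exact key k hk le_rfl

end Stages

/-- A nonzero vector annihilated by the first `k - 1` rows of a Vandermonde matrix has at least `k`
nonzero entries. -/
theorem card_support_of_vandermonde {J : Type*} [Fintype J] (k : ℕ) (f : J → ℂ)
    (hf : Function.Injective f) (T : J → ℂ) (hT : T ≠ 0)
    (h : ∀ r : ℕ, r < k - 1 → ∑ j, T j * f j ^ r = 0) :
    k ≤ (Finset.univ.filter fun j => T j ≠ 0).card := by
  by_contra! hlt
  set S := Finset.univ.filter fun j => T j ≠ 0 with hS
  let e := S.equivFin
  have hz : (fun i => T (e.symm i : J)) = 0 := by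
    refine Matrix.eq_zero_of_forall_pow_sum_mul_pow_eq_zero (f := fun i => f (e.symm i : J)) ?_ ?_
    · intro i i' hii
      exact e.symm.injective (Subtype.ext (hf hii))
    · intro r
      rw [← h r (by omega), e.symm.sum_comp (fun s : S => T s * f s ^ (r:ℕ)),
        Finset.sum_coe_sort S (fun j => T j * f j ^ (r:ℕ))]
      refine Finset.sum_subset (Finset.subset_univ _) fun j _ hj => ?_
      have : T j = 0 := by simpa [hS] using hj
      rw [this, zero_mul]
  apply hT
  ext j
  by_contra hj
  have hjS : j ∈ S := by simpa [hS] using hj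
  have := congrFun hz (e ⟨j, hjS⟩)
  simp only [Equiv.symm_apply_apply, Pi.zero_apply] at this
  exact hj this

/-- Small loops with positive frequencies have positive action with respect to `hHam`. -/
theorem hHam_start {R ρ : ℝ} (hR : 0 ≤ R) (hRn : ∀ m : ℤ, R ≠ m) (hρ : 0 < ρ) {m₀ : ℕ}
    (hm₀ : 1 ≤ m₀) (hm₀R : 2 * R ≤ m₀) (N : ℕ) (c : Unit → ℤ → ℂ) (hc : ∀ m ≤ 0, c () m = 0)
    (hE : ∑ m ∈ Mo N, π * m * ‖c () m‖ ^ 2 ≤ ρ ^ 2 / m₀) :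
    (∑ m ∈ Mo N, π * m * ‖c () m‖ ^ 2) / 2 ≤ (hHam R ρ hR hRn hρ).Act N c := by
  have hpi := Real.pi_pos
  have hm0 : (0:ℝ) < m₀ := by exact_mod_cast hm₀
  set b := c () with hb
  set E := ∑ m ∈ Mo N, π * m * ‖b m‖ ^ 2 with hEdef
  set F₁ := (Mo N).filter fun m : ℤ => 1 ≤ m ∧ m ≤ m₀ with hF₁
  set F₂ := (Mo N).filter fun m => (m₀:ℤ) < m with hF₂
  have hterm : ∀ m : ℤ, 0 ≤ π * m * ‖b m‖ ^ 2 := by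
    intro m
    rcases le_or_gt m 0 with h | h
    · rw [hc m h]; simp
    · have : (0:ℝ) < m := by exact_mod_cast h
      positivity
  have hsplit : ∀ t, tp (Mo N) b t = tp F₁ b t + tp F₂ b t := by
    intro t
    simp only [tp, hF₁, hF₂, Finset.sum_filter, ← Finset.sum_add_distrib]
    refine Finset.sum_congr rfl fun m _ => ?_
    split_ifs with h1 h2 h2
    · omega
    · rw [add_zero]
    · rw [zero_add]
    · rw [hc m (by omega)]; simp
  have hsub : ∀ F ⊆ Mo N, ∑ m ∈ F, π * m * ‖b m‖ ^ 2 ≤ E := fun F hF =>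
    Finset.sum_le_sum_of_subset_of_nonneg hF fun m _ _ => hterm m
  have hlow : ∀ t, √(π * ‖tp F₁ b t‖ ^ 2) ≤ ρ := by
    intro t
    have h1 : ‖tp F₁ b t‖ ≤ ∑ m ∈ F₁, ‖b m‖ := by
      refine (norm_sum_le _ _).trans (le_of_eq ?_)
      simp only [norm_mul, norm_ex, mul_one]
    have h2 : (∑ m ∈ F₁, ‖b m‖) ^ 2 ≤ F₁.card * ∑ m ∈ F₁, ‖b m‖ ^ 2 := sq_sum_le_card_mul_sum_sq
    have h3 : (F₁.card : ℝ) ≤ m₀ := by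
      have : F₁ ⊆ Finset.Icc 1 (m₀:ℤ) := fun m hm => Finset.mem_Icc.2 (Finset.mem_filter.1 hm).2
      have := Finset.card_le_card this
      rw [Int.card_Icc] at this
      exact_mod_cast (by omega : F₁.card ≤ m₀)
    have h4 : π * ∑ m ∈ F₁, ‖b m‖ ^ 2 ≤ E := by
      refine le_trans ?_ (hsub F₁ (Finset.filter_subset _ _))
      rw [Finset.mul_sum]
      refine Finset.sum_le_sum fun m hm => ?_
      have : (1:ℝ) ≤ m := by exact_mod_cast (Finset.mem_filter.1 hm).2.1
      have h5 : 0 ≤ π * ‖b m‖ ^ 2 := by positivity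
      nlinarith
    rw [Real.sqrt_le_left hρ.le]
    have h6 : 0 ≤ ∑ m ∈ F₁, ‖b m‖ ^ 2 := by positivity
    calc π * ‖tp F₁ b t‖ ^ 2 ≤ π * (m₀ * ∑ m ∈ F₁, ‖b m‖ ^ 2) := by
          refine mul_le_mul_of_nonneg_left ?_ hpi.le
          exact (pow_le_pow_left₀ (norm_nonneg _) h1 2).trans
            (h2.trans (mul_le_mul_of_nonneg_right h3 h6))
      _ = m₀ * (π * ∑ m ∈ F₁, ‖b m‖ ^ 2) := by ring
      _ ≤ m₀ * (ρ ^ 2 / m₀) := mul_le_mul_of_nonneg_left (h4.trans hE) hm0.le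
      _ = ρ ^ 2 := by field_simp
  have hH : ∀ t, (hHam R ρ hR hRn hρ).H (ev N c t) ≤ R * π * ‖tp F₂ b t‖ ^ 2 := by
    intro t
    have h1 : √(qf (fun _ => 1) (ev N c t)) ≤ √(π * ‖tp F₁ b t‖ ^ 2) + √(π * ‖tp F₂ b t‖ ^ 2) := by
      have h2 : ev N c t = (fun _ => tp F₁ b t) + fun _ => tp F₂ b t := by
        ext i; exact hsplit t
      rw [h2]
      refine (sqrt_qf_add_le (fun _ => one_pos) _ _).trans (le_of_eq ?_)
      rw [qf_unit, qf_unit]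
    have h3 : max (√(qf (fun _ => 1) (ev N c t)) - ρ) 0 ≤ √(π * ‖tp F₂ b t‖ ^ 2) :=
      max_le (by linarith [hlow t]) (Real.sqrt_nonneg _)
    have h4 := pow_le_pow_left₀ (le_max_right _ _) h3 2
    rw [Real.sq_sqrt (by positivity)] at h4
    calc (hHam R ρ hR hRn hρ).H (ev N c t) = R * (max (√(qf (fun _ => 1) (ev N c t)) - ρ) 0) ^ 2 := rfl
      _ ≤ R * (π * ‖tp F₂ b t‖ ^ 2) := mul_le_mul_of_nonneg_left h4 hR
      _ = _ := by ring
  have hInt : ∫ t in (0:ℝ)..1, (hHam R ρ hR hRn hρ).H (ev N c t) ≤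
      R * π * ∑ m ∈ F₂, ‖b m‖ ^ 2 := by
    rw [← integral_norm_sq_tp, ← intervalIntegral.integral_const_mul]
    have hcH := (hHam R ρ hR hRn hρ).contH
    refine intervalIntegral.integral_mono_on zero_le_one ?_ ?_ fun t _ => hH t
    · apply Continuous.intervalIntegrable; fun_prop
    · apply Continuous.intervalIntegrable; fun_prop
  have h7 : R * π * ∑ m ∈ F₂, ‖b m‖ ^ 2 ≤ E / 2 := by
    have h8 : 2 * (R * π * ∑ m ∈ F₂, ‖b m‖ ^ 2) ≤ ∑ m ∈ F₂, π * m * ‖b m‖ ^ 2 := by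
      rw [Finset.mul_sum, Finset.mul_sum]
      refine Finset.sum_le_sum fun m hm => ?_
      have h9 : (m₀:ℝ) ≤ m := by exact_mod_cast (Finset.mem_filter.1 hm).2.le
      have h5 : 0 ≤ π * ‖b m‖ ^ 2 := by positivity
      nlinarith
    linarith [hsub F₂ (Finset.filter_subset _ _)]
  have hAct : (hHam R ρ hR hRn hρ).Act N c =
      E - ∫ t in (0:ℝ)..1, (hHam R ρ hR hRn hρ).H (ev N c t) := by
    rw [Ham.Act]; simp [hEdef, hb]
  rw [hAct]; linarith

/-- The loop in `ℂ` with modes `1, …, N` given by `κ P (i, ·)`. -/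
def posLoop {ι : Type*} (N : ℕ) (κ : ℝ) (P : ι × Fin N → ℂ) (i : ι) : Unit → ℤ → ℂ :=
  fun _ m => if h : 1 ≤ m ∧ m ≤ N then (κ : ℂ) * P (i, ⟨(m - 1).toNat, by omega⟩) else 0

theorem posLoop_of_le {ι : Type*} (N : ℕ) (κ : ℝ) (P : ι × Fin N → ℂ) (i : ι) (m : ℤ) (h : m ≤ 0) :
    posLoop N κ P i () m = 0 := by
  rw [posLoop, dif_neg (by omega)]

theorem posLoop_succ {ι : Type*} (N : ℕ) (κ : ℝ) (P : ι × Fin N → ℂ) (i : ι) (j : Fin N) :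
    posLoop N κ P i () ((j:ℤ) + 1) = (κ : ℂ) * P (i, j) := by
  rw [posLoop, dif_pos (by omega)]
  congr 3
  ext
  simp

theorem posLoop_rot {ι : Type*} (N : ℕ) (κ : ℝ) (P : ι × Fin N → ℂ) (i : ι) (u : ℂ) :
    posLoop N κ (fun x => u ^ ((x.2 : ℕ) + 1) * P x) i = rot u (posLoop N κ P i) := by
  ext s m
  simp only [posLoop, rot]
  split_ifs with h
  · obtain ⟨r, rfl⟩ : ∃ r : ℕ, m = (r : ℤ) + 1 := ⟨(m - 1).toNat, by omega⟩
    have h1 : ((r : ℤ) + 1 - 1).toNat = r := by omega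
    simp only [h1]
    have h2 : u ^ ((r : ℤ) + 1) = u ^ (r + 1) := by
      rw [show ((r : ℤ) + 1) = ((r + 1 : ℕ) : ℤ) by push_cast; rfl, zpow_natCast]
    rw [h2]
    ring
  · simp

theorem continuous_posLoop {ι : Type*} (N : ℕ) (κ : ℝ) (i : ι) :
    Continuous fun P : ι × Fin N → ℂ => posLoop N κ P i := by
  refine continuous_pi fun _ => continuous_pi fun m => ?_
  simp only [posLoop]
  split_ifs with h <;> fun_prop

theorem energy_posLoop {ι : Type*} (N : ℕ) (κ : ℝ) (P : ι × Fin N → ℂ) (i : ι) :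
    ∑ m ∈ Mo N, π * m * ‖posLoop N κ P i () m‖ ^ 2 =
      κ ^ 2 * ∑ j : Fin N, π * ((j : ℕ) + 1 : ℕ) * ‖P (i, j)‖ ^ 2 := by
  rw [Finset.mul_sum]
  symm
  refine Finset.sum_of_injOn (fun j : Fin N => ((j : ℕ) : ℤ) + 1) ?_ ?_ ?_ ?_
  · intro j _ j' _ h
    ext
    simpa using h
  · intro j _
    simp only [Finset.mem_coe, mem_Mo]
    have := j.2
    omega
  · intro m hm hm'
    have h : m ≤ 0 := by
      by_contra! h
      apply hm'
      rw [mem_Mo] at hm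
      refine ⟨⟨(m - 1).toNat, by omega⟩, by simp, ?_⟩
      simp only
      omega
    rw [posLoop_of_le _ _ _ _ _ h]; simp
  · intro j _
    rw [posLoop_succ, norm_mul, mul_pow, Complex.norm_real, Real.norm_eq_abs, sq_abs]
    push_cast; ring

/-- A Lusternik–Schnirelmann type construction for the split Hamiltonian `∑ᵢ R (√π|xᵢ| - ρ)₊²`:
an equivariant family `X` of loops over an ellipsoid in `ℂ^(nN)`, and `k - 1` equivariant equations
`Λ = 0` whose solutions have total action at least `k ρ² - e`.

Each component of a small loop with positive modes flows upwards independently. The number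
`τ (i, l)` is the obstruction to pushing the component `i` past the level of frequency `l + 1`; if
it does not vanish, that component has reached this level. The `k - 1` equations are Vandermonde
combinations of all the `τ (i, l)`. A common zero has either all `τ (i, l) = 0`, and some component
reaches level `k`, or at least `k` of them nonzero, and the levels reached by the components
add up to at least `k`. -/
theorem exists_lusternik {ι : Type*} [Fintype ι] [Nonempty ι] {R ρ : ℝ} (hR : 0 ≤ R)
    (hRn : ∀ m : ℤ, R ≠ m) (hρ : 0 < ρ) {k : ℕ} (hk : 1 ≤ k) (hkR : (k:ℝ) < R) {e : ℝ}
    (he : 0 < e) :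
    ∃ N₀ : ℕ, ∀ N ≥ N₀, ∀ w : ℕ, (∀ m, 1 ≤ m → m ≤ N → m ∣ w) → 0 < w →
      ∃ (X : (ι × Fin N → ℂ) → ι → Unit → ℤ → ℂ) (Λ : (ι × Fin N → ℂ) → Fin (k - 1) → ℂ),
        Continuous X ∧ Continuous Λ ∧
        (∀ (u : ℂ) P, ‖u‖ = 1 → ∀ i, X (fun x => u ^ ((x.2 : ℕ) + 1) * P x) i = rot u (X P i)) ∧
        (∀ (u : ℂ) P, ‖u‖ = 1 → Λ (fun x => u ^ ((x.2 : ℕ) + 1) * P x) = u ^ w • Λ P) ∧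
        ∀ P, ∑ x : ι × Fin N, π * ((x.2 : ℕ) + 1 : ℕ) * ‖P x‖ ^ 2 = 1 → Λ P = 0 →
          k * ρ ^ 2 - e ≤ ∑ i, (hHam R ρ hR hRn hρ).Act N (X P i) := by
  classical
  have hpi := Real.pi_pos
  set D := hHam R ρ hR hRn hρ with hD
  set n := Fintype.card ι with hn
  have hn0 : (0:ℝ) < n := by exact_mod_cast Fintype.card_pos
  obtain ⟨m₀, hm₀⟩ := exists_nat_ge (2 * R + 1)
  have hm₀1 : 1 ≤ m₀ := by
    have : (1:ℝ) ≤ m₀ := by linarith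
    exact_mod_cast this
  have hm₀' : (0:ℝ) < m₀ := by exact_mod_cast hm₀1
  set κ : ℝ := √(ρ ^ 2 / m₀) with hκ
  have hκ2 : κ ^ 2 = ρ ^ 2 / m₀ := Real.sq_sqrt (by positivity)
  have hκ2p : 0 < κ ^ 2 := by rw [hκ2]; positivity
  obtain ⟨ε, hε, hεe, N₀, hN₀⟩ := hHam_stages hR hRn hρ hk hkR (e₀ := κ ^ 2 / (2 * n))
    (e := e / (2 * n)) (by positivity) (by positivity)
  refine ⟨max N₀ k, fun N hN w hw hw0 => ?_⟩
  obtain ⟨I, hI, hstage⟩ := hN₀ N ((le_max_left _ _).trans hN)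
  have hNk : k ≤ N := (le_max_right _ _).trans hN
  let X : (ι × Fin N → ℂ) → ι → Unit → ℤ → ℂ := fun P i => (D.eta N)^[I k] (posLoop N κ P i)
  -- The exponent gives every component of `τ` the weight `w`; the second factor switches the
  -- obstruction off as long as the action stays below the level.
  let τ : (ι × Fin N → ℂ) → ι × Fin (k - 1) → ℂ := fun P x =>
    (((D.eta N)^[I (x.2 + 1)] (posLoop N κ P x.1)) () (((x.2 : ℕ) + 1 : ℕ) : ℤ)) ^ (w / (x.2 + 1)) *
      ((max (D.Act N (X P x.1) - (lev R ρ (((x.2 : ℕ) + 1 : ℕ) : ℝ) - 2 * ε)) 0 : ℝ) : ℂ)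
  let nd : ι × Fin (k - 1) → ℂ := fun x => ((Fintype.equivFin _ x : ℕ) : ℂ)
  have hnd : Function.Injective nd := fun x y h => by
    have h1 : (Fintype.equivFin _ x : ℕ) = Fintype.equivFin _ y := Nat.cast_injective h
    exact (Fintype.equivFin _).injective (Fin.ext h1)
  let Λ : (ι × Fin N → ℂ) → Fin (k - 1) → ℂ := fun P r => ∑ x, τ P x * nd x ^ (r:ℕ)
  have hXc : Continuous X := continuous_pi fun i =>
    (D.continuous_eta_iterate N (I k)).comp (continuous_posLoop N κ i)
  have hτc : ∀ x, Continuous fun P => τ P x := by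
    intro x
    refine Continuous.mul (Continuous.pow ?_ _) (Complex.continuous_ofReal.comp ?_)
    · have := (D.continuous_eta_iterate N (I (x.2 + 1))).comp (continuous_posLoop N κ x.1)
      exact (continuous_apply _).comp ((continuous_apply ()).comp this)
    · have : Continuous fun P => D.Act N (X P x.1) :=
        (D.continuous_act N).comp ((continuous_apply x.1).comp hXc)
      fun_prop
  have hXrot : ∀ (u : ℂ) P, ‖u‖ = 1 → ∀ i,
      X (fun x => u ^ ((x.2 : ℕ) + 1) * P x) i = rot u (X P i) := by
    intro u P hu i
    simp only [X]
    rw [posLoop_rot, D.eta_iterate_rot N u hu]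
  have hτrot : ∀ (u : ℂ) P, ‖u‖ = 1 → ∀ x,
      τ (fun x => u ^ ((x.2 : ℕ) + 1) * P x) x = u ^ w * τ P x := by
    intro u P hu x
    simp only [τ]
    rw [hXrot u P hu, posLoop_rot, D.eta_iterate_rot N u hu, D.act_rot N u hu]
    simp only [rot]
    rw [mul_pow, zpow_natCast, ← pow_mul, Nat.mul_div_cancel' (hw _ (by omega) (by omega)), mul_assoc]
  refine ⟨X, Λ, hXc, ?_, hXrot, ?_, ?_⟩
  · exact continuous_pi fun r => continuous_finsetSum _ fun x _ => (hτc x).mul continuous_const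
  · intro u P hu
    ext r
    simp only [Λ, Pi.smul_apply, smul_eq_mul, Finset.mul_sum, hτrot u P hu, mul_assoc]
  intro P hP hΛ
  have hPsum : ∑ i, ∑ m ∈ Mo N, π * m * ‖posLoop N κ P i () m‖ ^ 2 = κ ^ 2 := by
    simp only [energy_posLoop]
    rw [← Finset.mul_sum, ← Fintype.sum_prod_type', hP, mul_one]
  have hEnn : ∀ i, 0 ≤ ∑ m ∈ Mo N, π * m * ‖posLoop N κ P i () m‖ ^ 2 := by
    intro i; rw [energy_posLoop]; positivity
  have hEle : ∀ i, ∑ m ∈ Mo N, π * m * ‖posLoop N κ P i () m‖ ^ 2 ≤ κ ^ 2 := by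
    intro i
    rw [← hPsum]
    exact Finset.single_le_sum
      (f := fun i => ∑ m ∈ Mo N, π * m * ‖posLoop N κ P i () m‖ ^ 2) (fun i _ => hEnn i) (Finset.mem_univ i)
  have hstart : ∀ i, (∑ m ∈ Mo N, π * m * ‖posLoop N κ P i () m‖ ^ 2) / 2 ≤
      D.Act N (posLoop N κ P i) := fun i =>
    hHam_start hR hRn hρ hm₀1 (by linarith) N _ (posLoop_of_le N κ P i) ((hEle i).trans hκ2.le)
  have hX0 : ∀ i, 0 ≤ D.Act N (X P i) := fun i =>
    (by linarith [hEnn i, hstart i] : 0 ≤ D.Act N (posLoop N κ P i)).trans (D.act_le_iterate N _ _)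
  have h2ε : 2 * n * ε ≤ e := by
    rw [le_div_iff₀ (by positivity)] at hεe; linarith
  by_cases hT : τ P = 0
  · -- all the obstructions vanish: the component carrying most of the energy is pushed to the top
    obtain ⟨i, hi⟩ : ∃ i, κ ^ 2 / n ≤ ∑ m ∈ Mo N, π * m * ‖posLoop N κ P i () m‖ ^ 2 := by
      by_contra! hlt
      have h1 := Finset.sum_lt_sum_of_nonempty Finset.univ_nonempty fun i _ => hlt i
      rw [hPsum, Finset.sum_const, Finset.card_univ, nsmul_eq_mul, ← hn] at h1
      field_simp at h1
      exact lt_irrefl _ h1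
    have h1 : κ ^ 2 / (2 * n) ≤ D.Act N (posLoop N κ P i) := by
      refine le_trans (le_of_eq ?_) ((div_le_div_of_nonneg_right hi two_pos.le).trans (hstart i))
      field_simp
    have h2 := hstage _ h1 (fun l hl hlk hlev => by
      have h3 := congrFun hT (i, ⟨l - 1, by omega⟩)
      simp only [τ, Pi.zero_apply] at h3
      have h4 : l - 1 + 1 = l := by omega
      simp only [h4] at h3
      rcases mul_eq_zero.1 h3 with h5 | h5
      · exact (pow_eq_zero_iff (Nat.div_pos (Nat.le_of_dvd hw0 (hw l hl (by omega))) hl).ne').1 h5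
      · exfalso
        rw [Complex.ofReal_eq_zero] at h5
        have h6 := le_max_left (D.Act N (X P i) - (lev R ρ l - 2 * ε)) 0
        rw [h5] at h6
        have h7 : D.Act N ((D.eta N)^[I l] (posLoop N κ P i)) ≤ D.Act N (X P i) :=
          D.act_iterate_le N _ (hI hlk.le)
        linarith)
    have h3 : D.Act N (X P i) ≤ ∑ i, D.Act N (X P i) :=
      Finset.single_le_sum (f := fun i => D.Act N (X P i)) (fun i _ => hX0 i) (Finset.mem_univ i)
    have h4 := mul_le_lev (ρ := ρ) (Nat.cast_nonneg k) hkR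
    have hn1 : (1:ℝ) ≤ n := by exact_mod_cast Fintype.card_pos
    have h5 : lev R ρ k - ε ≤ D.Act N (X P i) := h2
    nlinarith
  · have hcard := card_support_of_vandermonde k nd hnd (τ P) hT (fun r hr => congrFun hΛ ⟨r, hr⟩)
    have hi : ∀ i, ((Finset.univ.filter fun l => τ P (i, l) ≠ 0).card : ℝ) * ρ ^ 2 - 2 * ε ≤
        D.Act N (X P i) := by
      intro i
      set S := Finset.univ.filter fun l => τ P (i, l) ≠ 0 with hS
      rcases Nat.eq_zero_or_pos S.card with h0 | h0
      · rw [h0]; push_cast; linarith [hX0 i]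
      obtain ⟨l, hl, hlS⟩ : ∃ l ∈ S, S.card ≤ (l:ℕ) + 1 := by
        by_contra! hlt
        have h1 : S.card ≤ (Finset.range (S.card - 1)).card := by
          refine Finset.card_le_card_of_injOn (fun l => (l:ℕ)) (fun l hl => ?_)
            (fun l _ l' _ h => Fin.ext h)
          have := hlt l hl
          simp only [Finset.coe_range, Set.mem_Iio]
          omega
        rw [Finset.card_range] at h1
        omega
      have h1 : τ P (i, l) ≠ 0 := (Finset.mem_filter.1 hl).2
      have h2 : max (D.Act N (X P i) - (lev R ρ (((l : ℕ) + 1 : ℕ) : ℝ) - 2 * ε)) 0 ≠ 0 := by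
        intro h
        apply h1
        simp only [τ]
        rw [h]; simp
      have h3 : 0 < D.Act N (X P i) - (lev R ρ (((l : ℕ) + 1 : ℕ) : ℝ) - 2 * ε) := by
        by_contra! hle
        exact h2 (max_eq_right hle)
      have h4 : (((l : ℕ) + 1 : ℕ) : ℝ) < R :=
        lt_of_le_of_lt (by exact_mod_cast (by omega : (l:ℕ) + 1 ≤ k)) hkR
      have h5 := mul_le_lev (ρ := ρ) (Nat.cast_nonneg _) h4
      have h6 : (S.card : ℝ) ≤ (((l : ℕ) + 1 : ℕ) : ℝ) := by exact_mod_cast hlS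
      have h7 := mul_le_mul_of_nonneg_right h6 (sq_nonneg ρ)
      linarith
    have h1 := Finset.sum_le_sum fun i (_ : i ∈ Finset.univ) => hi i
    rw [Finset.sum_sub_distrib, ← Finset.sum_mul, Finset.sum_const, Finset.card_univ, nsmul_eq_mul,
      ← hn] at h1
    have h2 : (k:ℝ) ≤ ∑ i, ((Finset.univ.filter fun l => τ P (i, l) ≠ 0).card : ℝ) := by
      have h3 : (Finset.univ.filter fun x => τ P x ≠ 0).card =
          ∑ i, (Finset.univ.filter fun l => τ P (i, l) ≠ 0).card := by
        simp only [Finset.card_filter]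
        rw [Fintype.sum_prod_type]
      rw [h3] at hcard
      exact_mod_cast hcard
    have h3 := mul_le_mul_of_nonneg_right h2 (sq_nonneg ρ)
    linarith

/-! ### Action spectra of measure zero -/

/-- The critical values of a `C¹` function on a compact interval form a compact null set. -/
theorem critical_values_null {G : ℝ → ℝ} (hG : ContDiff ℝ 1 G) (b : ℝ) :
    IsCompact (G '' {r ∈ Icc 0 b | deriv G r = 0}) ∧
      volume (G '' {r ∈ Icc 0 b | deriv G r = 0}) = 0 := by
  constructor
  · refine IsCompact.image ?_ hG.continuous
    exact isCompact_Icc.inter_right (isClosed_eq (hG.continuous_deriv le_rfl) continuous_const)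
  · refine addHaar_image_eq_zero_of_det_fderivWithin_eq_zero (f' := fun _ => 0) volume ?_ ?_
    · intro x hx
      have := ((hG.differentiable one_ne_zero) x).hasDerivAt
      rw [hx.2] at this
      have h2 := this.hasFDerivAt.hasFDerivWithinAt (s := {r ∈ Icc 0 b | deriv G r = 0})
      convert! h2 using 1
      ext; simp
    · intro x hx
      simp [ContinuousLinearMap.det]

/-- The actions of the periodic orbits of the toric Hamiltonian `M (χ (∑ sᵢ ^ p) - 1)` lie in a
compact null set: for fixed winding numbers they are critical values of a function of a single
real parameter. -/
theorem spectrum_null {n : ℕ} {p : ℕ} (hp : 2 ≤ p) {M b : ℝ} {χ : ℝ → ℝ}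
    (hχ : ContDiff ℝ 1 χ) :
    ∃ Z : Set ℝ, IsCompact Z ∧ volume Z = 0 ∧ ∀ s : Fin n → ℝ, (∀ i, 0 ≤ s i) →
      ∑ i, s i ^ p ≤ b → (∀ i, ∃ m : ℤ, M * deriv χ (∑ i, s i ^ p) * p * s i ^ (p - 1) = m) →
      0 ≤ M * deriv χ (∑ i, s i ^ p) →
      M * (p * (∑ i, s i ^ p) * deriv χ (∑ i, s i ^ p) - χ (∑ i, s i ^ p)) ∈ Z := by
  have hp0 : (p:ℝ) ≠ 0 := by positivity
  have hp1 : (0:ℝ) < (p:ℝ) - 1 := by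
    have : (2:ℝ) ≤ p := by exact_mod_cast hp
    linarith
  obtain ⟨C, hC⟩ := (isCompact_Icc (a := (0:ℝ)) (b := b)).exists_bound_of_continuousOn
    (f := fun σ => M * deriv χ σ * p)
    ((((hχ.continuous_deriv le_rfl).const_smul M).mul continuous_const).continuousOn)
  set b1 : ℝ := b ^ (1 / (p:ℝ)) with hb1
  obtain ⟨L, hL⟩ := exists_nat_ge (C * b1 ^ (p - 1))
  set q : ℝ := p / (p - 1) with hq
  have hq0 : 0 < q := by positivity
  let B : (Fin n → Fin (L + 1)) → ℝ := fun m => (∑ i, ((m i : ℕ) : ℝ) ^ q) ^ (1 / q)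
  let G : (Fin n → Fin (L + 1)) → ℝ → ℝ := fun m r => B m * r - M * χ (r ^ p)
  have hGs : ∀ m, ContDiff ℝ 1 (G m) := fun m => by
    have : ContDiff ℝ 1 fun r : ℝ => χ (r ^ p) := hχ.comp (contDiff_id.pow p)
    exact (contDiff_const.mul contDiff_id).sub (contDiff_const.mul this)
  refine ⟨⋃ m, G m '' {r ∈ Icc 0 b1 | deriv (G m) r = 0}, ?_, ?_, ?_⟩
  · exact isCompact_iUnion fun m => (critical_values_null (hGs m) b1).1
  · exact measure_iUnion_null fun m => (critical_values_null (hGs m) b1).2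
  · intro s hs hsb hm hc0
    set σ := ∑ i, s i ^ p with hσ
    have hσ0 : 0 ≤ σ := Finset.sum_nonneg fun i _ => pow_nonneg (hs i) p
    set c := M * deriv χ σ * p with hc
    have hcn : 0 ≤ c := by positivity
    set r := σ ^ (1 / (p:ℝ)) with hr
    have hr0 : 0 ≤ r := Real.rpow_nonneg hσ0 _
    have hrp : r ^ p = σ := by
      rw [hr, one_div]; exact Real.rpow_inv_natCast_pow hσ0 (by omega)
    have hrb : r ≤ b1 := Real.rpow_le_rpow hσ0 hsb (by positivity)
    have hcC : c ≤ C := (le_abs_self _).trans (hC σ ⟨hσ0, hsb⟩)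
    have hsr : ∀ i, s i ≤ r := fun i => by
      refine le_of_pow_le_pow_left₀ (n := p) (by omega) hr0 ?_
      rw [hrp]
      exact Finset.single_le_sum (f := fun i => s i ^ p) (fun j _ => pow_nonneg (hs j) p)
        (Finset.mem_univ i)
    have hmn : ∀ i, ∃ m : Fin (L + 1), c * s i ^ (p - 1) = ((m:ℕ):ℝ) := fun i => by
      obtain ⟨m, hm⟩ := hm i
      have h0 : 0 ≤ c * s i ^ (p - 1) := mul_nonneg hcn (pow_nonneg (hs i) _)
      have h1 : c * s i ^ (p - 1) ≤ L := by
        refine le_trans ?_ hL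
        exact mul_le_mul hcC (pow_le_pow_left₀ (hs i) ((hsr i).trans hrb) _)
          (pow_nonneg (hs i) _) (hcn.trans hcC)
      rw [hm] at h0 h1
      have h0' : 0 ≤ m := by exact_mod_cast h0
      have h1' : m ≤ L := by exact_mod_cast h1
      refine ⟨⟨m.toNat, by omega⟩, ?_⟩
      rw [hm]
      have : ((m.toNat : ℤ) : ℝ) = m := by rw [Int.toNat_of_nonneg h0']
      rw [← this, Int.cast_natCast]
    choose m hm using hmn
    have hpq : ∀ x : ℝ, 0 ≤ x → (x ^ (p - 1)) ^ q = x ^ p := fun x hx => by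
      rw [← Real.rpow_natCast, ← Real.rpow_natCast, ← Real.rpow_mul hx, hq, Nat.cast_sub (by omega)]
      congr 1
      push_cast; field_simp
    have hBm : B m = c * r ^ (p - 1) := by
      have e : ∑ i, (((m i : ℕ) : ℝ)) ^ q = (c * r ^ (p - 1)) ^ q := by
        rw [Real.mul_rpow hcn (by positivity), hpq r hr0, hrp, hσ, Finset.mul_sum]
        refine Finset.sum_congr rfl fun i _ => ?_
        rw [← hm i, Real.mul_rpow hcn (pow_nonneg (hs i) _), hpq _ (hs i)]
      change (∑ i, (((m i : ℕ) : ℝ)) ^ q) ^ (1 / q) = _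
      rw [e, ← Real.rpow_mul (by positivity), mul_one_div_cancel hq0.ne', Real.rpow_one]
    refine mem_iUnion.2 ⟨m, r, ⟨⟨hr0, hrb⟩, ?_⟩, ?_⟩
    · have h1 : HasDerivAt χ (deriv χ (r ^ p)) (r ^ p) :=
        (hχ.differentiable one_ne_zero _).hasDerivAt
      have h2 : HasDerivAt (G m) (B m * 1 - M * (deriv χ (r ^ p) * (p * r ^ (p - 1)))) r :=
        ((hasDerivAt_id r).const_mul (B m)).sub ((h1.comp r (hasDerivAt_pow p r)).const_mul M)
      rw [h2.deriv, hBm, hrp, hc]; ring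
    · change B m * r - M * χ (r ^ p) = _
      rw [hBm, hrp, mul_assoc, ← pow_succ, Nat.sub_add_cancel (by omega), hrp, hc]; ring

/-- An open interval contains a compact one disjoint from a given compact null set. -/
theorem exists_gap_of_null {Z : Set ℝ} (hZ : IsCompact Z) (hZ0 : volume Z = 0) {a b : ℝ}
    (hab : a < b) : ∃ v v', a < v ∧ v < v' ∧ v' < b ∧ ∀ x ∈ Z, ¬ (v ≤ x ∧ x ≤ v') := by
  have h : (Ioo a b \ Z).Nonempty := by
    rw [nonempty_iff_ne_empty]
    intro h
    have h1 : Ioo a b ⊆ Z := sdiff_eq_empty.1 h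
    have h2 := measure_mono (μ := volume) h1
    rw [hZ0, Real.volume_Ioo] at h2
    have := ENNReal.ofReal_eq_zero.1 (le_antisymm h2 bot_le)
    linarith
  obtain ⟨v, hv⟩ := h
  have ho : IsOpen (Ioo a b \ Z) := isOpen_Ioo.sdiff hZ.isClosed
  obtain ⟨e, he, hb⟩ := Metric.isOpen_iff.1 ho v hv
  have hm : ∀ x, v ≤ x → x ≤ v + e / 2 → x ∈ Ioo a b \ Z := fun x h1 h2 => hb (by
    rw [Metric.mem_ball, Real.dist_eq, abs_of_nonneg] <;> linarith)
  refine ⟨v, v + e / 2, hv.1.1, by linarith, (hm (v + e/2) (by linarith) le_rfl).1.2, ?_⟩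
  intro x hx h
  exact (hm x h.1 h.2).2 hx

/-! ### Transporting functions by symplectic maps -/

/-- A smooth injective symplectic map on the set `U`. -/
structure SympOn {n : ℕ} (U : Set (Fin n → ℂ)) (φ : (Fin n → ℂ) → (Fin n → ℂ)) : Prop where
  smooth : ContDiffOn ℝ (⊤ : ℕ∞) φ U
  inj : InjOn φ U
  symp : ∀ x ∈ U, ∀ v w, stdSymp n (fderiv ℝ φ x v) (fderiv ℝ φ x w) = stdSymp n v w

theorem exists_equiv_of_symp {n : ℕ} (A : (Fin n → ℂ) →L[ℝ] (Fin n → ℂ))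
    (h : ∀ v w, stdSymp n (A v) (A w) = stdSymp n v w) :
    ∃ e : (Fin n → ℂ) ≃L[ℝ] (Fin n → ℂ), (e : (Fin n → ℂ) →L[ℝ] (Fin n → ℂ)) = A := by
  have hinj : Function.Injective A.toLinearMap := by
    refine (injective_iff_map_eq_zero _).2 fun v hv => eq_zero_of_stdSymp v fun w => ?_
    rw [← h]
    have : A v = 0 := hv
    rw [this]; simp [stdSymp]
  refine ⟨(LinearEquiv.ofInjectiveEndo A.toLinearMap hinj).toContinuousLinearEquiv, ?_⟩
  ext v : 1
  rfl

theorem norm_sq_le_sum {n : ℕ} (v : Fin n → ℂ) : ‖v‖ ^ 2 ≤ ∑ i, ‖v i‖ ^ 2 := by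
  have h0 : 0 ≤ ∑ i, ‖v i‖ ^ 2 := Finset.sum_nonneg fun i _ => by positivity
  have h1 : ‖v‖ ≤ √(∑ i, ‖v i‖ ^ 2) := by
    refine (pi_norm_le_iff_of_nonneg (Real.sqrt_nonneg _)).2 fun i => Real.le_sqrt_of_sq_le ?_
    exact Finset.single_le_sum (f := fun i => ‖v i‖ ^ 2) (fun j _ => by positivity)
      (Finset.mem_univ i)
  calc ‖v‖ ^ 2 ≤ √(∑ i, ‖v i‖ ^ 2) ^ 2 := by gcongr
    _ = _ := Real.sq_sqrt h0

theorem abs_stdSymp_le {n : ℕ} (v w : Fin n → ℂ) : |stdSymp n v w| ≤ n * (‖v‖ * ‖w‖) := by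
  unfold stdSymp
  refine (Finset.abs_sum_le_sum_abs _ _).trans ?_
  refine (Finset.sum_le_card_nsmul _ _ (‖v‖ * ‖w‖) fun i _ => ?_).trans (le_of_eq (by simp))
  refine (Complex.abs_im_le_norm _).trans ?_
  rw [norm_mul, RCLike.norm_conj]
  gcongr <;> exact norm_le_pi_norm _ i

/-- The inverse of a symplectic linear map is bounded in terms of the map itself. -/
theorem norm_le_of_symp {n : ℕ} (A : (Fin n → ℂ) →L[ℝ] (Fin n → ℂ))
    (h : ∀ v w, stdSymp n (A v) (A w) = stdSymp n v w) (v : Fin n → ℂ) :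
    ‖v‖ ≤ n * ‖A‖ * ‖A v‖ := by
  rcases (norm_nonneg v).eq_or_lt with h0 | h0
  · rw [← h0]; positivity
  have h1 := norm_sq_le_sum v
  rw [← stdSymp_I_mul, ← h] at h1
  have h2 := (le_abs_self _).trans (abs_stdSymp_le (A v) (A fun i => Complex.I * v i))
  have h3 : ‖(fun i => Complex.I * v i : Fin n → ℂ)‖ ≤ ‖v‖ :=
    (pi_norm_le_iff_of_nonneg (norm_nonneg v)).2 fun i => by
      simpa using norm_le_pi_norm v i
  have h4 : ‖A fun i => Complex.I * v i‖ ≤ ‖A‖ * ‖v‖ :=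
    (A.le_opNorm _).trans (by gcongr)
  have h5 : ‖v‖ * ‖v‖ ≤ (n * ‖A‖ * ‖A v‖) * ‖v‖ := by
    calc ‖v‖ * ‖v‖ ≤ n * (‖A v‖ * ‖A fun i => Complex.I * v i‖) := by nlinarith
      _ ≤ n * (‖A v‖ * (‖A‖ * ‖v‖)) := by gcongr
      _ = _ := by ring
  exact le_of_mul_le_mul_right h5 h0

namespace SympOn

variable {n : ℕ} {U : Set (Fin n → ℂ)} {φ : (Fin n → ℂ) → (Fin n → ℂ)}

theorem contDiffAt (h : SympOn U φ) (hU : IsOpen U) {y} (hy : y ∈ U) :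
    ContDiffAt ℝ (⊤ : ℕ∞) φ y := h.smooth.contDiffAt (hU.mem_nhds hy)

theorem hasFDerivAt (h : SympOn U φ) (hU : IsOpen U) {y} (hy : y ∈ U) :
    HasFDerivAt φ (fderiv ℝ φ y) y :=
  ((h.contDiffAt hU hy).differentiableAt (by simp)).hasFDerivAt

theorem inv_eq (h : SympOn U φ) {y} (hy : y ∈ U) : Function.invFunOn φ U (φ y) = y :=
  h.inj.leftInvOn_invFunOn hy

/-- The inverse of a symplectic embedding is smooth and its image is open. -/
theorem inv_smooth (h : SympOn U φ) (hU : IsOpen U) {y} (hy : y ∈ U) :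
    ContDiffAt ℝ (⊤ : ℕ∞) (Function.invFunOn φ U) (φ y) ∧ φ '' U ∈ nhds (φ y) := by
  obtain ⟨e, he⟩ := exists_equiv_of_symp _ (h.symp y hy)
  have h1 := h.contDiffAt hU hy
  have h2 := h.hasFDerivAt hU hy
  rw [← he] at h2
  have hne : ((⊤ : ℕ∞) : WithTop ℕ∞) ≠ 0 := by simp
  have h3 := h1.to_localInverse h2 hne
  have hs := h1.hasStrictFDerivAt' h2 hne
  have h4 : ∀ᶠ x in nhds (φ y), φ (hs.localInverse φ e y x) = x := hs.eventually_right_inverse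
  have h5 : ∀ᶠ x in nhds (φ y), hs.localInverse φ e y x ∈ U := by
    have := hs.localInverse_tendsto
    exact this (hU.mem_nhds hy)
  constructor
  · refine h3.congr_of_eventuallyEq ?_
    filter_upwards [h4, h5] with x hx1 hx2
    conv_lhs => rw [← hx1]
    exact h.inv_eq hx2
  · filter_upwards [h4, h5] with x hx1 hx2
    exact ⟨_, hx2, hx1⟩

theorem hasFDerivAt_inv (h : SympOn U φ) (hU : IsOpen U) {y} (hy : y ∈ U) :
    ∃ B : (Fin n → ℂ) →L[ℝ] (Fin n → ℂ), HasFDerivAt (Function.invFunOn φ U) B (φ y) ∧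
      (∀ v, B (fderiv ℝ φ y v) = v) ∧ (∀ v, fderiv ℝ φ y (B v) = v) := by
  have h1 : HasFDerivAt (Function.invFunOn φ U) _ (φ y) :=
    ((h.inv_smooth hU hy).1.differentiableAt (by simp)).hasFDerivAt
  have h2 := h1.comp y (h.hasFDerivAt hU hy)
  have h3 : HasFDerivAt (Function.invFunOn φ U ∘ φ) (ContinuousLinearMap.id ℝ (Fin n → ℂ)) y := by
    refine (hasFDerivAt_id y).congr_of_eventuallyEq ?_
    filter_upwards [hU.mem_nhds hy] with x hx
    exact h.inv_eq hx
  have h4 := h2.unique h3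
  have h5 : ∀ v, fderiv ℝ (Function.invFunOn φ U) (φ y) (fderiv ℝ φ y v) = v := fun v =>
    DFunLike.congr_fun h4 v
  refine ⟨_, h1, h5, fun v => ?_⟩
  obtain ⟨e, he⟩ := exists_equiv_of_symp _ (h.symp y hy)
  obtain ⟨u, rfl⟩ := e.surjective v
  have : (e u) = fderiv ℝ φ y u := by rw [← he]; rfl
  rw [this, h5]

end SympOn

/-- The function on `ℂⁿ` which is `K ∘ φ⁻¹` on the image of `φ` and zero elsewhere. -/
def pushK {n : ℕ} (U : Set (Fin n → ℂ)) (φ : (Fin n → ℂ) → (Fin n → ℂ)) (K : (Fin n → ℂ) → ℝ)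
    (x : Fin n → ℂ) : ℝ :=
  open Classical in if x ∈ φ '' U then K (Function.invFunOn φ U x) else 0

namespace SympOn

variable {n : ℕ} {U : Set (Fin n → ℂ)} {φ : (Fin n → ℂ) → (Fin n → ℂ)} {K : (Fin n → ℂ) → ℝ}
  {K1 : Set (Fin n → ℂ)}

theorem pushK_apply (h : SympOn U φ) {y} (hy : y ∈ U) : pushK U φ K (φ y) = K y := by
  rw [pushK, if_pos (mem_image_of_mem φ hy), h.inv_eq hy]

theorem pushK_of_notMem (h : SympOn U φ) (hK : ∀ y, y ∉ K1 → K y = 0) {x}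
    (hx : x ∉ φ '' K1) : pushK U φ K x = 0 := by
  by_cases hxU : x ∈ φ '' U
  · obtain ⟨y, hy, rfl⟩ := hxU
    rw [h.pushK_apply hy]
    exact hK y fun hy1 => hx (mem_image_of_mem φ hy1)
  · rw [pushK, if_neg hxU]

theorem isCompact_image (h : SympOn U φ) (h1 : IsCompact K1) (h1U : K1 ⊆ U) :
    IsCompact (φ '' K1) := h1.image_of_continuousOn (h.smooth.continuousOn.mono h1U)

theorem contDiff_pushK (h : SympOn U φ) (hU : IsOpen U) (h1 : IsCompact K1) (h1U : K1 ⊆ U)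
    (hKs : ContDiff ℝ (⊤ : ℕ∞) K) (hK : ∀ y, y ∉ K1 → K y = 0) :
    ContDiff ℝ (⊤ : ℕ∞) (pushK U φ K) := by
  rw [contDiff_iff_contDiffAt]
  intro x
  by_cases hx : x ∈ φ '' K1
  · obtain ⟨y, hy, rfl⟩ := hx
    obtain ⟨hs, hn⟩ := h.inv_smooth hU (h1U hy)
    refine (hKs.contDiffAt.comp (φ y) hs).congr_of_eventuallyEq ?_
    filter_upwards [hn] with x hx
    rw [pushK, if_pos hx]; rfl
  · have ho := (h.isCompact_image h1 h1U).isClosed.isOpen_compl.mem_nhds hx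
    refine (contDiffAt_const (c := (0:ℝ))).congr_of_eventuallyEq ?_
    filter_upwards [ho] with x' hx'
    exact h.pushK_of_notMem hK hx'

theorem hasCompactSupport_pushK (h : SympOn U φ) (h1 : IsCompact K1) (h1U : K1 ⊆ U)
    (hK : ∀ y, y ∉ K1 → K y = 0) : HasCompactSupport (pushK U φ K) :=
  HasCompactSupport.intro (h.isCompact_image h1 h1U) fun _ hx => h.pushK_of_notMem hK hx

theorem fderiv_pushK (h : SympOn U φ) (hU : IsOpen U) (h1 : IsCompact K1) (h1U : K1 ⊆ U)
    (hKs : ContDiff ℝ (⊤ : ℕ∞) K) (hK : ∀ y, y ∉ K1 → K y = 0) {y} (hy : y ∈ U) (v) :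
    fderiv ℝ (pushK U φ K) (φ y) (fderiv ℝ φ y v) = fderiv ℝ K y v := by
  have hd : HasFDerivAt (pushK U φ K) _ (φ y) :=
    ((h.contDiff_pushK hU h1 h1U hKs hK).differentiable (by simp) (φ y)).hasFDerivAt
  have h2 := hd.comp y (h.hasFDerivAt hU hy)
  have h3 : HasFDerivAt (pushK U φ K ∘ φ) (fderiv ℝ K y) y := by
    refine ((hKs.differentiable (by simp) y).hasFDerivAt).congr_of_eventuallyEq ?_
    filter_upwards [hU.mem_nhds hy] with x hx
    exact h.pushK_apply hx
  exact DFunLike.congr_fun (h2.unique h3) v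

theorem fderiv_pushK_of_notMem (h : SympOn U φ) (h1 : IsCompact K1) (h1U : K1 ⊆ U)
    (hK : ∀ y, y ∉ K1 → K y = 0) {x} (hx : x ∉ φ '' K1) : fderiv ℝ (pushK U φ K) x = 0 := by
  have ho := (h.isCompact_image h1 h1U).isClosed.isOpen_compl.mem_nhds hx
  have : HasFDerivAt (pushK U φ K) (0 : (Fin n → ℂ) →L[ℝ] ℝ) x := by
    refine (hasFDerivAt_const (0:ℝ) x).congr_of_eventuallyEq ?_
    filter_upwards [ho] with x' hx'
    exact h.pushK_of_notMem hK hx'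
  exact this.fderiv

theorem norm_fderiv_pushK_le (h : SympOn U φ) (hU : IsOpen U) (h1 : IsCompact K1) (h1U : K1 ⊆ U)
    (hKs : ContDiff ℝ (⊤ : ℕ∞) K) (hK : ∀ y, y ∉ K1 → K y = 0) {B Q : ℝ} (hB0 : 0 ≤ B)
    (hQ0 : 0 ≤ Q) (hB : ∀ y, ‖fderiv ℝ K y‖ ≤ B) (hQ : ∀ y ∈ K1, ‖fderiv ℝ φ y‖ ≤ Q) (x) :
    ‖fderiv ℝ (pushK U φ K) x‖ ≤ B * (n * Q) := by
  by_cases hx : x ∈ φ '' K1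
  · obtain ⟨y, hy, rfl⟩ := hx
    refine ContinuousLinearMap.opNorm_le_bound _ (by positivity) fun u => ?_
    obtain ⟨e, he⟩ := exists_equiv_of_symp _ (h.symp y (h1U hy))
    obtain ⟨v, rfl⟩ := e.surjective u
    have hev : e v = fderiv ℝ φ y v := by rw [← he]; rfl
    rw [hev, h.fderiv_pushK hU h1 h1U hKs hK (h1U hy)]
    calc ‖fderiv ℝ K y v‖ ≤ ‖fderiv ℝ K y‖ * ‖v‖ := ContinuousLinearMap.le_opNorm _ _
      _ ≤ B * (n * Q * ‖fderiv ℝ φ y v‖) := by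
        gcongr
        · exact hB y
        · refine (norm_le_of_symp _ (h.symp y (h1U hy)) v).trans ?_
          gcongr
          exact hQ y hy
      _ = _ := by ring
  · rw [h.fderiv_pushK_of_notMem h1 h1U hK hx, norm_zero]; positivity

/-- Uniformly close symplectic maps transport `K` to uniformly close functions. The inverse of a
symplectic linear map of norm `Q` has norm at most `n Q`, which makes the transported functions
Lipschitz. -/
theorem abs_pushK_sub_le {φ' : (Fin n → ℂ) → (Fin n → ℂ)} (h : SympOn U φ) (h' : SympOn U φ')
    (hU : IsOpen U) (h1 : IsCompact K1) (h1U : K1 ⊆ U)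
    (hKs : ContDiff ℝ (⊤ : ℕ∞) K) (hK : ∀ y, y ∉ K1 → K y = 0) {B Q e : ℝ} (hB0 : 0 ≤ B)
    (hQ0 : 0 ≤ Q) (hB : ∀ y, ‖fderiv ℝ K y‖ ≤ B) (hQ : ∀ y ∈ K1, ‖fderiv ℝ φ y‖ ≤ Q)
    (hQ' : ∀ y ∈ K1, ‖fderiv ℝ φ' y‖ ≤ Q) (he0 : 0 ≤ e) (he : ∀ y ∈ K1, ‖φ y - φ' y‖ ≤ e) (x) :
    |pushK U φ K x - pushK U φ' K x| ≤ B * (n * Q) * e := by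
  have lip : ∀ {ψ}, SympOn U ψ → (∀ y ∈ K1, ‖fderiv ℝ ψ y‖ ≤ Q) → ∀ x x',
      |pushK U ψ K x - pushK U ψ K x'| ≤ B * (n * Q) * ‖x - x'‖ := by
    intro ψ hψ hQψ x x'
    refine Convex.norm_image_sub_le_of_norm_fderiv_le (𝕜 := ℝ) (s := univ) (fun z _ => ?_)
      (fun z _ => hψ.norm_fderiv_pushK_le hU h1 h1U hKs hK hB0 hQ0 hB hQψ z) convex_univ
      (mem_univ _) (mem_univ _)
    exact (hψ.contDiff_pushK hU h1 h1U hKs hK).differentiable (by simp) z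
  by_cases hx : x ∈ φ '' K1
  · obtain ⟨y, hy, rfl⟩ := hx
    rw [h.pushK_apply (h1U hy), ← h'.pushK_apply (K := K) (h1U hy)]
    refine (lip h' hQ' _ _).trans ?_
    gcongr
    rw [norm_sub_rev]; exact he y hy
  · by_cases hx' : x ∈ φ' '' K1
    · obtain ⟨y, hy, rfl⟩ := hx'
      rw [h'.pushK_apply (h1U hy), ← h.pushK_apply (K := K) (h1U hy)]
      refine (lip h hQ _ _).trans ?_
      gcongr
      rw [norm_sub_rev]; exact he y hy
    · rw [h.pushK_of_notMem hK hx, h'.pushK_of_notMem hK hx', sub_zero, abs_zero]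
      positivity

end SympOn

/-! ### Hamiltonians with a transported bump -/

/-- The gradient vector of a real linear functional on `ℂⁿ`. -/
def rgrad {n : ℕ} (l : (Fin n → ℂ) →L[ℝ] ℝ) (i : Fin n) : ℂ :=
  (l (Pi.single i 1) : ℂ) + (l (Pi.single i Complex.I) : ℂ) * Complex.I

theorem rgrad_inner {n : ℕ} (l : (Fin n → ℂ) →L[ℝ] ℝ) (u : Fin n → ℂ) :
    ∑ i, ((starRingEnd ℂ) (rgrad l i) * u i).re = l u := by
  have h1 : u = ∑ i, ((u i).re • (Pi.single i 1 : Fin n → ℂ)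
      + (u i).im • (Pi.single i Complex.I : Fin n → ℂ)) := by
    ext j
    rw [Finset.sum_apply, Finset.sum_eq_single j]
    · simp
    · intro b _ hb
      simp [Pi.single_eq_of_ne hb.symm]
    · simp
  conv_rhs => rw [h1, map_sum]
  refine Finset.sum_congr rfl fun i _ => ?_
  simp [rgrad]
  ring

theorem stdSymp_rgrad {n : ℕ} (l : (Fin n → ℂ) →L[ℝ] ℝ) (u : Fin n → ℂ) :
    stdSymp n u (fun i => Complex.I * rgrad l i) = l u := by
  rw [← rgrad_inner, stdSymp]
  refine Finset.sum_congr rfl fun i _ => ?_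
  simp
  ring

theorem continuous_rgrad {n : ℕ} : Continuous (rgrad (n := n)) := by
  unfold rgrad
  fun_prop

theorem norm_rgrad_le {n : ℕ} (l : (Fin n → ℂ) →L[ℝ] ℝ) (i : Fin n) : ‖rgrad l i‖ ≤ 2 * ‖l‖ := by
  have h1 : ∀ c : ℂ, ‖c‖ = 1 → ‖l (Pi.single i c)‖ ≤ ‖l‖ := fun c hc => by
    refine (l.le_opNorm _).trans (le_of_eq ?_)
    rw [Pi.norm_single, hc, mul_one]
  unfold rgrad
  refine (norm_add_le _ _).trans ?_
  rw [norm_mul, Complex.norm_I, mul_one, Complex.norm_real, Complex.norm_real]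
  linarith [h1 1 (by simp), h1 Complex.I (by simp)]

/-- Second order upper Taylor bound with a constant independent of the base point. -/
theorem exists_taylor {n : ℕ} {κ : (Fin n → ℂ) → ℝ} (hs : ContDiff ℝ (⊤ : ℕ∞) κ)
    (hc : HasCompactSupport κ) : ∃ C, 0 ≤ C ∧ (∀ z u, κ (z + u) ≤ κ z + fderiv ℝ κ z u
      + C * ∑ i, ‖u i‖ ^ 2) ∧ ∀ z, ‖fderiv ℝ κ z‖ ≤ C := by
  have h1 : ContDiff ℝ (⊤ : ℕ∞) (fderiv ℝ κ) := hs.fderiv_right (m := (⊤ : ℕ∞)) (by simp)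
  obtain ⟨C, hC⟩ := h1.lipschitzWith_of_hasCompactSupport (hc.fderiv ℝ) (by simp)
  obtain ⟨C2, hC2⟩ := h1.continuous.bounded_above_of_compact_support (hc.fderiv ℝ)
  refine ⟨max (C:ℝ) C2, le_max_of_le_left C.2, fun z u => ?_, fun z => (hC2 z).trans (le_max_right _ _)⟩
  have h2 := Convex.norm_image_sub_le_of_norm_fderiv_le' (𝕜 := ℝ) (f := κ) (φ := fderiv ℝ κ z)
    (s := Metric.closedBall z ‖u‖) (C := C * ‖u‖) (x := z) (y := z + u)
    (fun x _ => hs.differentiable (by simp) x) (fun x hx => ?_) (convex_closedBall _ _)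
    (by simp) (by simp)
  · rw [add_sub_cancel_left] at h2
    have h3 := (le_abs_self _).trans h2
    have h4 := norm_sq_le_sum u
    have h5 : (C:ℝ) * ‖u‖ * ‖u‖ ≤ max (C:ℝ) C2 * ∑ i, ‖u i‖ ^ 2 := by
      rw [mul_assoc, ← sq]
      gcongr
      exact le_max_left _ _
    linarith
  · refine (hC.norm_sub_le x z).trans ?_
    gcongr
    simpa [dist_eq_norm] using hx

/-- The Hamiltonian `M + K ∘ φ⁻¹ + T (√q - ρ)₊²` associated with a symplectic embedding `φ`. -/
theorem exists_embHam {n : ℕ} {κ : (Fin n → ℂ) → ℝ} (hs : ContDiff ℝ (⊤ : ℕ∞) κ)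
    (hc : HasCompactSupport κ) {a : Fin n → ℝ} (ha : ∀ i, 0 < a i) {T ρ : ℝ} (M : ℝ) (hT : 0 ≤ T)
    (hTa : ∀ i (m : ℤ), T / a i ≠ m) (hρ : 0 < ρ) :
    ∃ D : Ham (Fin n), (∀ z, D.H z = M + κ z + Frad a T ρ z) ∧
      ∀ z i, D.g z i = rgrad (fderiv ℝ κ z) i + gFrad a T ρ z i := by
  obtain ⟨C, hC0, hC1, hC2⟩ := exists_taylor hs hc
  have hpa : 0 ≤ ∑ i, π / a i := Finset.sum_nonneg fun i _ => (div_pos Real.pi_pos (ha i)).le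
  have hfd : Continuous (fderiv ℝ κ) := hs.continuous_fderiv (by simp)
  refine ⟨{ H := fun z => M + κ z + Frad a T ρ z
            g := fun z i => rgrad (fderiv ℝ κ z) i + gFrad a T ρ z i
            C := C + T * ∑ i, π / a i
            d := fun i => T / a i
            Cinf := 2 * C + ∑ j, 2 * π * (T / a j) * ρ * √(a j / π)
            contH := (continuous_const.add hs.continuous).add continuous_Frad
            contG := ?_
            C_nonneg := by positivity
            taylor := fun z u => ?_
            d_ne := hTa
            near := fun z i => ?_ }, fun _ => rfl, fun _ _ => rfl⟩
  · have h1 := (continuous_rgrad (n := n)).comp hfd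
    have h2 := continuous_gFrad (a := a) (T := T) hρ
    exact h1.add h2
  · have h1 := hC1 z u
    have h2 := Frad_taylor ha hT hρ z u
    have h3 := qf_le_sum ha u
    rw [← rgrad_inner] at h1
    have h4 := mul_le_mul_of_nonneg_left h3 hT
    simp only [map_add, add_mul, Complex.add_re, Finset.sum_add_distrib]
    linarith
  · have h1 := gFrad_near ha hT hρ z i
    have h2 := norm_rgrad_le (fderiv ℝ κ z) i
    rw [add_sub_assoc]
    refine (norm_add_le _ _).trans ?_
    linarith [hC2 z]

/-! ### The toric bump -/

/-- A smooth cutoff function, `0` on `(-∞, b/2]` and `1` on `[b, ∞)`. -/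
def chi (b : ℝ) (σ : ℝ) : ℝ := Real.smoothTransition ((σ - b / 2) / (b / 2))

theorem contDiff_chi (b : ℝ) : ContDiff ℝ (⊤ : ℕ∞) (chi b) := by
  unfold chi
  refine Real.smoothTransition.contDiff.comp ?_
  fun_prop

theorem chi_nonneg (b σ : ℝ) : 0 ≤ chi b σ := Real.smoothTransition.nonneg _

theorem chi_le_one (b σ : ℝ) : chi b σ ≤ 1 := Real.smoothTransition.le_one _

theorem chi_of_le {b σ : ℝ} (hb : 0 < b) (h : σ ≤ b / 2) : chi b σ = 0 :=
  Real.smoothTransition.zero_of_nonpos (div_nonpos_of_nonpos_of_nonneg (by linarith) (by linarith))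

theorem chi_of_ge {b σ : ℝ} (hb : 0 < b) (h : b ≤ σ) : chi b σ = 1 :=
  Real.smoothTransition.one_of_one_le ((one_le_div (by linarith)).2 (by linarith))

/-- The function `∑ (π|yᵢ|²)ᵖ`. -/
def sigP {n : ℕ} (p : ℕ) (y : Fin n → ℂ) : ℝ := ∑ i, (π * ‖y i‖ ^ 2) ^ p

/-- The toric Hamiltonian `M (χ (∑ (π|yᵢ|²)ᵖ) - 1)`. -/
def KT {n : ℕ} (M b : ℝ) (p : ℕ) (y : Fin n → ℂ) : ℝ := M * (chi b (sigP p y) - 1)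

theorem sigP_nonneg {n : ℕ} (p : ℕ) (y : Fin n → ℂ) : 0 ≤ sigP p y :=
  Finset.sum_nonneg fun i _ => by have := Real.pi_pos; positivity

theorem contDiff_sigP {n : ℕ} (p : ℕ) : ContDiff ℝ (⊤ : ℕ∞) (sigP (n := n) p) := by
  unfold sigP
  refine ContDiff.sum fun i _ => ?_
  refine ContDiff.pow (contDiff_const.mul ?_) p
  exact (contDiff_norm_sq ℝ).comp (contDiff_apply ℝ ℂ i)

theorem contDiff_KT {n : ℕ} (M b : ℝ) (p : ℕ) : ContDiff ℝ (⊤ : ℕ∞) (KT (n := n) M b p) := by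
  unfold KT
  exact contDiff_const.mul (((contDiff_chi b).comp (contDiff_sigP p)).sub contDiff_const)

/-- The rotation speed of the `i`-th coordinate under the flow of `KT M b p`. -/
def spd {n : ℕ} (M b : ℝ) (p : ℕ) (y : Fin n → ℂ) (i : Fin n) : ℝ :=
  M * deriv (chi b) (sigP p y) * p * (π * ‖y i‖ ^ 2) ^ (p - 1)

theorem fderiv_KT {n : ℕ} (M b : ℝ) (p : ℕ) (y v : Fin n → ℂ) :
    fderiv ℝ (KT M b p) y v
      = stdSymp n v fun i => Complex.I * (((2 * π * spd M b p y i : ℝ) : ℂ) * y i) := by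
  have h1 : ∀ i, HasFDerivAt (fun y : Fin n → ℂ => ‖y i‖ ^ 2)
      (2 • (innerSL ℝ (y i)).comp (ContinuousLinearMap.proj (R := ℝ) (φ := fun _ => ℂ) i)) y :=
    fun i => HasFDerivAt.norm_sq (f := fun y : Fin n → ℂ => y i)
      (ContinuousLinearMap.proj (R := ℝ) (φ := fun _ => ℂ) i).hasFDerivAt
  have h2 : ∀ i, HasFDerivAt (fun y : Fin n → ℂ => (π * ‖y i‖ ^ 2) ^ p) _ y := fun i =>
    ((h1 i).const_mul π).pow p
  have h3 : HasFDerivAt (sigP p) _ y := HasFDerivAt.fun_sum fun i _ => h2 i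
  have h4 : HasDerivAt (chi b) (deriv (chi b) (sigP p y)) (sigP p y) :=
    ((contDiff_chi b).differentiable (by simp) _).hasDerivAt
  have h5 : HasFDerivAt (KT M b p) _ y := ((h4.comp_hasFDerivAt (h₂ := chi b) y h3).sub_const 1).const_mul M
  rw [h5.fderiv]
  simp only [smul_apply, _root_.sum_apply, stdSymp,
    ContinuousLinearMap.comp_apply, ContinuousLinearMap.proj_apply, innerSL_apply_apply,
    smul_eq_mul, Complex.inner, Finset.smul_sum, spd]
  refine Finset.sum_congr rfl fun i _ => ?_
  have : ∀ r : ℝ, ((starRingEnd ℂ) (v i) * (Complex.I * ((r:ℂ) * y i))).im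
      = r * ((starRingEnd ℂ) (y i) * v i).re := fun r => by
    simp; ring
  rw [this]
  simp
  ring

theorem KT_nonpos {n : ℕ} {M : ℝ} (hM : 0 ≤ M) (b : ℝ) (p : ℕ) (y : Fin n → ℂ) :
    KT M b p y ≤ 0 :=
  mul_nonpos_of_nonneg_of_nonpos hM (by linarith [chi_le_one b (sigP p y)])

theorem neg_le_KT {n : ℕ} {M : ℝ} (hM : 0 ≤ M) (b : ℝ) (p : ℕ) (y : Fin n → ℂ) :
    -M ≤ KT M b p y := by
  unfold KT
  nlinarith [chi_nonneg b (sigP p y)]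

theorem KT_of_ge {n : ℕ} {b : ℝ} (hb : 0 < b) (M : ℝ) {p : ℕ} {y : Fin n → ℂ}
    (h : b ≤ sigP p y) : KT M b p y = 0 := by
  rw [KT, chi_of_ge hb h]; ring

theorem KT_of_le {n : ℕ} {b : ℝ} (hb : 0 < b) (M : ℝ) {p : ℕ} {y : Fin n → ℂ}
    (h : sigP p y ≤ b / 2) : KT M b p y = -M := by
  rw [KT, chi_of_le hb h]; ring

/-- A trajectory of the toric Hamiltonian rotates every coordinate at constant speed. -/
theorem KT_flow {n : ℕ} {M b : ℝ} {p : ℕ} {y : ℝ → Fin n → ℂ}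
    (hy : ∀ t i, HasDerivAt (fun t => y t i)
      (Complex.I * (((2 * π * spd M b p (y t) i : ℝ) : ℂ) * y t i)) t) (t : ℝ) :
    (∀ i, ‖y t i‖ = ‖y 0 i‖) ∧ (∀ i, spd M b p (y t) i = spd M b p (y 0) i) ∧
      ∀ i, y t i = ex (spd M b p (y 0) i * t) * y 0 i := by
  have hn : ∀ t i, ‖y t i‖ ^ 2 = ‖y 0 i‖ ^ 2 := by
    intro t i
    have hd : ∀ s, HasDerivAt (fun s => ‖y s i‖ ^ 2) 0 s := fun s => by
      have := (hy s i).norm_sq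
      convert! this using 1
      simp [Complex.inner]
      ring
    exact is_const_of_deriv_eq_zero (fun s => (hd s).differentiableAt) (fun s => (hd s).deriv) t 0
  have hs : ∀ t i, spd M b p (y t) i = spd M b p (y 0) i := fun t i => by
    simp only [spd, sigP, hn t]
  refine ⟨fun i => ?_, hs t, fun i => ?_⟩
  · exact (sq_eq_sq₀ (norm_nonneg _) (norm_nonneg _)).1 (hn t i)
  · refine eq_ex_mul_of_hasDerivAt (y := fun t => y t i) _ (fun s => ?_) t
    rw [← hs s i]; exact hy s i

/-! ### Actions of closed orbits -/

/-- The standard symplectic form as a continuous bilinear form. -/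
def sympCLM (n : ℕ) : (Fin n → ℂ) →L[ℝ] (Fin n → ℂ) →L[ℝ] ℝ :=
  LinearMap.mkContinuous₂ (sympForm n) n fun v w => by
    rw [sympForm_apply, Real.norm_eq_abs, mul_assoc]; exact abs_stdSymp_le v w

theorem sympCLM_apply {n : ℕ} (v w : Fin n → ℂ) : sympCLM n v w = stdSymp n v w := rfl

theorem stdSymp_swap {n : ℕ} (v w : Fin n → ℂ) : stdSymp n v w = - stdSymp n w v := by
  simp only [stdSymp, ← Finset.sum_neg_distrib]
  refine Finset.sum_congr rfl fun i _ => ?_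
  simp; ring

/-- On a convex set the primitives `ω(φ(y), Dφ(y)·)` and `ω(y, ·)` of a multiple of the symplectic
form differ by an exact form. -/
theorem SympOn.exists_primitive {n : ℕ} {U : Set (Fin n → ℂ)} {φ : (Fin n → ℂ) → (Fin n → ℂ)}
    (h : SympOn U φ) (hU : IsOpen U) (hc : Convex ℝ U) :
    ∃ f : (Fin n → ℂ) → ℝ, ∀ y ∈ U,
      HasFDerivAt f ((sympCLM n (φ y)).comp (fderiv ℝ φ y) - sympCLM n y) y := by
  have hd : ∀ y ∈ U, HasFDerivAt (fderiv ℝ φ) (fderiv ℝ (fderiv ℝ φ) y) y := fun y hy =>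
    (((h.contDiffAt hU hy).fderiv_right (m := (⊤ : ℕ∞)) (by simp)).differentiableAt
      (by simp)).hasFDerivAt
  have hθ : ∀ y ∈ U, HasFDerivAt
      (fun y => (sympCLM n (φ y)).comp (fderiv ℝ φ y) - sympCLM n y) _ y := fun y hy =>
    ((((sympCLM n).hasFDerivAt (x := φ y)).comp y (h.hasFDerivAt hU hy)).clm_comp (hd y hy)).sub
      (sympCLM n).hasFDerivAt
  refine Convex.exists_forall_hasFDerivAt_of_fderiv_symmetric hc hU
    (fun y hy => (hθ y hy).differentiableAt.differentiableWithinAt) fun y hy u v => ?_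
  rw [(hθ y hy).fderiv]
  have hsym := (h.contDiffAt hU hy).isSymmSndFDerivAt (by
    simpa using WithTop.coe_le_coe.2 (le_top (a := (2 : ℕ∞)))) u v
  simp [sympCLM_apply, h.symp y hy, hsym]

/-- A symplectic map of a convex set preserves the symplectic area of closed curves, since the
pullback of the primitive of `ω` differs from it by an exact form. -/
theorem SympOn.action_eq {n : ℕ} {U : Set (Fin n → ℂ)} {φ : (Fin n → ℂ) → (Fin n → ℂ)}
    (h : SympOn U φ) (hU : IsOpen U) (hc : Convex ℝ U) {y y' : ℝ → Fin n → ℂ}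
    (hyU : ∀ t, y t ∈ U) (hy : ∀ t, HasDerivAt y (y' t) t) (hy' : Continuous y')
    (hp : y 1 = y 0) :
    ∫ t in (0:ℝ)..1, stdSymp n (φ (y t)) (fderiv ℝ φ (y t) (y' t))
      = ∫ t in (0:ℝ)..1, stdSymp n (y t) (y' t) := by
  obtain ⟨f, hf⟩ := h.exists_primitive hU hc
  have hyc : Continuous y := continuous_iff_continuousAt.2 fun t => (hy t).continuousAt
  have hφc : Continuous fun t => φ (y t) := continuous_iff_continuousAt.2 fun t =>
    (h.contDiffAt hU (hyU t)).continuousAt.comp (hy t).continuousAt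
  have hdc : Continuous fun t => fderiv ℝ φ (y t) := continuous_iff_continuousAt.2 fun t =>
    ((h.contDiffAt hU (hyU t)).fderiv_right (m := (⊤ : ℕ∞)) (by simp)).continuousAt.comp
      (hy t).continuousAt
  have h1 : Continuous fun t => stdSymp n (φ (y t)) (fderiv ℝ φ (y t) (y' t)) := by
    exact ((sympCLM n).continuous.comp hφc).clm_apply (hdc.clm_apply hy')
  have h2 : Continuous fun t => stdSymp n (y t) (y' t) := by
    exact ((sympCLM n).continuous.comp hyc).clm_apply hy'
  have h3 := intervalIntegral.integral_eq_sub_of_hasDerivAt (a := 0) (b := 1)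
    (f := fun t => f (y t))
    (f' := fun t => stdSymp n (φ (y t)) (fderiv ℝ φ (y t) (y' t)) - stdSymp n (y t) (y' t))
    (fun t _ => (hf (y t) (hyU t)).comp_hasDerivAt t (hy t))
    ((h1.sub h2).intervalIntegrable _ _)
  rw [intervalIntegral.integral_sub (h1.intervalIntegrable _ _) (h2.intervalIntegrable _ _), hp,
    sub_self] at h3
  linarith

/-- A periodic orbit leaving the ellipsoid `√q ≤ ρ` stays on an ellipsoid `q = Q` and its action is
nonpositive once `M` is large. -/
theorem orbit_outer {n : ℕ} {D : Ham (Fin n)} {κ : (Fin n → ℂ) → ℝ} {a : Fin n → ℝ}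
    (ha : ∀ i, 0 < a i) {T ρ M δ : ℝ} (hT : 0 < T) (hρ : 0 < ρ) (hδ : 0 < δ)
    (hδT : ∀ i (l : ℤ), 0 < T - l * a i → δ ≤ T - l * a i) (hM : T * (T * ρ / δ) ^ 2 ≤ M)
    (hH : ∀ z, D.H z = M + κ z + Frad a T ρ z)
    (hg : ∀ z i, D.g z i = rgrad (fderiv ℝ κ z) i + gFrad a T ρ z i)
    (hκ : ∀ z, ρ < √(qf a z) → κ z = 0 ∧ fderiv ℝ κ z = 0)
    {x : ℝ → Fin n → ℂ} (hx : D.IsOrbit x) {t0 : ℝ} (ht0 : ρ < √(qf a (x t0))) : D.AO x ≤ 0 := by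
  have hpi := Real.pi_pos
  obtain ⟨hd, hp⟩ := hx
  have hr0 : ∀ i, rgrad (0 : (Fin n → ℂ) →L[ℝ] ℝ) i = 0 := fun i => by simp [rgrad]
  have hgo : ∀ z, ρ < √(qf a z) → ∀ i, D.g z i = gFrad a T ρ z i := fun z hz i => by
    rw [hg, (hκ z hz).2, hr0, zero_add]
  have hqd : ∀ t, HasDerivAt (fun t => qf a (x t)) (2 * qb a (x t) fun i => Complex.I * D.g (x t) i) t := by
    intro t
    have h1 : HasDerivAt (fun t => qf a (x t)) _ t :=
      HasDerivAt.fun_sum fun i _ => (((hd t i).norm_sq).const_mul π).div_const (a i)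
    convert! h1 using 1
    rw [qb, Finset.mul_sum]
    refine Finset.sum_congr rfl fun i _ => ?_
    rw [Complex.inner]; ring_nf
  have hqz : ∀ t, ρ < √(qf a (x t)) → qb a (x t) (fun i => Complex.I * D.g (x t) i) = 0 := by
    intro t ht
    rw [qb]
    refine Finset.sum_eq_zero fun i _ => ?_
    rw [hgo _ ht, gFrad]
    simp
    left; ring
  have hlt : ∀ z, ρ < √(qf a z) ↔ 0 < qf a z - ρ ^ 2 := fun z => by
    rw [Real.lt_sqrt hρ.le, sub_pos]
  have hψ : ∀ t, HasDerivAt (fun t => max (qf a (x t) - ρ ^ 2) 0 ^ 2) 0 t := by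
    intro t
    have h1 := (hasDerivAt_max_sq (qf a (x t) - ρ ^ 2)).comp t ((hqd t).sub_const (ρ ^ 2))
    convert! h1 using 1
    by_cases h : ρ < √(qf a (x t))
    · rw [hqz t h]; ring
    · rw [hlt, not_lt] at h
      rw [max_eq_right h]; ring
  have hψc : ∀ t, max (qf a (x t) - ρ ^ 2) 0 = max (qf a (x t0) - ρ ^ 2) 0 := fun t =>
    (sq_eq_sq₀ (le_max_right _ _) (le_max_right _ _)).1
      (is_const_of_deriv_eq_zero (fun s => (hψ s).differentiableAt) (fun s => (hψ s).deriv) t t0)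
  set Q := qf a (x t0) with hQ
  have hq : ∀ t, qf a (x t) = Q := fun t => by
    have h1 := hψc t
    have h2 := (hlt _).1 ht0
    rw [max_eq_left h2.le] at h1
    rcases le_total (qf a (x t) - ρ ^ 2) 0 with h | h
    · rw [max_eq_right h] at h1; linarith
    · rw [max_eq_left h] at h1; linarith
  have hout : ∀ t, ρ < √(qf a (x t)) := fun t => by rw [hq]; exact ht0
  set lam := 1 - ρ / max (√Q) ρ with hlamd
  have hlam : ∀ t, lamF a ρ (x t) = lam := fun t => by rw [lamF, hq]
  have hQ0 : 0 ≤ Q := qf_nonneg ha _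
  have hlam0 : 0 ≤ lam := by rw [← hlam 0]; exact lamF_nonneg hρ _
  have hlam1 : lam < 1 := by rw [← hlam 0]; exact lamF_lt_one hρ _
  have hlQ : (1 - lam) * √Q = ρ := by
    have := lamF_mul_sqrt (a := a) hρ (x t0)
    rw [hlam, ← hQ, max_eq_left (by linarith)] at this
    linarith
  obtain ⟨i, hi⟩ : ∃ i, x 0 i ≠ 0 := by
    by_contra hcon
    push Not at hcon
    have h1 := hout 0
    rw [show x 0 = 0 from funext hcon] at h1
    simp [qf] at h1
    linarith
  have hxt : ∀ t, x t i = ex (T * lam / a i * t) * x 0 i :=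
    eq_ex_mul_of_hasDerivAt (y := fun t => x t i) (T * lam / a i) fun t => by
      have := hd t i
      rw [hgo _ (hout t), gFrad, hlam] at this
      rw [show 2 * π * (T * lam / a i) = 2 * π * T * lam / a i by ring]
      exact this
  obtain ⟨l, hl⟩ : ∃ l : ℤ, T * lam / a i = l := by
    apply exists_int_of_ex_eq_one
    have h1 := hxt 1
    have h2 : x 1 i = x 0 i := by have := hp 0; rw [zero_add] at this; rw [this]
    rw [h2, mul_one] at h1
    exact (mul_right_cancel₀ hi ((one_mul _).trans h1)).symm
  have hl' : T * lam = l * a i := by rw [← hl, div_mul_cancel₀ _ (ha i).ne']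
  have hδl : δ ≤ T * (1 - lam) := by
    have := hδT i l (by rw [← hl']; nlinarith)
    linarith
  have hsQ : √Q ≤ T * ρ / δ := by
    rw [le_div_iff₀ hδ, ← hlQ]
    nlinarith [Real.sqrt_nonneg Q]
  have hTQ : T * Q ≤ M := by
    refine le_trans ?_ hM
    gcongr
    rw [← Real.sq_sqrt hQ0]
    gcongr
  have h1 : ∀ t, ∑ i, ((starRingEnd ℂ) (D.g (x t) i) * x t i).re = 2 * T * lam * Q := by
    intro t
    have := gFrad_inner (a := a) (T := T) (ρ := ρ) (x t) (x t)
    rw [qb_self, hlam, hq] at this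
    rw [← this]
    exact Finset.sum_congr rfl fun i _ => by rw [hgo _ (hout t)]
  have h2 : ∀ t, D.H (x t) = M + T * lam ^ 2 * Q := by
    intro t
    rw [hH, (hκ _ (hout t)).1, Frad_eq ha hρ, hlam, hq]; ring
  rw [Ham.AO]
  simp only [h1, h2, intervalIntegral.integral_const, sub_zero, one_smul]
  have h3 : T * Q * (lam * (1 - lam)) ≤ T * Q * 1 := by
    gcongr
    nlinarith
  linarith

/-- A periodic orbit inside the ellipsoid `√q ≤ ρ` has nonpositive action or is the image under `φ`
of a periodic orbit of the toric Hamiltonian, with the same action. -/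
theorem orbit_inner {n : ℕ} {D : Ham (Fin n)} {U K1 : Set (Fin n → ℂ)}
    {φ : (Fin n → ℂ) → (Fin n → ℂ)} (h : SympOn U φ) (hU : IsOpen U) (hUc : Convex ℝ U)
    (h1 : IsCompact K1) (h1U : K1 ⊆ U) {M b : ℝ} {p : ℕ} (hp2 : 2 ≤ p) (hM0 : 0 ≤ M) (hb : 0 < b)
    (hK : ∀ y, y ∉ K1 → KT M b p y = 0) {a : Fin n → ℝ} {T ρ : ℝ} (hρ : 0 < ρ)
    (hH : ∀ z, D.H z = M + pushK U φ (KT M b p) z + Frad a T ρ z)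
    (hg : ∀ z i, D.g z i = rgrad (fderiv ℝ (pushK U φ (KT M b p)) z) i + gFrad a T ρ z i)
    {Z : Set ℝ} (hZ : ∀ s : Fin n → ℝ, (∀ i, 0 ≤ s i) →
      ∑ i, s i ^ p ≤ b → (∀ i, ∃ m : ℤ, M * deriv (chi b) (∑ i, s i ^ p) * p * s i ^ (p - 1) = m) →
      0 ≤ M * deriv (chi b) (∑ i, s i ^ p) →
      M * (p * (∑ i, s i ^ p) * deriv (chi b) (∑ i, s i ^ p) - chi b (∑ i, s i ^ p)) ∈ Z)
    {x : ℝ → Fin n → ℂ} (hx : D.IsOrbit x) (hin : ∀ t, √(qf a (x t)) ≤ ρ) :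
    D.AO x ≤ 0 ∨ D.AO x ∈ Z := by
  have hpi := Real.pi_pos
  obtain ⟨hd, hp⟩ := hx
  set κ := pushK U φ (KT M b p) with hκ
  have hκs : ContDiff ℝ (⊤ : ℕ∞) κ := h.contDiff_pushK hU h1 h1U (contDiff_KT M b p) hK
  have hgF : ∀ t i, D.g (x t) i = rgrad (fderiv ℝ κ (x t)) i := fun t i => by
    rw [hg, gFrad, lamF_of_le hρ (hin t)]; simp
  have hHx : ∀ t, D.H (x t) = M + κ (x t) := fun t => by
    rw [hH, Frad, max_eq_right (by linarith [hin t])]; ring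
  set x' : ℝ → Fin n → ℂ := fun t i => Complex.I * rgrad (fderiv ℝ κ (x t)) i with hx'
  have hxd : ∀ t, HasDerivAt x (x' t) t := fun t => hasDerivAt_pi.2 fun i => by
    have := hd t i
    rw [hgF] at this
    exact this
  have hω : ∀ t u, stdSymp n u (x' t) = fderiv ℝ κ (x t) u := fun t u => stdSymp_rgrad _ u
  have hself : ∀ v : Fin n → ℂ, stdSymp n v v = 0 := fun v => by
    have := stdSymp_swap v v
    linarith
  have hκd : ∀ t, HasDerivAt (fun t => κ (x t)) 0 t := fun t => by
    have := ((hκs.differentiable (by simp) (x t)).hasFDerivAt).comp_hasDerivAt t (hxd t)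
    rwa [← hω, hself] at this
  have hκc : ∀ t, κ (x t) = κ (x 0) := fun t =>
    is_const_of_deriv_eq_zero (fun s => (hκd s).differentiableAt) (fun s => (hκd s).deriv) t 0
  have hAO : D.AO x = (∫ t in (0:ℝ)..1, stdSymp n (x t) (x' t)) / 2 - (M + κ (x 0)) := by
    rw [Ham.AO]
    simp only [hHx, hκc, intervalIntegral.integral_const, sub_zero, one_smul]
    congr 2
    refine intervalIntegral.integral_congr fun t _ => ?_
    rw [hω, ← rgrad_inner]
    exact Finset.sum_congr rfl fun i _ => by rw [hgF]
  have hκ0 : ∀ z, κ z ≤ 0 := fun z => by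
    rw [hκ, pushK]
    split_ifs
    · exact KT_nonpos hM0 b p _
    · exact le_rfl
  by_cases hz : κ (x 0) = 0
  · left
    have h2 : ∀ t, fderiv ℝ κ (x t) = 0 := fun t => by
      refine IsLocalMax.fderiv_eq_zero (Filter.Eventually.of_forall fun z => ?_)
      rw [hκc, hz]; exact hκ0 z
    rw [hAO, hz]
    simp only [hω, h2]
    simp
    exact hM0
  -- the orbit lies in the image of `φ`
  have hmem : ∀ t, x t ∈ φ '' K1 := fun t => by
    by_contra hc
    exact hz ((hκc t).symm.trans (h.pushK_of_notMem hK hc))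
  choose y hyK hyx using hmem
  have hyU : ∀ t, y t ∈ U := fun t => h1U (hyK t)
  have hyinv : y = fun t => Function.invFunOn φ U (x t) := funext fun t => by
    rw [← hyx t, h.inv_eq (hyU t)]
  set y' : ℝ → Fin n → ℂ := fun t i =>
    Complex.I * (((2 * π * spd M b p (y t) i : ℝ) : ℂ) * y t i) with hy'
  have hdy : ∀ t, HasDerivAt y (y' t) t ∧ fderiv ℝ φ (y t) (y' t) = x' t := by
    intro t
    obtain ⟨B, hB, hB1, hB2⟩ := h.hasFDerivAt_inv hU (hyU t)
    rw [hyx] at hB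
    have h2 := hB.comp_hasDerivAt t (hxd t)
    have h3 : B (x' t) = y' t := by
      rw [← sub_eq_zero]
      refine eq_zero_of_stdSymp _ fun v => ?_
      rw [stdSymp_swap, neg_eq_zero, ← sympCLM_apply, map_sub, sympCLM_apply, sympCLM_apply,
        sub_eq_zero]
      have h4 : stdSymp n v (y' t) = fderiv ℝ (KT M b p) (y t) v := (fderiv_KT M b p (y t) v).symm
      rw [h4, ← h.fderiv_pushK hU h1 h1U (contDiff_KT M b p) hK (hyU t), hyx, ← hκ, ← hω,
        ← h.symp (y t) (hyU t), hB2]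
    constructor
    · rw [h3] at h2
      rw [hyinv]; exact h2
    · rw [← h3, hB2]
  have hflow := KT_flow (M := M) (b := b) (p := p) (y := y) fun t i => hasDerivAt_pi.1 (hdy t).1 i
  have hnrm : ∀ t i, ‖y t i‖ = ‖y 0 i‖ := fun t => (hflow t).1
  have hyc : Continuous y := continuous_iff_continuousAt.2 fun t => (hdy t).1.continuousAt
  have hspd : ∀ t i, spd M b p (y t) i = spd M b p (y 0) i := fun t => (hflow t).2.1
  have hy'c : Continuous y' := by
    simp only [hy', hspd]
    fun_prop
  have hper : y 1 = y 0 := by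
    have := hp 0
    rw [zero_add] at this
    rw [hyinv]; simp only [this]
  have hact := h.action_eq hU hUc hyU (fun t => (hdy t).1) hy'c hper
  have e1 : ∀ t, stdSymp n (y t) (y' t) = 2 * ∑ i, spd M b p (y 0) i * (π * ‖y 0 i‖ ^ 2) := by
    intro t
    rw [stdSymp, Finset.mul_sum]
    refine Finset.sum_congr rfl fun i _ => ?_
    rw [← hnrm t, ← hspd t]
    simp only [hy', Complex.sq_norm, Complex.normSq_apply]
    simp
    ring
  set s : Fin n → ℝ := fun i => π * ‖y 0 i‖ ^ 2 with hs
  have hsig : sigP p (y 0) = ∑ i, s i ^ p := rfl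
  have e2 : ∑ i, spd M b p (y 0) i * (π * ‖y 0 i‖ ^ 2)
      = M * deriv (chi b) (∑ i, s i ^ p) * p * ∑ i, s i ^ p := by
    rw [Finset.mul_sum]
    refine Finset.sum_congr rfl fun i _ => ?_
    rw [spd, hsig, mul_assoc _ (_ ^ (p - 1)), ← pow_succ, Nat.sub_add_cancel (by omega)]
  have hAO2 : D.AO x = M * (p * (∑ i, s i ^ p) * deriv (chi b) (∑ i, s i ^ p)
      - chi b (∑ i, s i ^ p)) := by
    have e3 : ∫ t in (0:ℝ)..1, stdSymp n (x t) (x' t)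
        = 2 * (M * deriv (chi b) (∑ i, s i ^ p) * p * ∑ i, s i ^ p) := by
      simp only [e1, e2, hyx, (hdy _).2, intervalIntegral.integral_const, sub_zero, one_smul] at hact
      exact hact
    have e4 : κ (x 0) = M * (chi b (∑ i, s i ^ p) - 1) := by
      rw [← hyx 0, hκ, h.pushK_apply (hyU 0)]; rfl
    rw [hAO, e3, e4]; ring
  rcases le_or_gt (D.AO x) 0 with hneg | hpos
  · exact Or.inl hneg
  right
  rw [hAO2]
  have hs0 : ∀ i, 0 ≤ s i := fun i => by positivity
  have hσ0 : 0 ≤ ∑ i, s i ^ p := Finset.sum_nonneg fun i _ => pow_nonneg (hs0 i) p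
  refine hZ s hs0 ?_ ?_ ?_
  · by_contra hc
    push Not at hc
    refine hz ?_
    rw [← hyx 0, hκ, h.pushK_apply (hyU 0)]
    exact KT_of_ge hb M hc.le
  · intro i
    by_cases hi : y 0 i = 0
    · refine ⟨0, ?_⟩
      have : s i = 0 := by simp [hs, hi]
      rw [this, zero_pow (by omega)]; simp
    · obtain ⟨l, hl⟩ := exists_int_of_ex_eq_one (μ := spd M b p (y 0) i) (by
        have h2 := (hflow 1).2.2 i
        rw [hper, mul_one] at h2
        exact (mul_right_cancel₀ hi ((one_mul _).trans h2)).symm)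
      exact ⟨l, hl⟩
  · by_contra hc
    push Not at hc
    rw [hAO2] at hpos
    have h2 : 0 ≤ M * chi b (∑ i, s i ^ p) := mul_nonneg hM0 (chi_nonneg _ _)
    have h3 : M * deriv (chi b) (∑ i, s i ^ p) * (p * ∑ i, s i ^ p) ≤ 0 :=
      mul_nonpos_of_nonpos_of_nonneg hc.le (by positivity)
    linarith

/-! ### Comparison estimates -/

/-- The Hamiltonian dominates `N' (q - 1)` if `M` is large and the image of `φ` lies in `q ≤ 1`. -/
theorem embHam_ge {n : ℕ} {U : Set (Fin n → ℂ)} {φ : (Fin n → ℂ) → (Fin n → ℂ)} (h : SympOn U φ)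
    {M b : ℝ} {p : ℕ} {a : Fin n → ℝ} (ha : ∀ i, 0 < a i) {T ρ N' : ℝ} (hN : 0 ≤ N') (hT : N' < T)
    (hρ : 0 < ρ) (hM : T * N' * ρ ^ 2 / (T - N') ≤ M) (hφ : ∀ y ∈ U, qf a (φ y) ≤ 1)
    (z : Fin n → ℂ) :
    N' * (qf a z - 1) ≤ M + pushK U φ (KT M b p) z + Frad a T ρ z := by
  have hT0 : 0 < T := hN.trans_lt hT
  have hTN : 0 < T - N' := by linarith
  have hM' : T * N' * ρ ^ 2 ≤ M * (T - N') := (div_le_iff₀ hTN).1 hM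
  have hM0 : 0 ≤ M := le_trans (by positivity) hM
  have hF : 0 ≤ Frad a T ρ z := by unfold Frad; positivity
  by_cases hz : z ∈ φ '' U
  · obtain ⟨y, hy, rfl⟩ := hz
    rw [h.pushK_apply hy]
    have h1 := neg_le_KT hM0 b p y
    have h2 : N' * (qf a (φ y) - 1) ≤ 0 :=
      mul_nonpos_of_nonneg_of_nonpos hN (by linarith [hφ y hy])
    linarith
  · rw [pushK, if_neg hz]
    have hq0 := qf_nonneg ha z
    obtain ⟨r, hr0, hr⟩ : ∃ r, 0 ≤ r ∧ √(qf a z) = r := ⟨_, Real.sqrt_nonneg _, rfl⟩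
    have hq : qf a z = r ^ 2 := by rw [← hr, Real.sq_sqrt hq0]
    rw [Frad, hr, hq]
    suffices hs : N' * r ^ 2 ≤ M + T * max (r - ρ) 0 ^ 2 by linarith
    rcases le_or_gt r ρ with hrρ | hrρ
    · have h1 : N' * r ^ 2 ≤ N' * ρ ^ 2 := by gcongr
      have h2 : (T - N') * (N' * ρ ^ 2) ≤ (T - N') * M := by
        nlinarith [mul_nonneg (mul_nonneg hN hN) (sq_nonneg ρ)]
      have h3 := le_of_mul_le_mul_left h2 hTN
      have : 0 ≤ T * max (r - ρ) 0 ^ 2 := by positivity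
      linarith
    · rw [max_eq_left (by linarith)]
      refine le_of_mul_le_mul_left ?_ hTN
      nlinarith [sq_nonneg ((T - N') * r - T * ρ)]

/-- A function of at most quadratic growth which is nonpositive on the polydisk `‖y‖ ≤ r1` is
dominated by the split Hamiltonian `∑ᵢ R (√π|yᵢ| - √π r0)₊²` for `r0 < r1` and `R` large. -/
theorem exists_dominating {n : ℕ} {F : (Fin n → ℂ) → ℝ} {A B : ℝ} (hA : 0 ≤ A)
    (hF : ∀ y, F y ≤ A + B * ‖y‖ ^ 2) {r0 r1 : ℝ} (hr0 : 0 < r0) (hr : r0 < r1)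
    (hz : ∀ y, ‖y‖ ≤ r1 → F y ≤ 0) :
    ∃ R0, ∀ R ≥ R0, ∀ y : Fin n → ℂ,
      F y ≤ ∑ i, Frad (fun _ : Unit => (1:ℝ)) R (√π * r0) (fun _ => y i) := by
  have hpi := Real.pi_pos
  have hF1 : ∀ (R : ℝ) (c : ℂ), Frad (fun _ : Unit => (1:ℝ)) R (√π * r0) (fun _ => c)
      = R * π * max (‖c‖ - r0) 0 ^ 2 := by
    intro R c
    have : √(qf (fun _ : Unit => (1:ℝ)) fun _ => c) - √π * r0 = √π * (‖c‖ - r0) := by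
      rw [qf_unit, Real.sqrt_mul hpi.le, Real.sqrt_sq (norm_nonneg _)]; ring
    have h2 : max (√π * (‖c‖ - r0)) 0 = √π * max (‖c‖ - r0) 0 := by
      rw [mul_max_of_nonneg _ _ (Real.sqrt_nonneg _), mul_zero]
    rw [Frad, this, h2, mul_pow, Real.sq_sqrt hpi.le]; ring
  have hr1 : 0 < r1 := hr0.trans hr
  set q := (r1 - r0) / r1 with hq
  have hq0 : 0 < q := div_pos (by linarith) hr1
  refine ⟨max 0 ((A / r1 ^ 2 + B) / (π * q ^ 2)), fun R hR y => ?_⟩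
  have hR0 : 0 ≤ R := (le_max_left _ _).trans hR
  have hR1 : A / r1 ^ 2 + B ≤ R * (π * q ^ 2) :=
    (div_le_iff₀ (by positivity)).1 ((le_max_right _ _).trans hR)
  simp only [hF1]
  have hnn : ∀ i, 0 ≤ R * π * max (‖y i‖ - r0) 0 ^ 2 := fun i => by positivity
  rcases le_or_gt ‖y‖ r1 with hy | hy
  · exact (hz y hy).trans (Finset.sum_nonneg fun i _ => hnn i)
  · obtain ⟨i, hi⟩ : ∃ i, ‖y i‖ = ‖y‖ := by
      by_contra hc
      push Not at hc
      have : ‖y‖ < ‖y‖ := (pi_norm_lt_iff (hr1.trans hy)).2 fun i =>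
        lt_of_le_of_ne (norm_le_pi_norm y i) (hc i)
      exact lt_irrefl _ this
    refine (hF y).trans (le_trans ?_ (Finset.single_le_sum (fun i _ => hnn i) (Finset.mem_univ i)))
    rw [hi, max_eq_left (by linarith)]
    have h1 : q * ‖y‖ ≤ ‖y‖ - r0 := by
      rw [hq, div_mul_eq_mul_div, div_le_iff₀ hr1]
      nlinarith
    have h2 : A ≤ A / r1 ^ 2 * ‖y‖ ^ 2 := by
      rw [div_mul_eq_mul_div, le_div_iff₀ (by positivity)]
      gcongr
    calc A + B * ‖y‖ ^ 2 ≤ (A / r1 ^ 2 + B) * ‖y‖ ^ 2 := by linarith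
      _ ≤ R * (π * q ^ 2) * ‖y‖ ^ 2 := by gcongr
      _ = R * π * (q * ‖y‖) ^ 2 := by ring
      _ ≤ R * π * (‖y‖ - r0) ^ 2 := by gcongr

/-- If the modes `m > N' / aᵢ` of a loop vanish then its action is at most `N'`. -/
theorem act_le_of_modes {n : ℕ} (D : Ham (Fin n)) {a : Fin n → ℝ} (ha : ∀ i, 0 < a i) {N' : ℝ}
    (hN : 0 ≤ N') (hD : ∀ z, N' * (qf a z - 1) ≤ D.H z) (N : ℕ) (c : Fin n → ℤ → ℂ)
    (hc : ∀ i (m : ℤ), 1 ≤ m → m ≤ N → N' < m * a i → c i m = 0) : D.Act N c ≤ N' := by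
  have hpi := Real.pi_pos
  have hcH := D.contH
  have hqc : Continuous fun t => qf a (ev N c t) := continuous_qf.comp (continuous_ev N c)
  have h1 : ∫ t in (0:ℝ)..1, N' * (qf a (ev N c t) - 1) ≤ ∫ t in (0:ℝ)..1, D.H (ev N c t) := by
    refine intervalIntegral.integral_mono_on zero_le_one ?_ ?_ fun t _ => hD _
    · apply Continuous.intervalIntegrable; fun_prop
    · apply Continuous.intervalIntegrable; fun_prop
  have h2 : ∫ t in (0:ℝ)..1, qf a (ev N c t) = ∑ i, ∑ m ∈ Mo N, π / a i * ‖c i m‖ ^ 2 := by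
    simp only [qf]
    rw [intervalIntegral.integral_finsetSum fun i _ => by apply Continuous.intervalIntegrable; fun_prop]
    refine Finset.sum_congr rfl fun i _ => ?_
    rw [← Finset.mul_sum, ← integral_norm_sq_tp (Mo N) (c i), ← intervalIntegral.integral_const_mul]
    refine intervalIntegral.integral_congr fun t _ => ?_
    simp only [ev]; ring
  rw [intervalIntegral.integral_const_mul, intervalIntegral.integral_sub
    (hqc.intervalIntegrable _ _) (by simp), h2] at h1
  simp only [intervalIntegral.integral_const, sub_zero, one_smul] at h1
  have h3 : ∑ i, ∑ m ∈ Mo N, π * m * ‖c i m‖ ^ 2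
      ≤ N' * ∑ i, ∑ m ∈ Mo N, π / a i * ‖c i m‖ ^ 2 := by
    simp only [Finset.mul_sum]
    refine Finset.sum_le_sum fun i _ => Finset.sum_le_sum fun m hm => ?_
    have hai := ha i
    have e : N' * (π / a i * ‖c i m‖ ^ 2) = π * (N' / a i) * ‖c i m‖ ^ 2 := by ring
    rw [e]
    rcases le_or_gt (m * a i) N' with h | h
    · gcongr
      exact (le_div_iff₀ hai).2 h
    · have hm1 : (1:ℤ) ≤ m := by
        by_contra hcon
        have : (m:ℝ) ≤ 0 := by exact_mod_cast (by omega : m ≤ 0)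
        nlinarith
      rw [hc i m hm1 (mem_Mo.1 hm).2 h]; simp
  unfold Ham.Act
  linarith

/-! ### Real affine maps acting on Fourier coefficients -/

/-- The complex-linear matrix coefficients of a real-linear map. -/
def linA {n : ℕ} (L : (Fin n → ℂ) →L[ℝ] (Fin n → ℂ)) (i j : Fin n) : ℂ :=
  (L (Pi.single j 1) i - Complex.I * L (Pi.single j Complex.I) i) / 2

/-- The complex-antilinear matrix coefficients of a real-linear map. -/
def linB {n : ℕ} (L : (Fin n → ℂ) →L[ℝ] (Fin n → ℂ)) (i j : Fin n) : ℂ :=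
  (L (Pi.single j 1) i + Complex.I * L (Pi.single j Complex.I) i) / 2

theorem lin_apply {n : ℕ} (L : (Fin n → ℂ) →L[ℝ] (Fin n → ℂ)) (v : Fin n → ℂ) (i : Fin n) :
    L v i = ∑ j, (linA L i j * v j + linB L i j * (starRingEnd ℂ) (v j)) := by
  have hv : v = ∑ j, ((v j).re • Pi.single (M := fun _ => ℂ) j 1
      + (v j).im • Pi.single (M := fun _ => ℂ) j Complex.I) := by
    ext i
    simp [Finset.sum_apply, Pi.single_apply, Finset.sum_add_distrib, Complex.re_add_im]
  conv_lhs => rw [hv]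
  rw [map_sum, Finset.sum_apply]
  refine Finset.sum_congr rfl fun j _ => ?_
  rw [map_add, map_smul, map_smul]
  simp only [Pi.add_apply, Pi.smul_apply, linA, linB, Complex.real_smul]
  conv_rhs => rw [← Complex.re_add_im (v j)]
  simp only [map_add, map_mul, Complex.conj_ofReal, Complex.conj_I]
  linear_combination ((v j).im : ℂ) * L (Pi.single j Complex.I) i * Complex.I_mul_I

/-- The Fourier coefficients of the image of a loop under a real-linear map. -/
def linC {n : ℕ} (L : (Fin n → ℂ) →L[ℝ] (Fin n → ℂ)) (c : Fin n → ℤ → ℂ) : Fin n → ℤ → ℂ :=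
  fun i m => ∑ j, (linA L i j * c j m + linB L i j * (starRingEnd ℂ) (c j (-m)))

/-- The Fourier coefficients of the image of a loop under the affine map `z ↦ z₀ + L z`. -/
def affC {n : ℕ} (z0 : Fin n → ℂ) (L : (Fin n → ℂ) →L[ℝ] (Fin n → ℂ)) (c : Fin n → ℤ → ℂ) :
    Fin n → ℤ → ℂ :=
  fun i m => linC L c i m + if m = 0 then z0 i else 0

theorem conj_tp (N : ℕ) (b : ℤ → ℂ) (t : ℝ) :
    (starRingEnd ℂ) (tp (Mo N) b t) = tp (Mo N) (fun m => (starRingEnd ℂ) (b (-m))) t := by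
  simp only [tp, map_sum]
  refine Finset.sum_bij' (fun m _ => -m) (fun m _ => -m) ?_ ?_ ?_ ?_ ?_
  · intro m hm; rw [mem_Mo] at *; omega
  · intro m hm; rw [mem_Mo] at *; omega
  · intro m _; ring
  · intro m _; ring
  · intro m _
    rw [map_mul, conj_ex, neg_neg]; push_cast; rw [neg_mul]

theorem ev_linC {n : ℕ} (L : (Fin n → ℂ) →L[ℝ] (Fin n → ℂ)) (N : ℕ) (c : Fin n → ℤ → ℂ) (t : ℝ) :
    ev N (linC L c) t = L (ev N c t) := by
  ext i
  rw [lin_apply]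
  simp only [ev, conj_tp]
  simp only [tp, linC, Finset.sum_mul, Finset.mul_sum]
  rw [Finset.sum_comm]
  refine Finset.sum_congr rfl fun j _ => ?_
  rw [← Finset.sum_add_distrib]
  exact Finset.sum_congr rfl fun m _ => by ring

theorem ev_affC {n : ℕ} (z0 : Fin n → ℂ) (L : (Fin n → ℂ) →L[ℝ] (Fin n → ℂ)) (N : ℕ)
    (c : Fin n → ℤ → ℂ) (t : ℝ) : ev N (affC z0 L c) t = z0 + L (ev N c t) := by
  rw [← ev_linC]
  ext i
  have h0 : (0:ℤ) ∈ Mo N := mem_Mo.2 (by omega)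
  simp only [ev, tp, affC, add_mul, Finset.sum_add_distrib, Pi.add_apply, ite_mul, zero_mul,
    Finset.sum_ite_eq', h0, if_true, Int.cast_zero, ex_zero, mul_one]
  ring

theorem continuous_affC {n : ℕ} (z0 : Fin n → ℂ) (L : (Fin n → ℂ) →L[ℝ] (Fin n → ℂ)) :
    Continuous (affC z0 L) := by
  have := Complex.continuous_conj
  unfold affC linC
  fun_prop

theorem affC_rot {n : ℕ} (z0 : Fin n → ℂ) (L : (Fin n → ℂ) →L[ℝ] (Fin n → ℂ)) {u : ℂ}
    (hu : ‖u‖ = 1) (c : Fin n → ℤ → ℂ) : affC z0 L (rot u c) = rot u (affC z0 L c) := by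
  have hc : ∀ m : ℤ, (starRingEnd ℂ) (u ^ (-m)) = u ^ m := by
    intro m
    rw [map_zpow₀, ← Complex.inv_eq_conj hu, inv_zpow', neg_neg]
  ext i m
  simp only [affC, linC, rot, map_mul, hc, mul_add, Finset.mul_sum]
  congr 1
  · exact Finset.sum_congr rfl fun j _ => by ring
  · split_ifs with h <;> simp [h]

/-- The quadratic part of the action is the symplectic area of the loop. -/
theorem quad_eq_integral {n : ℕ} (N : ℕ) (c : Fin n → ℤ → ℂ) :
    ∑ i, ∑ m ∈ Mo N, π * m * ‖c i m‖ ^ 2 = ∫ t in (0:ℝ)..1,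
      stdSymp n (ev N c t) (ev N (fun i m => ((π * m : ℝ) : ℂ) * Complex.I * c i m) t) := by
  have hconj := Complex.continuous_conj
  have e : ∀ t, stdSymp n (ev N c t) (ev N (fun i m => ((π * m : ℝ) : ℂ) * Complex.I * c i m) t)
      = ∑ i, ((starRingEnd ℂ) (tp (Mo N) (c i) t)
          * tp (Mo N) (fun m => ((π * m : ℝ) : ℂ) * c i m) t).re := by
    intro t
    refine Finset.sum_congr rfl fun i _ => ?_
    have : ev N (fun i m => ((π * m : ℝ) : ℂ) * Complex.I * c i m) t i
        = Complex.I * tp (Mo N) (fun m => ((π * m : ℝ) : ℂ) * c i m) t := by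
      simp only [ev, tp, Finset.mul_sum]
      exact Finset.sum_congr rfl fun m _ => by ring
    rw [this, mul_left_comm, Complex.I_mul_im]
    rfl
  simp only [e]
  rw [intervalIntegral.integral_finsetSum fun i _ => by
    apply Continuous.intervalIntegrable; fun_prop]
  refine Finset.sum_congr rfl fun i _ => ?_
  rw [re_integral_conj_mul_tp _ _ _ (continuous_tp _ _)]
  refine Finset.sum_congr rfl fun m hm => ?_
  rw [ft_tp _ _ _ hm, mul_left_comm, Complex.re_ofReal_mul, Complex.conj_mul']
  norm_cast

/-- Affine symplectic maps preserve the quadratic part of the action. -/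
theorem quad_affC {n : ℕ} (z0 : Fin n → ℂ) (L : (Fin n → ℂ) →L[ℝ] (Fin n → ℂ))
    (hL : ∀ v w, stdSymp n (L v) (L w) = stdSymp n v w) (N : ℕ) (c : Fin n → ℤ → ℂ) :
    ∑ i, ∑ m ∈ Mo N, π * m * ‖affC z0 L c i m‖ ^ 2 = ∑ i, ∑ m ∈ Mo N, π * m * ‖c i m‖ ^ 2 := by
  have h1 : ∑ i, ∑ m ∈ Mo N, π * m * ‖affC z0 L c i m‖ ^ 2
      = ∑ i, ∑ m ∈ Mo N, π * m * ‖linC L c i m‖ ^ 2 := by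
    refine Finset.sum_congr rfl fun i _ => Finset.sum_congr rfl fun m _ => ?_
    by_cases h : m = 0 <;> simp [affC, h]
  have h2 : (fun i (m : ℤ) => ((π * m : ℝ) : ℂ) * Complex.I * linC L c i m)
      = linC L (fun i m => ((π * m : ℝ) : ℂ) * Complex.I * c i m) := by
    ext i m
    simp only [linC, Finset.mul_sum, map_mul, Complex.conj_ofReal, Complex.conj_I]
    refine Finset.sum_congr rfl fun j _ => ?_
    push_cast
    ring
  rw [h1, quad_eq_integral, quad_eq_integral, h2]
  simp only [ev_linC, hL]

/-- If a Hamiltonian is dominated, in affine symplectic coordinates, by a sum of one-variable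
Hamiltonians, then the actions compare in the opposite direction. -/
theorem act_affC_ge {n : ℕ} (D : Ham (Fin n)) (D1 : Ham Unit) (z0 : Fin n → ℂ)
    (L : (Fin n → ℂ) →L[ℝ] (Fin n → ℂ)) (hL : ∀ v w, stdSymp n (L v) (L w) = stdSymp n v w)
    (hle : ∀ y, D.H (z0 + L y) ≤ ∑ i, D1.H (fun _ => y i)) (N : ℕ)
    (X : Fin n → Unit → ℤ → ℂ) :
    ∑ i, D1.Act N (X i) ≤ D.Act N (affC z0 L fun i m => X i () m) := by
  have hD := D.contH
  have hD1 := D1.contH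
  unfold Ham.Act
  rw [quad_affC z0 L hL, Finset.sum_sub_distrib]
  simp only [Finset.univ_unique, Finset.sum_singleton]
  refine sub_le_sub (le_refl _) ?_
  rw [← intervalIntegral.integral_finsetSum fun i _ => by
    apply Continuous.intervalIntegrable; fun_prop]
  refine intervalIntegral.integral_mono_on zero_le_one ?_ ?_ fun t _ => ?_
  · apply Continuous.intervalIntegrable; fun_prop
  · apply Continuous.intervalIntegrable; fun_prop
  · rw [ev_affC]
    exact hle _

/-! ### Alexander's trick: deforming an embedding to its linearization -/

/-- The rescalings `y ↦ φ(0) + t⁻¹ (φ(t y) - φ(0))`, which interpolate between `φ` (at `t = 1`) and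
its first-order Taylor polynomial at `0` (at `t = 0`). -/
def resc {n : ℕ} (φ : (Fin n → ℂ) → (Fin n → ℂ)) (t : ℝ) (y : Fin n → ℂ) : Fin n → ℂ :=
  if t = 0 then φ 0 + fderiv ℝ φ 0 y else φ 0 + t⁻¹ • (φ (t • y) - φ 0)

theorem resc_one {n : ℕ} (φ : (Fin n → ℂ) → (Fin n → ℂ)) : resc φ 1 = φ := by
  ext1 y; simp [resc]

theorem resc_zero {n : ℕ} (φ : (Fin n → ℂ) → (Fin n → ℂ)) (y) :
    resc φ 0 y = φ 0 + fderiv ℝ φ 0 y := by simp [resc]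

theorem resc_apply_zero {n : ℕ} (φ : (Fin n → ℂ) → (Fin n → ℂ)) (t : ℝ) : resc φ t 0 = φ 0 := by
  by_cases h : t = 0 <;> simp [resc, h]

theorem smul_mem_ball' {n : ℕ} {r t : ℝ} (ht : 0 ≤ t) (ht1 : t ≤ 1) {y : Fin n → ℂ}
    (hy : y ∈ Metric.ball (0 : Fin n → ℂ) r) : t • y ∈ Metric.ball (0 : Fin n → ℂ) r := by
  rw [mem_ball_zero_iff] at *
  rw [norm_smul, Real.norm_of_nonneg ht]
  nlinarith [norm_nonneg y]

theorem smul_mem_closedBall' {n : ℕ} {r t : ℝ} (ht : 0 ≤ t) (ht1 : t ≤ 1) {y : Fin n → ℂ}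
    (hy : y ∈ Metric.closedBall (0 : Fin n → ℂ) r) : t • y ∈ Metric.closedBall (0 : Fin n → ℂ) r := by
  rw [mem_closedBall_zero_iff] at *
  rw [norm_smul, Real.norm_of_nonneg ht]
  nlinarith [norm_nonneg y]

namespace SympOn

variable {n : ℕ} {r : ℝ} {φ : (Fin n → ℂ) → (Fin n → ℂ)}

theorem hasFDerivAt_resc (h : SympOn (Metric.ball 0 r) φ) {t : ℝ} (ht : 0 ≤ t)
    (ht1 : t ≤ 1) {y} (hy : y ∈ Metric.ball (0 : Fin n → ℂ) r) :
    HasFDerivAt (resc φ t) (fderiv ℝ φ (t • y)) y := by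
  by_cases h0 : t = 0
  · subst h0
    rw [zero_smul]
    have : resc φ 0 = fun y => φ 0 + fderiv ℝ φ 0 y := funext fun y => resc_zero φ y
    rw [this]
    exact (fderiv ℝ φ 0).hasFDerivAt.const_add _
  · have : resc φ t = fun y => φ 0 + t⁻¹ • (φ (t • y) - φ 0) := by ext1 y; simp [resc, h0]
    rw [this]
    have h1 := h.hasFDerivAt Metric.isOpen_ball (smul_mem_ball' ht ht1 hy)
    have h2 : HasFDerivAt (fun y : Fin n → ℂ => t • y)
        (t • ContinuousLinearMap.id ℝ (Fin n → ℂ)) y := (hasFDerivAt_id y).const_smul t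
    have h3 := (((h1.comp y h2).sub_const (φ 0)).const_smul t⁻¹).const_add (φ 0)
    refine h3.congr_fderiv ?_
    ext v : 1
    simp [smul_smul, h0]

/-- The rescalings of a symplectic map remain symplectic embeddings, including the limit `t = 0`,
which is the first order Taylor polynomial of `φ` at the origin. -/
theorem resc (h : SympOn (Metric.ball 0 r) φ) (hr : 0 < r) {t : ℝ} (ht : 0 ≤ t) (ht1 : t ≤ 1) :
    SympOn (Metric.ball 0 r) (resc φ t) := by
  have h00 : (0 : Fin n → ℂ) ∈ Metric.ball (0 : Fin n → ℂ) r := Metric.mem_ball_self hr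
  refine ⟨?_, ?_, ?_⟩
  · by_cases h0 : t = 0
    · subst h0
      have : _root_.resc φ 0 = fun y => φ 0 + fderiv ℝ φ 0 y := funext fun y => resc_zero φ y
      rw [this]
      exact (contDiff_const.add (fderiv ℝ φ 0).contDiff).contDiffOn
    · have : _root_.resc φ t = fun y => φ 0 + t⁻¹ • (φ (t • y) - φ 0) := by
        ext1 y; simp [_root_.resc, h0]
      rw [this]
      have h2 : ContDiffOn ℝ (⊤ : ℕ∞) (fun y : Fin n → ℂ => φ (t • y)) (Metric.ball 0 r) :=
        h.smooth.comp (contDiff_const_smul t).contDiffOn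
          fun y hy => smul_mem_ball' ht ht1 hy
      exact contDiffOn_const.add ((h2.sub contDiffOn_const).const_smul _)
  · intro x hx y hy hxy
    by_cases h0 : t = 0
    · subst h0
      rw [resc_zero, resc_zero] at hxy
      have h1 : fderiv ℝ φ 0 (x - y) = 0 := by rw [map_sub, add_left_cancel hxy, sub_self]
      refine sub_eq_zero.1 (eq_zero_of_stdSymp _ fun w => ?_)
      rw [← h.symp 0 h00, h1]
      simp [stdSymp]
    · simp only [_root_.resc, h0, if_false] at hxy
      have h1 := smul_right_injective _ (inv_ne_zero h0) (add_left_cancel hxy)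
      exact smul_right_injective _ h0 (h.inj (smul_mem_ball' ht ht1 hx)
        (smul_mem_ball' ht ht1 hy) (sub_left_injective h1))
  · intro x hx v w
    rw [(h.hasFDerivAt_resc ht ht1 hx).fderiv]
    exact h.symp _ (smul_mem_ball' ht ht1 hx) v w

theorem continuousOn_fderiv (h : SympOn (Metric.ball 0 r) φ) {r1 : ℝ} (hr1 : r1 < r) :
    ContinuousOn (fderiv ℝ φ) (Metric.closedBall 0 r1) :=
  (h.smooth.continuousOn_fderiv_of_isOpen Metric.isOpen_ball (by simp)).mono
    (Metric.closedBall_subset_ball hr1)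

theorem exists_bound (h : SympOn (Metric.ball 0 r) φ) {r1 : ℝ} (hr1 : r1 < r) :
    ∃ Q, 0 ≤ Q ∧ ∀ t, 0 ≤ t → t ≤ 1 → ∀ y ∈ Metric.closedBall (0 : Fin n → ℂ) r1,
      ‖fderiv ℝ (_root_.resc φ t) y‖ ≤ Q := by
  obtain ⟨Q, hQ⟩ := (isCompact_closedBall (0 : Fin n → ℂ) r1).exists_bound_of_continuousOn
    (h.continuousOn_fderiv hr1)
  refine ⟨max Q 0, le_max_right _ _, fun t ht ht1 y hy => ?_⟩
  rw [(h.hasFDerivAt_resc ht ht1 (Metric.closedBall_subset_ball hr1 hy)).fderiv]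
  exact (hQ _ (smul_mem_closedBall' ht ht1 hy)).trans (le_max_left _ _)

theorem norm_resc_le (h : SympOn (Metric.ball 0 r) φ) {r1 : ℝ} (hr0 : 0 ≤ r1) (hr1 : r1 < r) {Q}
    (hQ0 : 0 ≤ Q)
    {t : ℝ} (ht : 0 ≤ t) (ht1 : t ≤ 1)
    (hQ : ∀ y ∈ Metric.closedBall (0 : Fin n → ℂ) r1, ‖fderiv ℝ (_root_.resc φ t) y‖ ≤ Q)
    {y} (hy : y ∈ Metric.closedBall (0 : Fin n → ℂ) r1) :
    ‖_root_.resc φ t y‖ ≤ ‖φ 0‖ + Q * r1 := by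
  have h1 := (convex_closedBall (0 : Fin n → ℂ) r1).norm_image_sub_le_of_norm_hasFDerivWithin_le
    (𝕜 := ℝ)
    (fun y hy => ((h.resc (hr0.trans_lt hr1) ht ht1).hasFDerivAt Metric.isOpen_ball
      (Metric.closedBall_subset_ball hr1 hy)).hasFDerivWithinAt) hQ
    (Metric.mem_closedBall_self hr0) hy
  rw [resc_apply_zero, sub_zero] at h1
  have h2 : ‖y‖ ≤ r1 := mem_closedBall_zero_iff.1 hy
  have h3 := norm_le_norm_add_norm_sub' (_root_.resc φ t y) (φ 0)
  nlinarith

/-- Continuity of the rescalings in `t`, uniformly on a smaller polydisk. -/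
theorem exists_resc_close (h : SympOn (Metric.ball 0 r) φ) {r1 : ℝ} (hr0 : 0 < r1) (hr1 : r1 < r)
    {e : ℝ} (he : 0 < e) :
    ∃ δ > 0, ∀ s t : ℝ, 0 ≤ s → s ≤ 1 → 0 ≤ t → t ≤ 1 → |s - t| < δ →
      ∀ y ∈ Metric.closedBall (0 : Fin n → ℂ) r1, ‖_root_.resc φ s y - _root_.resc φ t y‖ ≤ e := by
  have huc := (isCompact_closedBall (0 : Fin n → ℂ) r1).uniformContinuousOn_of_continuous
    (h.continuousOn_fderiv hr1)
  rw [Metric.uniformContinuousOn_iff] at huc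
  obtain ⟨δ, hδ, hd⟩ := huc (e / r1) (by positivity)
  refine ⟨δ / r1, by positivity, fun s t hs hs1 ht ht1 hst y hy => ?_⟩
  have hder : ∀ y ∈ Metric.closedBall (0 : Fin n → ℂ) r1,
      HasFDerivWithinAt (fun y => _root_.resc φ s y - _root_.resc φ t y)
        (fderiv ℝ φ (s • y) - fderiv ℝ φ (t • y)) (Metric.closedBall (0 : Fin n → ℂ) r1) y := by
    intro y hy
    have hy' := Metric.closedBall_subset_ball hr1 hy
    exact ((h.hasFDerivAt_resc hs hs1 hy').sub (h.hasFDerivAt_resc ht ht1 hy')).hasFDerivWithinAt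
  have h1 := (convex_closedBall (0 : Fin n → ℂ) r1).norm_image_sub_le_of_norm_hasFDerivWithin_le
    (𝕜 := ℝ) (C := e / r1) hder (fun y hy => by
      have hy1 : ‖y‖ ≤ r1 := mem_closedBall_zero_iff.1 hy
      have := hd (s • y) (smul_mem_closedBall' hs hs1 hy) (t • y) (smul_mem_closedBall' ht ht1 hy)
        (by
          rw [dist_eq_norm, ← sub_smul, norm_smul, Real.norm_eq_abs]
          rw [lt_div_iff₀ hr0] at hst
          nlinarith [abs_nonneg (s - t)])
      rw [dist_eq_norm] at this
      exact this.le) (Metric.mem_closedBall_self hr0.le) hy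
  simp only [resc_apply_zero, sub_self, sub_zero] at h1
  refine h1.trans ?_
  have hy1 : ‖y‖ ≤ r1 := mem_closedBall_zero_iff.1 hy
  calc e / r1 * ‖y‖ ≤ e / r1 * r1 := by gcongr
    _ = e := by field_simp

end SympOn

/-! ### Equivariant maps detecting superlevel sets of the action -/

/-- There is a continuous map on Fourier coefficients with values in `ℂ^κ`, equivariant of
weight `w` under time shifts, without zeros on the superlevel `v ≤ Act`. -/
def Detects {n : ℕ} (D : Ham (Fin n)) (N w : ℕ) (v : ℝ) (κ : Type) : Prop :=
  ∃ f : (Fin n → ℤ → ℂ) → (κ → ℂ), Continuous f ∧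
    (∀ (u : ℂ) c, ‖u‖ = 1 → f (rot u c) = u ^ w • f c) ∧ ∀ c, v ≤ D.Act N c → f c ≠ 0

theorem act_sub_le {n : ℕ} {D D' : Ham (Fin n)} {e : ℝ} (h : ∀ z, D'.H z ≤ D.H z + e) (N : ℕ)
    (c : Fin n → ℤ → ℂ) : D.Act N c - e ≤ D'.Act N c := by
  have hD := D.contH
  have hD' := D'.contH
  have h1 : ∫ t in (0:ℝ)..1, D'.H (ev N c t) ≤ ∫ t in (0:ℝ)..1, (D.H (ev N c t) + e) := by
    refine intervalIntegral.integral_mono_on zero_le_one ?_ ?_ fun t _ => h _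
    · apply Continuous.intervalIntegrable; fun_prop
    · apply Continuous.intervalIntegrable; fun_prop
  rw [intervalIntegral.integral_add (by apply Continuous.intervalIntegrable; fun_prop)
    (by apply Continuous.intervalIntegrable; fun_prop)] at h1
  simp only [intervalIntegral.integral_const, sub_zero, one_smul] at h1
  unfold Ham.Act
  linarith

/-- Detection passes from `D'` to a nearby `D` having a gap of the width of their distance: flow the
superlevel of `D` up across the gap first. -/
theorem Detects.transport {n : ℕ} {D D' : Ham (Fin n)} {N w : ℕ} {v v' β : ℝ} {κ : Type}
    (h : Detects D' N w v κ) (hβ : 0 < β)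
    (hgap : ∀ c, v ≤ D.Act N c → D.Act N c ≤ v' → β ^ 2 ≤ D.gsq N c)
    (hDD : ∀ z, D'.H z ≤ D.H z + (v' - v)) : Detects D N w v κ := by
  obtain ⟨f, hf, heq, hne⟩ := h
  obtain ⟨I, hI⟩ := D.exists_push N hβ hgap
  refine ⟨fun c => f ((D.eta N)^[I] c), hf.comp (D.continuous_eta_iterate N I), ?_, ?_⟩
  · intro u c hu
    have := D.eta_iterate_rot N u hu I c
    simp only [this]
    exact heq u _ hu
  · intro c hc
    refine hne _ ?_
    have h1 := hI c hc
    have h2 := act_sub_le hDD N ((D.eta N)^[I] c)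
    linarith

/-- Iteration of `Detects.transport` along a finite sequence of Hamiltonians having a common gap
`[v, v']` in their action spectra, with consecutive terms differing by at most `v' - v`. -/
theorem detects_chain {n : ℕ} (D : ℕ → Ham (Fin n)) {v v' : ℝ} (m : ℕ)
    (horb : ∀ j x, (D j).IsOrbit x → v ≤ (D j).AO x → (D j).AO x ≤ v' → False)
    (hDD : ∀ j < m, ∀ z, (D (j + 1)).H z ≤ (D j).H z + (v' - v)) :
    ∃ N₀ : ℕ, ∀ N ≥ N₀, ∀ (w : ℕ) (κ : Type), Detects (D m) N w v κ → Detects (D 0) N w v κ := by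
  induction m with
  | zero => exact ⟨0, fun N _ w κ h => h⟩
  | succ m ih =>
    obtain ⟨N₁, h1⟩ := ih fun j hj => hDD j (by omega)
    obtain ⟨N₂, β, hβ, h2⟩ := (D m).exists_gap (horb m)
    refine ⟨max N₁ N₂, fun N hN w κ h => h1 N ((le_max_left _ _).trans hN) w κ ?_⟩
    exact h.transport hβ (h2 N ((le_max_right _ _).trans hN)) (hDD m (by omega))

/-- The modes of the ellipsoid `E(a)` of action larger than `N'`. -/
abbrev BigMode {n : ℕ} (a : Fin n → ℝ) (N' : ℝ) (N : ℕ) : Type :=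
  {x : Fin n × Fin N // N' < (((x.2 : ℕ) : ℝ) + 1) * a x.1}

/-- If the Hamiltonian dominates `N' (q - 1)`, then a loop without Fourier modes `(i, m)` such that
`m aᵢ > N'` has action at most `N'`; so those modes, raised to powers of common weight `w`, detect
the superlevel. -/
theorem detects_of_ge {n : ℕ} (D : Ham (Fin n)) {a : Fin n → ℝ} (ha : ∀ i, 0 < a i) {N' : ℝ}
    (hN : 0 ≤ N') (hD : ∀ z, N' * (qf a z - 1) ≤ D.H z) {v : ℝ} (hv : N' < v) (N : ℕ) {w : ℕ}
    (hdvd : ∀ m, 1 ≤ m → m ≤ N → m ∣ w) : Detects D N w v (BigMode a N' N) := by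
  refine ⟨fun c x => c x.1.1 (((x.1.2 : ℕ) + 1 : ℕ) : ℤ) ^ (w / ((x.1.2 : ℕ) + 1)), ?_, ?_, ?_⟩
  · fun_prop
  · intro u c _
    ext x
    have hd := hdvd ((x.1.2 : ℕ) + 1) (by omega) (by omega)
    simp only [rot, Pi.smul_apply, smul_eq_mul, zpow_natCast, mul_pow, ← pow_mul]
    rw [Nat.mul_div_cancel' hd]
  · intro c hc h0
    have := act_le_of_modes D ha hN hD N c fun i m hm1 hmN hma => by
      obtain ⟨l, rfl⟩ : ∃ l : ℕ, m = ((l + 1 : ℕ) : ℤ) := ⟨(m - 1).toNat, by omega⟩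
      have hl : l < N := by omega
      have h1 := congrFun h0 ⟨(i, ⟨l, hl⟩), by
        simpa using hma⟩
      simp only [Pi.zero_apply] at h1
      exact eq_zero_of_pow_eq_zero h1
    linarith

/-- If `k` of the multiples `m aᵢ` are at most `N'`, then `BigMode` misses at least `k` of the `n N`
positive modes. -/
theorem card_bigMode_le {n : ℕ} {a : Fin n → ℝ} (ha : ∀ i, 0 < a i) {N' : ℝ} {k : ℕ}
    (hk : k ≤ {p : Fin n × ℕ | ((p.2 : ℝ) + 1) * a p.1 ≤ N'}.ncard) :
    ∃ N₀ : ℕ, ∀ N ≥ N₀, Fintype.card (BigMode a N' N) + k ≤ n * N := by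
  classical
  have hfin := finite_act_multiples a ha N'
  obtain ⟨B, hB⟩ := (hfin.image Prod.snd).bddAbove
  refine ⟨B + 1, fun N hN => ?_⟩
  have h1 : Fintype.card (BigMode a N' N)
      + Fintype.card {x : Fin n × Fin N // ¬ N' < (((x.2 : ℕ) : ℝ) + 1) * a x.1} = n * N := by
    rw [← Fintype.card_sum, Fintype.card_congr (Equiv.sumCompl fun x : Fin n × Fin N =>
      N' < (((x.2 : ℕ) : ℝ) + 1) * a x.1), Fintype.card_prod, Fintype.card_fin, Fintype.card_fin]
  have h2 : {p : Fin n × ℕ | ((p.2 : ℝ) + 1) * a p.1 ≤ N'}.ncard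
      ≤ Fintype.card {x : Fin n × Fin N // ¬ N' < (((x.2 : ℕ) : ℝ) + 1) * a x.1} := by
    rw [← Nat.card_eq_fintype_card, ← Nat.card_coe_set_eq]
    refine Nat.card_le_card_of_injective
      (fun p => ⟨(p.1.1, ⟨p.1.2, ?_⟩), not_lt.2 p.2⟩) ?_
    · have := hB (mem_image_of_mem Prod.snd p.2)
      omega
    · rintro ⟨⟨i, m⟩, hp⟩ ⟨⟨j, l⟩, hq⟩ h
      simp only [Subtype.mk.injEq, Prod.mk.injEq, Fin.mk.injEq] at h ⊢
      exact h
  omega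

/-- An equivariant family over an ellipsoid in `ℂ^(nN)` whose action is at least `v` at the zeros of
the `k - 1` equations `Λ` is incompatible with detection by at most `nN - k` components: by
`borsuk_ulam` the fewer than `nN` equations have a common zero. -/
theorem not_detects {n N k w : ℕ} {D : Ham (Fin n)} {v : ℝ} {κ : Type} [Fintype κ]
    (hk : 1 ≤ k) (hcard : Fintype.card κ + k ≤ n * N) (hw : 0 < w)
    (Y : (Fin n × Fin N → ℂ) → Fin n → ℤ → ℂ) (Λ : (Fin n × Fin N → ℂ) → Fin (k - 1) → ℂ)
    (hY : Continuous Y) (hΛ : Continuous Λ)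
    (hYe : ∀ (u : ℂ) P, ‖u‖ = 1 → Y (fun x => u ^ ((x.2 : ℕ) + 1) * P x) = rot u (Y P))
    (hΛe : ∀ (u : ℂ) P, ‖u‖ = 1 → Λ (fun x => u ^ ((x.2 : ℕ) + 1) * P x) = u ^ w • Λ P)
    (hge : ∀ P, ∑ x : Fin n × Fin N, π * ((x.2 : ℕ) + 1 : ℕ) * ‖P x‖ ^ 2 = 1 → Λ P = 0 →
      v ≤ D.Act N (Y P)) : ¬ Detects D N w v κ := by
  rintro ⟨f, hf, heq, hne⟩
  obtain ⟨P, hP, h0⟩ := borsuk_ulam (ι := Fin n × Fin N) (κ := κ ⊕ Fin (k - 1))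
    (by rw [Fintype.card_sum, Fintype.card_prod, Fintype.card_fin, Fintype.card_fin,
          Fintype.card_fin]; omega)
    (fun x => (x.2 : ℕ) + 1) (fun x => by omega) hw (fun x => π * ((x.2 : ℕ) + 1 : ℕ))
    (fun x => by have := Real.pi_pos; positivity)
    (fun P => Sum.elim (f (Y P)) (Λ P))
    (by
      refine continuous_pi fun s => ?_
      rcases s with s | s
      · exact (continuous_apply s).comp (hf.comp hY)
      · exact (continuous_apply s).comp hΛ)
    (fun u P hu => by
      simp only [hYe u P hu, hΛe u P hu, heq u _ hu]
      ext s
      rcases s with s | s <;> rfl)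
  have h1 : f (Y P) = 0 := funext fun s => congrFun h0 (Sum.inl s)
  have h2 : Λ P = 0 := funext fun s => congrFun h0 (Sum.inr s)
  exact hne _ (hge P hP h2) h1

/-! ### Choice of the auxiliary parameters -/

theorem exists_avoid {S : Set ℝ} (hS : S.Countable) (x : ℝ) : ∃ T, x < T ∧ T ∉ S := by
  obtain ⟨T, hT, h1, _⟩ := (hS.dense_compl ℝ).exists_between (lt_add_one x)
  exact ⟨T, h1, hT⟩

theorem exists_nonresonant {n : ℕ} {a : Fin n → ℝ} (ha : ∀ i, 0 < a i) (x : ℝ) :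
    ∃ T, x < T ∧ ∀ i (m : ℤ), T / a i ≠ m := by
  obtain ⟨T, hT, h⟩ := exists_avoid
    (countable_range fun q : Fin n × ℤ => (q.2 : ℝ) * a q.1) x
  refine ⟨T, hT, fun i m hm => h ⟨(i, m), ?_⟩⟩
  rw [div_eq_iff (ha i).ne'] at hm
  exact hm.symm

/-- The distance from the nonresonant slope `T` down to the multiples of the `aᵢ` below it is bounded
away from zero. -/
theorem exists_margin {n : ℕ} (hn : 0 < n) {a : Fin n → ℝ} (ha : ∀ i, 0 < a i) {T : ℝ}
    (hT : ∀ i (m : ℤ), T / a i ≠ m) :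
    ∃ δ > 0, ∀ i (l : ℤ), 0 < T - l * a i → δ ≤ T - l * a i := by
  have : Nonempty (Fin n) := ⟨⟨0, hn⟩⟩
  obtain ⟨i₀, h0⟩ := Finite.exists_min fun i => a i * Int.fract (T / a i)
  refine ⟨a i₀ * Int.fract (T / a i₀), mul_pos (ha i₀) ?_, fun i l hl => (h0 i).trans ?_⟩
  · refine lt_of_le_of_ne (Int.fract_nonneg _) fun h => ?_
    obtain ⟨m, hm⟩ := Int.fract_eq_zero_iff.1 h.symm
    exact hT i₀ m hm.symm
  · have h1 : (l : ℝ) < T / a i := by rw [lt_div_iff₀ (ha i)]; linarith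
    have h2 : (l : ℝ) ≤ ⌊T / a i⌋ := by exact_mod_cast Int.le_floor.2 h1.le
    have h3 : a i * Int.fract (T / a i) = T - ⌊T / a i⌋ * a i := by
      rw [Int.fract, mul_sub, mul_div_cancel₀ _ (ha i).ne']; ring
    rw [h3]
    nlinarith [ha i]

/-- For large `p` the `ℓ^p` norm approximates the supremum norm, so that the level sets of
`∑ (π|yᵢ|²)ᵖ` approximate polydisks. -/
theorem exists_exponent {n : ℕ} (hn : 0 < n) {s s1 : ℝ} (hs : 0 < s) (h : s < s1) :
    ∃ p : ℕ, 2 ≤ p ∧ n * s ^ p ≤ s1 ^ p / 2 := by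
  have hn' : (0:ℝ) < n := by exact_mod_cast hn
  have hs1 : 0 < s1 := hs.trans h
  have hlt : s / s1 < 1 := (div_lt_one hs1).2 h
  obtain ⟨p, hp⟩ := exists_pow_lt_of_lt_one (by positivity : (0:ℝ) < 1 / (2 * n)) hlt
  refine ⟨p + 2, by omega, ?_⟩
  have h1 : (s / s1) ^ (p + 2) ≤ 1 / (2 * n) :=
    (pow_le_pow_of_le_one (by positivity) hlt.le (by omega)).trans hp.le
  rw [div_pow, div_le_div_iff₀ (by positivity) (by positivity)] at h1
  linarith

theorem KT_eq_zero_of_notMem {n : ℕ} {M r1 : ℝ} (hr : 0 < r1) {p : ℕ} {y : Fin n → ℂ}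
    (hy : y ∉ Metric.closedBall (0 : Fin n → ℂ) r1) : KT M ((π * r1 ^ 2) ^ p) p y = 0 := by
  have hpi := Real.pi_pos
  rw [mem_closedBall_zero_iff, pi_norm_le_iff_of_nonneg hr.le] at hy
  push Not at hy
  obtain ⟨i, hi⟩ := hy
  refine KT_of_ge (by positivity) M ?_
  have h1 : (π * r1 ^ 2) ^ p ≤ (π * ‖y i‖ ^ 2) ^ p := by gcongr
  exact h1.trans (Finset.single_le_sum (f := fun i => (π * ‖y i‖ ^ 2) ^ p)
    (fun i _ => by positivity) (Finset.mem_univ i))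

theorem KT_eq_neg_of_le {n : ℕ} {M r r1 : ℝ} (hr : 0 < r1) {p : ℕ}
    (hp : n * (π * r ^ 2) ^ p ≤ (π * r1 ^ 2) ^ p / 2) {y : Fin n → ℂ} (hy : ‖y‖ ≤ r) :
    KT M ((π * r1 ^ 2) ^ p) p y = -M := by
  have hpi := Real.pi_pos
  refine KT_of_le (by positivity) M (le_trans ?_ hp)
  calc sigP p y ≤ ∑ _i : Fin n, (π * r ^ 2) ^ p :=
        Finset.sum_le_sum fun i _ => by
          have := (norm_le_pi_norm y i).trans hy
          gcongr
    _ = n * (π * r ^ 2) ^ p := by simp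

theorem qf_le_norm {n : ℕ} {a : Fin n → ℝ} (ha : ∀ i, 0 < a i) {z : Fin n → ℂ} {W : ℝ}
    (hz : ‖z‖ ≤ W) : qf a z ≤ (∑ i, π / a i) * (n * W ^ 2) := by
  refine (qf_le_sum ha z).trans (mul_le_mul_of_nonneg_left ?_
    (Finset.sum_nonneg fun i _ => (div_pos Real.pi_pos (ha i)).le))
  calc ∑ i, ‖z i‖ ^ 2 ≤ ∑ _i : Fin n, W ^ 2 := Finset.sum_le_sum fun i _ => by
        have := (norm_le_pi_norm z i).trans hz
        gcongr
    _ = n * W ^ 2 := by simp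

theorem Frad_le {n : ℕ} {a : Fin n → ℝ} (ha : ∀ i, 0 < a i) {T ρ : ℝ} (hT : 0 ≤ T) (hρ : 0 ≤ ρ)
    (z : Fin n → ℂ) : Frad a T ρ z ≤ T * qf a z := by
  have h1 := Real.sqrt_nonneg (qf a z)
  have h2 : max (√(qf a z) - ρ) 0 ≤ √(qf a z) := max_le (by linarith) h1
  calc Frad a T ρ z ≤ T * √(qf a z) ^ 2 :=
        mul_le_mul_of_nonneg_left (pow_le_pow_left₀ (le_max_right _ _) h2 2) hT
    _ = T * qf a z := by rw [Real.sq_sqrt (qf_nonneg ha z)]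

theorem Frad_of_le {n : ℕ} {a : Fin n → ℝ} {T ρ : ℝ} {z : Fin n → ℂ} (h : √(qf a z) ≤ ρ) :
    Frad a T ρ z = 0 := by
  rw [Frad, max_eq_right (by linarith)]; ring

theorem pushK_nonpos {n : ℕ} {U : Set (Fin n → ℂ)} {φ : (Fin n → ℂ) → (Fin n → ℂ)}
    {K : (Fin n → ℂ) → ℝ} (h : SympOn U φ) (hK : ∀ y, K y ≤ 0) (x) : pushK U φ K x ≤ 0 := by
  by_cases hx : x ∈ φ '' U
  · obtain ⟨y, hy, rfl⟩ := hx
    rw [h.pushK_apply hy]; exact hK y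
  · rw [pushK, if_neg hx]

theorem exists_fderiv_bound {n : ℕ} {K : (Fin n → ℂ) → ℝ} (hs : ContDiff ℝ (⊤ : ℕ∞) K)
    {K1 : Set (Fin n → ℂ)} (h1 : IsCompact K1) (hK : ∀ y, y ∉ K1 → K y = 0) :
    ∃ B, 0 ≤ B ∧ ∀ y, ‖fderiv ℝ K y‖ ≤ B := by
  have hc : HasCompactSupport K := HasCompactSupport.intro h1 hK
  obtain ⟨B, hB⟩ := (hc.fderiv (𝕜 := ℝ)).exists_bound_of_continuous (hs.continuous_fderiv (by simp))
  exact ⟨B, (norm_nonneg _).trans (hB 0), hB⟩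

/-! ### The obstruction to embedding the polydisk into an ellipsoid -/

set_option maxHeartbeats 1000000 in
/-- The unit polydisk is the ball of radius `r` in the supremum norm, `π r² = 1`. It does not embed
symplectically into the ellipsoid `q ≤ 1` if at least `k` of the multiples `m aᵢ` are at most
`N' < k`. -/
theorem no_embedding {n k : ℕ} (hn : 0 < n) (hk : 1 ≤ k) {r : ℝ} (hr : 0 < r) (hr1 : π * r ^ 2 = 1)
    {a : Fin n → ℝ} (ha : ∀ i, 0 < a i) {φ : (Fin n → ℂ) → (Fin n → ℂ)}
    (h : SympOn (Metric.ball 0 r) φ) (hφ : ∀ y ∈ Metric.ball (0 : Fin n → ℂ) r, qf a (φ y) ≤ 1)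
    {N' : ℝ} (hN0 : 0 ≤ N') (hNk : N' < k)
    (hcount : k ≤ {p : Fin n × ℕ | ((p.2 : ℝ) + 1) * a p.1 ≤ N'}.ncard) : False := by
  have : Nonempty (Fin n) := ⟨⟨0, hn⟩⟩
  have hpi := Real.pi_pos
  have hk0 : (0:ℝ) < k := by exact_mod_cast hk
  have hS0 : 0 ≤ ∑ i, π / a i := Finset.sum_nonneg fun i _ => (div_pos hpi (ha i)).le
  -- radii `r0 < r0' < r1 < r` with `k π r0² > N'`
  obtain ⟨r0, hr0, hr0r, hr0N⟩ : ∃ r0, 0 < r0 ∧ r0 < r ∧ N' < k * (π * r0 ^ 2) := by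
    obtain ⟨s, hs1, hs2⟩ := exists_between ((div_lt_one hk0).2 hNk)
    have hs0 : 0 < s := lt_of_le_of_lt (by positivity) hs1
    refine ⟨√s * r, by positivity, ?_, ?_⟩
    · have : √s < 1 := by rw [Real.sqrt_lt' one_pos]; linarith
      nlinarith
    · rw [mul_pow, Real.sq_sqrt hs0.le, mul_left_comm π, hr1, mul_one]
      rwa [div_lt_iff₀' hk0] at hs1
  obtain ⟨r0', h0', h0r⟩ := exists_between hr0r
  obtain ⟨r1, h01, h1r⟩ := exists_between h0r
  have hr0'p : 0 < r0' := hr0.trans h0'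
  have hr1p : 0 < r1 := hr0'p.trans h01
  set U := Metric.ball (0 : Fin n → ℂ) r with hUdef
  set K1 := Metric.closedBall (0 : Fin n → ℂ) r1 with hK1def
  have hUo : IsOpen U := Metric.isOpen_ball
  have hUc : Convex ℝ U := convex_ball _ _
  have hK1c : IsCompact K1 := isCompact_closedBall _ _
  have hK1U : K1 ⊆ U := Metric.closedBall_subset_ball h1r
  obtain ⟨p, hp2, hp⟩ := exists_exponent hn (s := π * r0' ^ 2) (s1 := π * r1 ^ 2) (by positivity)
    (by gcongr)
  set b := (π * r1 ^ 2) ^ p with hb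
  have hb0 : 0 < b := by positivity
  -- slope, cut-off radius and height
  obtain ⟨T, hTN, hTa⟩ := exists_nonresonant ha N'
  have hT0 : 0 < T := hN0.trans_lt hTN
  obtain ⟨δ, hδ, hδT⟩ := exists_margin hn ha hTa
  obtain ⟨Q, hQ0, hQ⟩ := h.exists_bound h1r
  obtain ⟨ρ, hρ, hρK⟩ : ∃ ρ, 0 < ρ ∧ ∀ t, 0 ≤ t → t ≤ 1 → ∀ y ∈ K1, √(qf a (resc φ t y)) ≤ ρ := by
    refine ⟨√((∑ i, π / a i) * (n * (‖φ 0‖ + Q * r1) ^ 2)) + 1, by positivity,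
      fun t ht ht1 y hy => ?_⟩
    have := Real.sqrt_le_sqrt (qf_le_norm ha (h.norm_resc_le hr1p.le h1r hQ0 ht ht1 (hQ t ht ht1) hy))
    linarith
  obtain ⟨M, hM1, hM2⟩ : ∃ M, T * (T * ρ / δ) ^ 2 ≤ M ∧ T * N' * ρ ^ 2 / (T - N') ≤ M :=
    ⟨_, le_max_left _ _, le_max_right _ _⟩
  have hM0 : 0 ≤ M := le_trans (by positivity) hM1
  -- the bump `K` is `-M` on a polydisk larger than the one of radius `r0`, and supported in `K1`
  set K : (Fin n → ℂ) → ℝ := KT M b p with hKdef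
  have hKs : ContDiff ℝ (⊤ : ℕ∞) K := contDiff_KT M b p
  have hK : ∀ y, y ∉ K1 → K y = 0 := fun y hy => KT_eq_zero_of_notMem hr1p hy
  -- the gap in the action spectrum
  obtain ⟨Z, hZc, hZ0, hZ⟩ := spectrum_null (n := n) hp2 (M := M) (b := b)
    ((contDiff_chi b).of_le (by simp))
  set e := (k * (π * r0 ^ 2) - N') / 2 with he
  have he0 : 0 < e := by rw [he]; linarith
  obtain ⟨v, v', hNv, hvv, hve, hgap⟩ := exists_gap_of_null hZc hZ0
    (show N' < k * (π * r0 ^ 2) - e by rw [he]; linarith)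
  -- the Hamiltonians along the deformation
  have hex : ∀ t, 0 ≤ t → t ≤ 1 → ∃ D : Ham (Fin n),
      (∀ z, D.H z = M + pushK U (resc φ t) K z + Frad a T ρ z) ∧
      ∀ x, D.IsOrbit x → v ≤ D.AO x → D.AO x ≤ v' → False := by
    intro t ht ht1
    have hst := h.resc hr ht ht1
    obtain ⟨D, hDH, hDg⟩ := exists_embHam (hst.contDiff_pushK hUo hK1c hK1U hKs hK)
      (hst.hasCompactSupport_pushK hK1c hK1U hK) ha M hT0.le hTa hρ
    refine ⟨D, hDH, fun x hx hxv hxv' => ?_⟩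
    by_cases hin : ∀ t, √(qf a (x t)) ≤ ρ
    · rcases orbit_inner hst hUo hUc hK1c hK1U hp2 hM0 hb0 hK hρ hDH hDg hZ hx hin with h1 | h1
      · linarith
      · exact hgap _ h1 ⟨hxv, hxv'⟩
    · push Not at hin
      obtain ⟨t0, ht0⟩ := hin
      have := orbit_outer ha hT0 hρ hδ hδT hM1 hDH hDg (fun z hz => by
        have hz' : z ∉ resc φ t '' K1 := by
          rintro ⟨y, hy, rfl⟩
          linarith [hρK t ht ht1 y hy]
        exact ⟨hst.pushK_of_notMem hK hz', hst.fderiv_pushK_of_notMem hK1c hK1U hK hz'⟩) hx ht0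
      linarith
  obtain ⟨B, hB0, hB⟩ := exists_fderiv_bound hKs hK1c hK
  have hBQ : 0 ≤ B * (n * Q) := by positivity
  obtain ⟨d, hd0, hd⟩ := h.exists_resc_close hr1p h1r
    (e := (v' - v) / (B * (n * Q) + 1)) (by have := sub_pos.2 hvv; positivity)
  obtain ⟨m, hm⟩ := exists_nat_gt (1 / d)
  have hm0 : (0:ℝ) < m := lt_trans (by positivity) hm
  have hmd : 1 / (m:ℝ) < d := by rwa [one_div_lt hm0 hd0]
  set τ : ℕ → ℝ := fun j => min (j / m) 1 with hτ
  have hτ0 : ∀ j, 0 ≤ τ j := fun j => le_min (by positivity) zero_le_one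
  have hτ1 : ∀ j, τ j ≤ 1 := fun j => min_le_right _ _
  have hτz : τ 0 = 0 := by simp [hτ]
  have hτm : τ m = 1 := by simp [hτ, div_self hm0.ne']
  have hτd : ∀ j < m, |τ (j + 1) - τ j| < d := by
    intro j hj
    have hj' : (j:ℝ) + 1 ≤ m := by exact_mod_cast hj
    have e1 : τ (j + 1) = ((j:ℝ) + 1) / m := by
      simp only [hτ]; push_cast
      exact min_eq_left ((div_le_one hm0).2 hj')
    have e2 : τ j = (j:ℝ) / m := min_eq_left ((div_le_one hm0).2 (by linarith))
    rw [e1, e2, ← sub_div, add_sub_cancel_left, abs_of_pos (by positivity)]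
    exact hmd
  choose D hDH hDorb using fun j => hex (τ j) (hτ0 j) (hτ1 j)
  obtain ⟨N1, hN1⟩ := detects_chain D m hDorb fun j hj z => by
    have h1 := (h.resc hr (hτ0 (j + 1)) (hτ1 (j + 1))).abs_pushK_sub_le
      (h.resc hr (hτ0 j) (hτ1 j)) hUo hK1c hK1U hKs hK hB0 hQ0 hB
      (hQ _ (hτ0 (j + 1)) (hτ1 (j + 1))) (hQ _ (hτ0 j) (hτ1 j))
      (by have := sub_pos.2 hvv; positivity : 0 ≤ (v' - v) / (B * (n * Q) + 1))
      (hd _ _ (hτ0 (j + 1)) (hτ1 (j + 1)) (hτ0 j) (hτ1 j) (hτd j hj)) z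
    have h2 : B * (n * Q) * ((v' - v) / (B * (n * Q) + 1)) ≤ v' - v := by
      rw [← mul_div_assoc, div_le_iff₀ (by positivity)]
      nlinarith
    have h3 := (abs_le.1 (h1.trans h2)).2
    rw [hDH, hDH]
    linarith
  -- at `t = 1` the image of `φ` lies in the ellipsoid `q ≤ 1`, which gives a lower bound on `H`
  have hge : ∀ z, N' * (qf a z - 1) ≤ (D m).H z := by
    intro z
    rw [hDH, hτm, resc_one]
    exact embHam_ge h ha hN0 hTN hρ hM2 hφ z
  -- at `t = 0` the map is affine, and `H` is bounded above by a split Hamiltonian in the affine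
  -- symplectic coordinates
  set L := fderiv ℝ φ 0 with hL
  have hLs : ∀ v w, stdSymp n (L v) (L w) = stdSymp n v w :=
    h.symp 0 (Metric.mem_ball_self hr)
  have h0s := h.resc hr le_rfl zero_le_one
  have hH0 : ∀ y, (D 0).H (φ 0 + L y) = M + pushK U (resc φ 0) K (resc φ 0 y)
      + Frad a T ρ (resc φ 0 y) := by
    intro y
    rw [hDH, hτz, resc_zero]
  obtain ⟨R0, hR0⟩ := exists_dominating (F := fun y => (D 0).H (φ 0 + L y))
    (A := M + T * ((∑ i, π / a i) * (n * (2 * ‖φ 0‖ ^ 2))))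
    (B := T * ((∑ i, π / a i) * (n * (2 * ‖L‖ ^ 2))))
    (by positivity)
    (fun y => by
      have hp0 := pushK_nonpos h0s (fun y => KT_nonpos hM0 b p y) (resc φ 0 y)
      have hF := Frad_le ha hT0.le hρ.le (resc φ 0 y)
      have hn1 : ‖resc φ 0 y‖ ≤ ‖φ 0‖ + ‖L‖ * ‖y‖ := by
        rw [resc_zero]
        exact (norm_add_le _ _).trans (add_le_add_right (L.le_opNorm y) _)
      have hq := qf_le_norm ha hn1
      have hsq : (‖φ 0‖ + ‖L‖ * ‖y‖) ^ 2 ≤ 2 * ‖φ 0‖ ^ 2 + 2 * ‖L‖ ^ 2 * ‖y‖ ^ 2 := by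
        have := add_sq_le (a := ‖φ 0‖) (b := ‖L‖ * ‖y‖)
        rw [mul_pow] at this
        refine this.trans (le_of_eq ?_)
        ring
      have h1 : T * qf a (resc φ 0 y) ≤ T * ((∑ i, π / a i) *
          (n * (2 * ‖φ 0‖ ^ 2 + 2 * ‖L‖ ^ 2 * ‖y‖ ^ 2))) := by
        refine mul_le_mul_of_nonneg_left (hq.trans ?_) hT0.le
        exact mul_le_mul_of_nonneg_left (mul_le_mul_of_nonneg_left hsq (Nat.cast_nonneg _)) hS0
      rw [hH0]
      linarith)
    hr0 h0'
    (fun y hy => by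
      have hyK : y ∈ K1 := mem_closedBall_zero_iff.2 (by linarith)
      rw [hH0, h0s.pushK_apply (hK1U hyK), Frad_of_le (hρK 0 le_rfl zero_le_one y hyK), hKdef, hb,
        KT_eq_neg_of_le hr1p hp hy]
      simp)
  obtain ⟨R, hRgt, hRn⟩ := exists_avoid (countable_range fun m : ℤ => (m : ℝ)) (max R0 k)
  have hRk : (k:ℝ) < R := (le_max_right _ _).trans_lt hRgt
  have hR0' : 0 ≤ R := hk0.le.trans hRk.le
  have hRn' : ∀ m : ℤ, R ≠ m := fun m hm => hRn ⟨m, hm.symm⟩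
  have hρ0 : 0 < √π * r0 := by positivity
  obtain ⟨N2, hN2⟩ := exists_lusternik (ι := Fin n) hR0' hRn' hρ0 hk hRk he0
  obtain ⟨N3, hN3⟩ := card_bigMode_le ha hcount
  set N := max N1 (max N2 N3) with hNdef
  have hdvd : ∀ m, 1 ≤ m → m ≤ N → m ∣ N.factorial := fun m h1 h2 => Nat.dvd_factorial h1 h2
  obtain ⟨X, Λ, hXc, hΛc, hXe, hΛe, hXge⟩ := hN2 N ((le_max_left _ _).trans (le_max_right _ _))
    N.factorial hdvd N.factorial_pos
  have hdet := hN1 N (le_max_left _ _) N.factorial (BigMode a N' N)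
    (detects_of_ge (D m) ha hN0 hge hNv N hdvd)
  refine not_detects hk (hN3 N ((le_max_right _ _).trans (le_max_right _ _))) N.factorial_pos
    (fun P => affC (φ 0) L fun i m => X P i () m) Λ ?_ hΛc ?_ hΛe ?_ hdet
  · exact (continuous_affC _ _).comp (by fun_prop)
  · intro u P hu
    have := hXe u P hu
    simp only [this]
    exact affC_rot (φ 0) L hu fun i m => X P i () m
  · intro P hP hΛP
    have h1 := hXge P hP hΛP
    have h2 := act_affC_ge (D 0) (hHam R (√π * r0) hR0' hRn' hρ0) (φ 0) L hLs
      (fun y => hR0 R ((le_max_left _ _).trans hRgt.le) y) N (X P)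
    rw [mul_pow, Real.sq_sqrt hpi.le] at h1
    linarith

/-! ### The capacities of the polydisk -/

/-- Every ellipsoid containing a symplectic image of the unit polydisk has `Nk k a ≥ k`; the hypothesis
of `no_embedding` holds for some `N'` between `Nk k a` and `k` otherwise. -/
theorem le_Nk_of_sympEmb {n k : ℕ} (hn : 0 < n) (hk : 1 ≤ k) {a : Fin n → ℝ} (ha : ∀ i, 0 < a i)
    (h : SympEmb n (polydisk fun _ => (1:ℝ)) (ellipsoid a)) : (k:ℝ) ≤ Nk k a := by
  have hpi := Real.pi_pos
  obtain ⟨φ, hinj, hsub, hsm, hsymp⟩ := h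
  by_contra! hlt
  have hne : {t : ℝ | k ≤ {p : Fin n × ℕ | ((p.2 : ℝ) + 1) * a p.1 ≤ t}.ncard}.Nonempty := by
    have ha0 := ha ⟨0, hn⟩
    refine ⟨k * a ⟨0, hn⟩, ?_⟩
    rw [mem_ofPred_eq, ncard_multiples_eq a ha _ (by positivity)]
    have h1 : ⌊(k:ℝ) * a ⟨0, hn⟩ / a ⟨0, hn⟩⌋₊ = k := by
      rw [mul_div_cancel_right₀ _ ha0.ne', Nat.floor_natCast]
    conv_lhs => rw [← h1]
    exact Finset.single_le_sum (f := fun i => ⌊(k:ℝ) * a ⟨0, hn⟩ / a i⌋₊) (fun i _ => Nat.zero_le _)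
      (Finset.mem_univ _)
  obtain ⟨t, ht, htk⟩ := exists_lt_of_csInf_lt hne hlt
  rw [mem_ofPred_eq] at ht
  have ht0 : 0 ≤ t := by
    by_contra! h0
    have : {p : Fin n × ℕ | ((p.2 : ℝ) + 1) * a p.1 ≤ t} = ∅ := by
      ext q
      have := ha q.1
      have : 0 < ((q.2 : ℝ) + 1) * a q.1 := by positivity
      simp only [mem_ofPred_eq, mem_empty_iff_false, iff_false, not_le]
      linarith
    rw [this, ncard_empty] at ht
    omega
  set r := √(1 / π) with hr
  have hr0 : 0 < r := by positivity
  have hr1 : π * r ^ 2 = 1 := by rw [hr, Real.sq_sqrt (by positivity)]; field_simp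
  have hball : Metric.ball (0 : Fin n → ℂ) r ⊆ polydisk fun _ => (1:ℝ) := by
    intro y hy i
    rw [mem_ball_zero_iff] at hy
    have := (norm_le_pi_norm y i).trans hy.le
    calc π * ‖y i‖ ^ 2 ≤ π * r ^ 2 := by gcongr
      _ = 1 := hr1
  have hInt := interior_maximal hball Metric.isOpen_ball
  exact no_embedding hn hk hr0 hr1 ha
    ⟨hsm.mono hInt, hinj.mono hball, fun x hx => hsymp x (hInt hx)⟩
    (fun y hy => hsub (mem_image_of_mem φ (hball hy))) ht0 htk ht

/-- An inclusion showing that the infimum defining `ckmax` is not that of the empty set. -/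
theorem sympEmb_polydisk_ellipsoid {n : ℕ} (hn : 0 < n) :
    SympEmb n (polydisk fun _ => (1:ℝ)) (ellipsoid fun _ => (n:ℝ)) := by
  have hn' : (0:ℝ) < n := by exact_mod_cast hn
  refine ⟨id, injOn_id _, ?_, contDiff_id.contDiffOn, fun x _ v w => ?_⟩
  · rw [image_id]
    intro z hz
    rw [ellipsoid, mem_ofPred_eq]
    calc ∑ i, π * ‖z i‖ ^ 2 / n ≤ ∑ _i : Fin n, 1 / (n:ℝ) :=
          Finset.sum_le_sum fun i _ => by have := hz i; gcongr
      _ = 1 := by simp [hn'.ne']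
  · rw [fderiv_id]; rfl

theorem le_ckmax {n k : ℕ} (hn : 0 < n) (hk : 1 ≤ k) :
    (k:ℝ) ≤ ckmax n k (polydisk fun _ => (1:ℝ)) := by
  refine le_csInf ⟨_, _, fun _ => by exact_mod_cast hn, sympEmb_polydisk_ellipsoid hn, rfl⟩ ?_
  rintro c ⟨a, ha, hemb, rfl⟩
  exact le_Nk_of_sympEmb hn hk ha hemb

/-- For `n ≥ 2` and `k ≥ max(n,3)`, the unit polydisk `P(1,…,1) ⊂ ℂⁿ`
satisfies `c_kᵐⁱⁿ(P) < c_kᵐᵃˣ(P)`; in particular `c_kᵐⁱⁿ(P) < k ≤ c_kᵐᵃˣ(P)`. -/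
theorem stmt5 (n k : ℕ) (hn : 2 ≤ n) (hk : max n 3 ≤ k) :
    ckmin n k (polydisk fun _ => (1 : ℝ)) < ckmax n k (polydisk fun _ => (1 : ℝ)) ∧
    ckmin n k (polydisk fun _ => (1 : ℝ)) < (k : ℝ) ∧
    (k : ℝ) ≤ ckmax n k (polydisk fun _ => (1 : ℝ)) := by
  have hk3 : 3 ≤ k := (le_max_right _ _).trans hk
  have h1 := ckmin_lt hn hk
  have h2 := le_ckmax (n := n) (k := k) (by omega) (by omega)
  exact ⟨h1.trans_le h2, h1, h2⟩

end
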